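/- arXiv:1701.06145 — 5 statements merged into one kernel-verified Lean document; each statement's English description precedes it below -/
import Mathlib

section
/- Let T > 0, let a : ℝ → ℝ be T-periodic and locally integrable satisfying condition (a*) with m positive humps, and for μ > 0 set a_μ(t) = a⁺(t) − μ a⁻(t). Let g ∈ C¹([0,∞)) satisfy (g*) and (gs). Then there exists μ* > 0 such that, for each μ > μ* and each integer k ≥ 2, the equation u'' + a_μ(t) g(u) = 0 has at least S_{2^m}(k) positive subharmonic solutions of order k, no two of which belong to the same periodicity class, where S_n(k) = (1/k) Σ_{l | k} μ_Möbius(l) n^{k/l} (the sum being over positive divisors l of k and μ_Möbius denoting the Möbius function). -/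
open MeasureTheory Set Filter

/-- `u` is a solution of `u'' + F(t,u) = 0`: `u` is of class `C¹` and its derivative `u'`
is locally absolutely continuous (it is the integral of a locally integrable function),
with `u'' + F(t, u(t)) = 0` for a.e. `t`. -/
def IsSol (F : ℝ → ℝ → ℝ) (u : ℝ → ℝ) : Prop :=
  ∃ u' : ℝ → ℝ,
    (∀ t, HasDerivAt u (u' t) t) ∧
    MeasureTheory.LocallyIntegrable (fun s => F s (u s)) MeasureTheory.volume ∧
    ∀ t, u' t = u' 0 - ∫ s in (0:ℝ)..t, F s (u s)

/-- `q ≻ 0` on `I` : `q ≥ 0` a.e. on `I` and `q ≢ 0` on `I`. -/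
def PosOn (q : ℝ → ℝ) (I : Set ℝ) : Prop :=
  (∀ᵐ t ∂(MeasureTheory.volume.restrict I), 0 ≤ q t) ∧
  ¬ (∀ᵐ t ∂(MeasureTheory.volume.restrict I), q t = 0)

/-- Condition `(q*)`: `[0,T]` splits into `m` closed intervals where `q ≻ 0`
separated by `m` closed intervals where `q ≺ 0`. -/
def SignCond (q : ℝ → ℝ) (T : ℝ) (m : ℕ) : Prop :=
  ∃ σ : ℕ → ℝ, σ 0 = 0 ∧ σ (2*m) = T ∧ (∀ i < 2*m, σ i < σ (i+1)) ∧
    (∀ i < m, PosOn q (Set.Icc (σ (2*i)) (σ (2*i+1)))) ∧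
    (∀ i < m, PosOn (fun t => - q t) (Set.Icc (σ (2*i+1)) (σ (2*i+2))))

/-- A subharmonic solution of order `k`: `kT`-periodic but not `ℓT`-periodic
for `ℓ = 1, …, k-1`. -/
def IsSubharmonic (u : ℝ → ℝ) (T : ℝ) (k : ℕ) : Prop :=
  Function.Periodic u (k * T) ∧ ∀ ℓ : ℕ, 1 ≤ ℓ → ℓ < k → ¬ Function.Periodic u (ℓ * T)

/-- `u` and `v` belong to the same periodicity class. -/
def SameClass (u v : ℝ → ℝ) (T : ℝ) : Prop :=
  ∃ ℓ : ℤ, ∀ t, v t = u (t + ℓ * T)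

/-- Witt's formula: the number `S_n(k)` of aperiodic necklaces of length `k` on `n` colors,
`S_n(k) = (1/k) ∑_{l ∣ k} μ(l) n^{k/l}` (exact integer division). -/
def necklaceCount (n k : ℕ) : ℤ :=
  (∑ l ∈ k.divisors, (ArithmeticFunction.moebius l) * (n : ℤ) ^ (k / l)) / (k : ℤ)


/-- vertex `k` of the Kuhn simplex with base `z` and rank permutation `r` -/
def kPt {n : ℕ} (z : Fin n → ℕ) (r : Equiv.Perm (Fin n)) (k : ℕ) : Fin n → ℕ :=
  fun i => z i + if (r i : ℕ) < k then 1 else 0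

def kMat {n : ℕ} (lam : (Fin n → ℕ) → ℕ) (z : Fin n → ℕ) (r : Equiv.Perm (Fin n)) :
    Matrix (Fin (n+1)) (Fin (n+1)) (ZMod 2) :=
  fun j k => if lam (kPt z r k) = j then 1 else 0

def kMin {n : ℕ} (lam : (Fin (n+1) → ℕ) → ℕ) (z : Fin (n+1) → ℕ) (r : Equiv.Perm (Fin (n+1)))
    (k : Fin (n+2)) : ZMod 2 :=
  Matrix.det (fun j l : Fin (n+1) => if lam (kPt z r (k.succAbove l : Fin (n+2))) = j then (1 : ZMod 2) else 0)

theorem kMat_det {n : ℕ} (lam : (Fin (n+1) → ℕ) → ℕ) (z : Fin (n+1) → ℕ)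
    (r : Equiv.Perm (Fin (n+1))) (hlam : ∀ x, lam x ≤ n+1) :
    (kMat lam z r).det = ∑ k, kMin lam z r k := by
  have h1 : ((kMat lam z r).updateRow (Fin.last (n+1)) (fun _ => (1 : ZMod 2))).det
      = (kMat lam z r).det := by
    have := Matrix.det_updateRow_sum (kMat lam z r) (Fin.last (n+1)) (fun _ => (1 : ZMod 2))
    rw [one_smul] at this
    rw [← this]
    congr 2
    ext k
    have h0 := Finset.sum_apply k Finset.univ (fun j => (1 : ZMod 2) • kMat lam z r j)
    refine Eq.trans ?_ h0.symm
    symm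
    have h0' : ∀ j, ((1 : ZMod 2) • kMat lam z r j) k = if lam (kPt z r k) = j then 1 else 0 := by
      intro j; rw [one_smul]; rfl
    simp only [h0']
    rw [Finset.sum_eq_single (⟨lam (kPt z r k), Nat.lt_succ_of_le (hlam _)⟩ : Fin (n+1+1))]
    · simp
    · intro b _ hb
      rw [if_neg]
      intro h
      exact hb (Fin.ext h.symm)
    · simp
  rw [← h1, Matrix.det_succ_row _ (Fin.last (n+1))]
  refine Finset.sum_congr rfl fun k _ => ?_
  have h2 : ((-1 : ZMod 2)) = 1 := by decide
  rw [h2, one_pow, one_mul, Matrix.updateRow_self, one_mul]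
  unfold kMin
  congr 1
  ext j l
  simp only [Matrix.submatrix_apply]
  rw [Matrix.updateRow_ne (Fin.succAbove_ne _ _)]
  simp [kMat]

theorem kMin_mid {n : ℕ} (lam : (Fin (n+1) → ℕ) → ℕ) (z : Fin (n+1) → ℕ) (k : Fin n) :
    ∑ r, kMin lam z r k.succ.castSucc = 0 := by
  have hne : (k.castSucc : Fin (n+1)) ≠ k.succ := by
    simp [Fin.ext_iff]
  refine Finset.sum_involution (fun r _ => Equiv.swap k.castSucc k.succ * r) ?_ ?_ ?_ ?_
  · intro r _
    have : kMin lam z (Equiv.swap k.castSucc k.succ * r) k.succ.castSucc = kMin lam z r k.succ.castSucc := by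
      unfold kMin
      congr 1
      ext j l
      have : kPt z (Equiv.swap k.castSucc k.succ * r) ((k.succ.castSucc).succAbove l : Fin (n+2))
          = kPt z r ((k.succ.castSucc).succAbove l : Fin (n+2)) := by
        ext i
        unfold kPt
        congr 1
        have h3 : (((k.succ.castSucc).succAbove l : Fin (n+2)) : ℕ) ≠ k + 1 := by
          intro h
          exact Fin.succAbove_ne (k.succ.castSucc) l (Fin.ext (by simpa using h))
        have h4 : ((Equiv.swap k.castSucc k.succ * r) i : ℕ) < (((k.succ.castSucc).succAbove l : Fin (n+2)) : ℕ)
            ↔ (r i : ℕ) < (((k.succ.castSucc).succAbove l : Fin (n+2)) : ℕ) := by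
          simp only [Equiv.Perm.mul_apply, Equiv.swap_apply_def]
          split_ifs with h5 h6
          · rw [h5]; simp only [Fin.val_castSucc, Fin.val_succ]; omega
          · rw [h6]; simp only [Fin.val_castSucc, Fin.val_succ]; omega
          · rfl
        simp only [h4]
      rw [this]
    rw [this]
    exact CharTwo.add_self_eq_zero _
  · intro r _ _ h
    have : Equiv.swap k.castSucc k.succ = 1 := by
      simpa using h
    exact hne (by simpa using this)
  · simp
  · intro r _
    simp [← mul_assoc]

theorem kMin_zero {n : ℕ} (lam : (Fin (n+1) → ℕ) → ℕ) (z : Fin (n+1) → ℕ) :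
    ∑ r, kMin lam z r 0 =
      ∑ r : Equiv.Perm (Fin (n+1)),
        kMin lam (fun i => z i + if i = r.symm (Fin.last n) then 1 else 0) r (Fin.last (n+1)) := by
  rw [← Equiv.sum_comp (Equiv.mulLeft (finRotate (n+1))) (fun r => kMin lam z r 0)]
  refine Finset.sum_congr rfl fun r _ => ?_
  unfold kMin
  congr 1
  ext j l
  have : kPt z (finRotate (n+1) * r) ((0 : Fin (n+2)).succAbove l : Fin (n+2))
      = kPt (fun i => z i + if i = r.symm (Fin.last n) then 1 else 0) r ((Fin.last (n+1)).succAbove l : Fin (n+2)) := by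
    ext i
    have hk1 : ((((0 : Fin (n+2)).succAbove l : Fin (n+2))) : ℕ) = l + 1 := by simp
    have hk2 : (((Fin.last (n+1)).succAbove l : Fin (n+2)) : ℕ) = l := by simp
    rw [hk1, hk2]
    show (z i + if ((finRotate (n+1) (r i) : Fin (n+1)) : ℕ) < l + 1 then 1 else 0) = (z i + if i = r.symm (Fin.last n) then 1 else 0) + if (r i : ℕ) < l then 1 else 0
    by_cases h : r i = Fin.last n
    · have h' : i = r.symm (Fin.last n) := by rw [← h]; simp
      rw [h, finRotate_last]
      have := l.2
      simp [h']
      omega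
    · have h' : ¬ i = r.symm (Fin.last n) := by
        intro hh; exact h (by rw [hh]; simp)
      have h2 : ((finRotate (n+1) (r i) : Fin (n+1)) : ℕ) = r i + 1 := by
        apply coe_finRotate_of_ne_last h
      rw [h2, if_neg h']
      simp only [Nat.add_lt_add_iff_right, add_zero]
  simp only [Equiv.coe_mulLeft, this]

theorem kuhn (p : ℕ) (hp : 0 < p) (n : ℕ) : ∀ (lam : (Fin n → ℕ) → ℕ), (∀ x, lam x ≤ n) →
    (∀ x (i : Fin n), x i = 0 → lam x ≤ i) → (∀ x (i : Fin n), x i = p → lam x ≠ i) →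
    ∑ z ∈ Fintype.piFinset (fun _ : Fin n => Finset.range p), ∑ r, (kMat lam z r).det = 1 := by
  induction n with
  | zero =>
    intro lam h1 _ _
    have : ∀ x, lam x = 0 := fun x => Nat.le_zero.1 (h1 x)
    simp [kMat, this]
  | succ n ih =>
    intro lam h1 h2 h3
    set B := Fintype.piFinset (fun _ : Fin (n+1) => Finset.range p) with hB
    have hBm : ∀ z, z ∈ B ↔ ∀ i, z i < p := by intro z; simp [hB]
    have e1 : ∀ z, ∑ r, (kMat lam z r).det = ∑ r : Equiv.Perm (Fin (n+1)),
        (kMin lam z r (Fin.last (n+1)) +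
        kMin lam (fun i => z i + if i = r.symm (Fin.last n) then 1 else 0) r (Fin.last (n+1))) := by
      intro z
      simp only [kMat_det lam z _ h1]
      rw [Finset.sum_comm, Fin.sum_univ_castSucc, Fin.sum_univ_succ]
      simp only [kMin_mid, Finset.sum_const_zero, add_zero]
      rw [Fin.castSucc_zero, kMin_zero, Finset.sum_add_distrib, add_comm]
    simp only [e1]
    rw [Finset.sum_comm]
    have e2 : ∀ r : Equiv.Perm (Fin (n+1)), ∑ z ∈ B, (kMin lam z r (Fin.last (n+1)) +
        kMin lam (fun i => z i + if i = r.symm (Fin.last n) then 1 else 0) r (Fin.last (n+1)))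
        = ∑ z ∈ B with z (r.symm (Fin.last n)) = 0, kMin lam z r (Fin.last (n+1)) := by
      intro r
      set i0 := r.symm (Fin.last n) with hi0
      rw [Finset.sum_add_distrib]
      rw [← Finset.sum_filter_add_sum_filter_not B (fun z => z i0 = 0)]
      rw [← Finset.sum_filter_add_sum_filter_not B (fun z => z i0 = p - 1) (fun z => kMin lam (fun i => z i + if i = i0 then 1 else 0) r (Fin.last (n+1)))]
      have e3 : ∑ z ∈ B with z i0 = p - 1, kMin lam (fun i => z i + if i = i0 then 1 else 0) r (Fin.last (n+1)) = 0 := by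
        refine Finset.sum_eq_zero fun z hz => ?_
        unfold kMin
        refine Matrix.det_eq_zero_of_row_eq_zero i0 fun l => ?_
        rw [if_neg]
        refine h3 _ _ ?_
        have hl := l.2
        have : ((r i0 : Fin (n+1)) : ℕ) = n := by simp [hi0]
        have h5 := (Finset.mem_filter.1 hz).2
        have hk2 : (((Fin.last (n+1)).succAbove l : Fin (n+2)) : ℕ) = l := by simp
        rw [hk2]
        show (z i0 + if i0 = i0 then 1 else 0) + (if (r i0 : ℕ) < l then 1 else 0) = p
        rw [if_pos rfl, if_neg (by omega), h5]
        omega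
      have e4 : ∑ z ∈ B with ¬ z i0 = p - 1, kMin lam (fun i => z i + if i = i0 then 1 else 0) r (Fin.last (n+1))
          = ∑ z ∈ B with ¬ z i0 = 0, kMin lam z r (Fin.last (n+1)) := by
        refine Finset.sum_nbij' (fun z => fun i => z i + if i = i0 then 1 else 0)
          (fun z => fun i => z i - if i = i0 then 1 else 0) ?_ ?_ ?_ ?_ ?_
        · intro z hz
          simp only [Finset.mem_filter, hBm] at hz ⊢
          refine ⟨fun i => ?_, by simp⟩
          have := hz.1 i
          by_cases h : i = i0
          · subst h; have := hz.2; simp; omega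
          · simp [h, this]
        · intro z hz
          simp only [Finset.mem_filter, hBm] at hz ⊢
          refine ⟨fun i => lt_of_le_of_lt (Nat.sub_le _ _) (hz.1 i), ?_⟩
          have := hz.1 i0
          have := hz.2
          simp; omega
        · intro z hz
          ext i; simp
        · intro z hz
          simp only [Finset.mem_filter] at hz
          ext i
          by_cases h : i = i0
          · subst h; have := hz.2; simp; omega
          · simp [h]
        · intro z hz; rfl
      rw [e3, e4, zero_add, add_assoc, CharTwo.add_self_eq_zero, add_zero]
    simp only [e2]
    have ih' := ih (fun x => lam (Fin.snoc x 0))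
      (fun x => by simpa using h2 (Fin.snoc x 0) (Fin.last n) (by simp))
      (fun x i hi => by simpa using h2 (Fin.snoc x 0) i.castSucc (by simpa using hi))
      (fun x i hi => by simpa using h3 (Fin.snoc x 0) i.castSucc (by simpa using hi))
    rw [← ih', Finset.sum_comm]
    have e5 : ∀ r : Equiv.Perm (Fin (n+1)), r.symm (Fin.last n) ≠ Fin.last n →
        ∑ z ∈ B with z (r.symm (Fin.last n)) = 0, kMin lam z r (Fin.last (n+1)) = 0 := by
      intro r hr
      refine Finset.sum_eq_zero fun z hz => ?_
      unfold kMin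
      refine Matrix.det_eq_zero_of_row_eq_zero (Fin.last n) fun l => ?_
      rw [if_neg]
      have hl := l.2
      set i0 := r.symm (Fin.last n) with hi0
      have h6 : ((r i0 : Fin (n+1)) : ℕ) = n := by simp [hi0]
      have h5 := (Finset.mem_filter.1 hz).2
      have := h2 (kPt z r ((Fin.last (n+1)).succAbove l : Fin (n+2))) i0 (by
        simp only [kPt, h6, Fin.succAbove_last, Fin.val_castSucc, h5]
        simp; omega)
      have h7 : (i0 : ℕ) < n := by
        have := i0.2
        have : (i0 : ℕ) ≠ n := fun h => hr (Fin.ext (by simpa using h))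
        omega
      simp only [Fin.val_last]
      omega
    symm
    rw [← Finset.sum_filter_add_sum_filter_not Finset.univ (fun r : Equiv.Perm (Fin (n+1)) => r.symm (Fin.last n) = Fin.last n)]
    rw [Finset.sum_eq_zero (s := Finset.univ.filter (fun r : Equiv.Perm (Fin (n+1)) => ¬ r.symm (Fin.last n) = Fin.last n))
      (fun r hr => e5 r (Finset.mem_filter.1 hr).2), add_zero]
    refine Finset.sum_bij (fun r' _ => (finSuccEquivLast.permCongr).symm (Equiv.optionCongr r')) ?_ ?_ ?_ ?_
    · intro r' _
      simp [Equiv.permCongr_def, Equiv.symm_apply_eq]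
    · intro r1 _ r2 _ h
      have := (finSuccEquivLast.permCongr).symm.injective h
      exact Equiv.optionCongr_injective this
    · intro r hr
      have hr' : r (Fin.last n) = Fin.last n := by
        have := (Finset.mem_filter.1 hr).2
        exact ((Equiv.symm_apply_eq r).1 this).symm
      refine ⟨Equiv.removeNone (finSuccEquivLast.permCongr r), Finset.mem_univ _, ?_⟩
      rw [Equiv.symm_apply_eq]
      ext1 x
      cases x with
      | none => simp [hr']
      | some x =>
        rw [Equiv.optionCongr_apply, Option.map_some, Equiv.removeNone_some]
        refine Option.ne_none_iff_exists'.1 ?_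
        intro h
        have : finSuccEquivLast.permCongr r none = none := by simp [hr']
        rw [← this] at h
        simpa using (finSuccEquivLast.permCongr r).injective h
    · intro r' _
      have hon : (Equiv.optionCongr r').symm none = none := by
        rw [Equiv.symm_apply_eq]; rfl
      refine Finset.sum_nbij' (fun z => Fin.snoc z 0) (fun z => Fin.init z) ?_ ?_ ?_ ?_ ?_
      · intro z hz
        simp only [Finset.mem_filter, hBm]
        have : ∀ i, z i < p := by simpa using hz
        refine ⟨fun i => ?_, by simp [Equiv.permCongr_def, hon]⟩
        refine Fin.lastCases ?_ (fun i => ?_) i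
        · simpa using hp
        · simpa using this i
      · intro z hz
        simp only [Finset.mem_filter, hBm] at hz
        simp [Fin.init, hz.1]
      · intro z _; simp
      · intro z hz
        simp only [Finset.mem_filter, hBm] at hz
        have h8 : z (Fin.last n) = 0 := by
          have := hz.2
          simpa [Equiv.permCongr_def, hon] using this
        rw [← h8]; simp
      · intro z hz
        unfold kMin kMat
        congr 1
        ext j l
        have : kPt (Fin.snoc z 0 : Fin (n+1) → ℕ) ((finSuccEquivLast.permCongr).symm (Equiv.optionCongr r')) ((Fin.last (n+1)).succAbove l : Fin (n+2)) = (Fin.snoc (kPt z r' l) 0 : Fin (n+1) → ℕ) := by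
          ext i
          refine Fin.lastCases ?_ (fun i => ?_) i
          · have := l.2
            simp [kPt, Equiv.permCongr_def]
            omega
          · simp [kPt, Equiv.permCongr_def]
        simp only [this]

theorem kuhn_exists (p : ℕ) (hp : 0 < p) (n : ℕ) (lam : (Fin n → ℕ) → ℕ) (h1 : ∀ x, lam x ≤ n)
    (h2 : ∀ x (i : Fin n), x i = 0 → lam x ≤ i) (h3 : ∀ x (i : Fin n), x i = p → lam x ≠ i) :
    ∃ z : Fin n → ℕ, (∀ i, z i < p) ∧ ∀ j ≤ n, ∃ y : Fin n → ℕ,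
      (∀ i, z i ≤ y i ∧ y i ≤ z i + 1) ∧ lam y = j := by
  by_contra hcon
  push Not at hcon
  have h := kuhn p hp n lam h1 h2 h3
  rw [Finset.sum_eq_zero] at h
  · exact zero_ne_one h
  · intro z hz
    obtain ⟨j, hj, hy⟩ := hcon z (by simpa using hz)
    refine Finset.sum_eq_zero fun r _ => ?_
    refine Matrix.det_eq_zero_of_row_eq_zero ⟨j, Nat.lt_succ_of_le hj⟩ fun k => ?_
    unfold kMat
    rw [if_neg]
    refine hy _ fun i => ?_
    unfold kPt
    split_ifs <;> omega

theorem pm_fin (n : ℕ) (F : (Fin n → ℝ) → (Fin n → ℝ)) (hF : Continuous F)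
    (h0 : ∀ x, (∀ i, 0 ≤ x i ∧ x i ≤ 1) → ∀ i, x i = 0 → F x i ≤ 0)
    (h1 : ∀ x, (∀ i, 0 ≤ x i ∧ x i ≤ 1) → ∀ i, x i = 1 → 0 ≤ F x i) :
    ∃ x, (∀ i, 0 ≤ x i ∧ x i ≤ 1) ∧ F x = 0 := by
  classical
  -- approximate statement
  have key : ∀ p : ℕ, ∃ z : Fin n → ℝ, (∀ i, 0 ≤ z i ∧ z i ≤ 1) ∧ ∀ i,
      (∃ y : Fin n → ℝ, (∀ i, 0 ≤ y i ∧ y i ≤ 1) ∧ (∀ l, |y l - z l| ≤ 1 / ((p : ℝ) + 1)) ∧ F y i ≤ 0) ∧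
      (∃ y : Fin n → ℝ, (∀ i, 0 ≤ y i ∧ y i ≤ 1) ∧ (∀ l, |y l - z l| ≤ 1 / ((p : ℝ) + 1)) ∧ 0 ≤ F y i) := by
    intro p
    set e : (Fin n → ℕ) → (Fin n → ℝ) := fun x i => (x i : ℝ) / ((p : ℝ) + 1) with he
    have hp1 : (0 : ℝ) < (p : ℝ) + 1 := by positivity
    -- "positive" predicate
    let P : (Fin n → ℕ) → Fin n → Prop := fun x i => x i ≠ 0 ∧ (x i = p + 1 ∨ 0 ≤ F (e x) i)
    let S : (Fin n → ℕ) → ℕ → Prop := fun x j => j = n ∨ ∃ h : j < n, ¬ P x ⟨j, h⟩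
    have hS : ∀ x, ∃ j, S x j := fun x => ⟨n, Or.inl rfl⟩
    let lam : (Fin n → ℕ) → ℕ := fun x => Nat.find (hS x)
    have hlam : ∀ x, lam x ≤ n := fun x => Nat.find_min' (hS x) (Or.inl rfl)
    have hlam1 : ∀ x (i : Fin n), (i : ℕ) < lam x → P x i := by
      intro x i hi
      have := Nat.find_min (hS x) hi
      by_contra hc
      exact this (Or.inr ⟨i.2, hc⟩)
    have hlam2 : ∀ x (i : Fin n), lam x = i → ¬ P x i := by
      intro x i hi
      have h := Nat.find_spec (hS x)
      change S x (lam x) at h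
      rw [hi] at h
      rcases h with h | ⟨_, h⟩
      · exact absurd h i.2.ne
      · exact h
    obtain ⟨z, hz, hy⟩ := kuhn_exists (p+1) (Nat.succ_pos p) n lam hlam
      (fun x i hx => by
        by_contra hc
        push Not at hc
        exact (hlam1 x i hc).1 hx)
      (fun x i hx hc => hlam2 x i hc ⟨by omega, Or.inl hx⟩)
    have hbox : ∀ x : Fin n → ℕ, (∀ i, x i ≤ p + 1) → ∀ i, 0 ≤ e x i ∧ e x i ≤ 1 := by
      intro x hx i
      refine ⟨by simp only [he]; positivity, ?_⟩
      simp only [he]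
      rw [div_le_one hp1]
      exact_mod_cast hx i
    have hdist : ∀ y : Fin n → ℕ, (∀ i, z i ≤ y i ∧ y i ≤ z i + 1) → ∀ l, |e y l - e z l| ≤ 1 / ((p : ℝ) + 1) := by
      intro y hy l
      simp only [he]
      rw [← sub_div, abs_div, abs_of_pos hp1]
      refine div_le_div_of_nonneg_right ?_ hp1.le
      have h1 : (z l : ℝ) ≤ y l := by exact_mod_cast (hy l).1
      have h2 : (y l : ℝ) ≤ z l + 1 := by exact_mod_cast (hy l).2
      rw [abs_le]; constructor <;> linarith
    refine ⟨e z, hbox z (fun i => (hz i).le), fun i => ⟨?_, ?_⟩⟩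
    · obtain ⟨y, hy1, hy2⟩ := hy i i.2.le
      have hyb := hbox y (fun l => by have := hz l; have := hy1 l; omega)
      refine ⟨e y, hyb, hdist y hy1, ?_⟩
      have := hlam2 y i hy2
      simp only [P, not_and_or, not_or, not_not] at this
      rcases this with h | ⟨_, h⟩
      · exact h0 _ hyb i (by simp [he, h])
      · exact (not_le.1 h).le
    · obtain ⟨y, hy1, hy2⟩ := hy n le_rfl
      have hyb := hbox y (fun l => by have := hz l; have := hy1 l; omega)
      refine ⟨e y, hyb, hdist y hy1, ?_⟩
      have := hlam1 y i (by rw [hy2]; exact i.2)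
      rcases this.2 with h | h
      · refine h1 _ hyb i ?_
        simp only [he]
        rw [h]
        push_cast
        exact div_self hp1.ne'
      · exact h
  choose z hz hzi using key
  have hcomp : IsCompact (Set.Icc (0 : Fin n → ℝ) 1) := isCompact_Icc
  obtain ⟨x, hx, φ, hφ, hlim⟩ := hcomp.tendsto_subseq (x := z)
    (fun p => ⟨fun i => (hz p i).1, fun i => (hz p i).2⟩)
  refine ⟨x, fun i => ⟨hx.1 i, hx.2 i⟩, ?_⟩
  have hy : ∀ y : ℕ → Fin n → ℝ, (∀ p l, |y p l - z p l| ≤ 1 / ((p : ℝ) + 1)) →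
      Tendsto (fun p => F (y (φ p))) atTop (nhds (F x)) := by
    intro y hyz
    refine (hF.tendsto x).comp ?_
    rw [tendsto_pi_nhds]
    intro l
    have h3 : Tendsto (fun p => y (φ p) l - z (φ p) l) atTop (nhds 0) := by
      refine squeeze_zero_norm (fun p => hyz (φ p) l) ?_
      exact (tendsto_one_div_add_atTop_nhds_zero_nat (𝕜 := ℝ)).comp hφ.tendsto_atTop
    have h4 := h3.add ((tendsto_pi_nhds.1 hlim) l)
    simpa using h4
  ext i
  choose y1 hy1 hy1' hy1'' using fun p => (hzi p i).1
  choose y2 hy2 hy2' hy2'' using fun p => (hzi p i).2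
  refine le_antisymm ?_ ?_
  · exact le_of_tendsto' ((tendsto_pi_nhds.1 (hy y1 hy1')) i) (fun p => hy1'' _)
  · exact ge_of_tendsto' ((tendsto_pi_nhds.1 (hy y2 hy2')) i) (fun p => hy2'' _)

theorem pm_general {ι : Type} [Fintype ι] (F : (ι → ℝ) → (ι → ℝ)) (hF : Continuous F)
    (h0 : ∀ x, (∀ i, 0 ≤ x i ∧ x i ≤ 1) → ∀ i, x i = 0 → F x i ≤ 0)
    (h1 : ∀ x, (∀ i, 0 ≤ x i ∧ x i ≤ 1) → ∀ i, x i = 1 → 0 ≤ F x i) :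
    ∃ x, (∀ i, 0 ≤ x i ∧ x i ≤ 1) ∧ F x = 0 := by
  let e := Fintype.equivFin ι
  obtain ⟨x, hx, hx0⟩ := pm_fin (Fintype.card ι)
    (fun x i => F (fun j => x (e j)) (e.symm i))
    (by
      refine continuous_pi fun i => ?_
      refine (continuous_apply _).comp (hF.comp ?_)
      exact continuous_pi fun j => continuous_apply _)
    (fun x hx i hi => h0 _ (fun j => hx _) _ (by simpa using hi))
    (fun x hx i hi => h1 _ (fun j => hx _) _ (by simpa using hi))
  refine ⟨fun j => x (e j), fun j => hx _, ?_⟩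
  ext j
  have := congrFun hx0 (e j)
  simpa using this


theorem li_ii {q : ℝ → ℝ} (hq : LocallyIntegrable q volume) (s t : ℝ) :
    IntervalIntegrable q volume s t := by
  rw [intervalIntegrable_iff]
  exact (hq.integrableOn_isCompact isCompact_uIcc).mono_set uIoc_subset_uIcc

theorem li_abs {q : ℝ → ℝ} (hq : LocallyIntegrable q volume) :
    LocallyIntegrable (fun x => |q x|) volume := by
  intro x
  obtain ⟨s, hs, hi⟩ := hq x
  exact ⟨s, hs, hi.norm⟩

theorem li_mul_ii {q h : ℝ → ℝ} (hq : LocallyIntegrable q volume) (hh : Continuous h) (s t : ℝ) :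
    IntervalIntegrable (fun r => q r * h r) volume s t :=
  (li_ii hq s t).mul_continuousOn hh.continuousOn

/-- exponential of a primitive -/
theorem exp_prim_ac {l : ℝ → ℝ} (hl : LocallyIntegrable l volume) (c lam s t : ℝ) :
    AbsolutelyContinuousOnInterval (fun r => Real.exp (lam * ∫ x in c..r, l x)) s t := by
  have hA0 : AbsolutelyContinuousOnInterval (fun r => ∫ x in s..r, l x) s t :=
    (li_ii hl s t).absolutelyContinuousOnInterval_intervalIntegral (by simp)
  have hc : ContinuousOn (fun r => Real.exp (lam * ∫ x in c..r, l x)) (uIcc s t) :=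
    (Real.continuous_exp.comp (continuous_const.mul
      (intervalIntegral.continuous_primitive (fun a b => li_ii hl a b) c))).continuousOn
  obtain ⟨M, hM⟩ := isCompact_uIcc.exists_bound_of_continuousOn hc
  have hM0 : 0 ≤ M := le_trans (norm_nonneg _) (hM s left_mem_uIcc)
  have key : ∀ x ∈ uIcc s t, ∀ y ∈ uIcc s t,
      dist (Real.exp (lam * ∫ x in c..x, l x)) (Real.exp (lam * ∫ x in c..y, l x))
      ≤ M * |lam| * dist (∫ z in s..x, l z) (∫ z in s..y, l z) := by
    intro x hx y hy
    have e1 : (∫ z in s..x, l z) - (∫ z in s..y, l z)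
        = (∫ z in c..x, l z) - (∫ z in c..y, l z) := by
      rw [← intervalIntegral.integral_add_adjacent_intervals (li_ii hl c s) (li_ii hl s x),
        ← intervalIntegral.integral_add_adjacent_intervals (li_ii hl c s) (li_ii hl s y)]
      ring
    rw [Real.dist_eq, Real.dist_eq, e1]
    have hx' := hM x hx
    have hy' := hM y hy
    rw [Real.norm_eq_abs, Real.abs_exp] at hx' hy'
    set X := lam * ∫ z in c..x, l z with hX
    set Y := lam * ∫ z in c..y, l z with hY
    have hXY : |lam| * |(∫ z in c..x, l z) - (∫ z in c..y, l z)| = |X - Y| := by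
      rw [← abs_mul]; congr 1; rw [hX, hY]; ring
    rw [mul_assoc, hXY]
    have aux : ∀ X Y : ℝ, Real.exp X - Real.exp Y ≤ Real.exp X * |X - Y| := by
      intro X Y
      have : Real.exp Y = Real.exp X * Real.exp (Y - X) := by rw [← Real.exp_add]; ring_nf
      have h2 := Real.add_one_le_exp (Y - X)
      have h3 := Real.exp_pos X
      have h4 := le_abs_self (X - Y)
      rw [this]
      nlinarith
    rw [abs_le]
    have a1 := aux X Y
    have a2 := aux Y X
    rw [abs_sub_comm Y X] at a2
    have b1 : Real.exp X * |X - Y| ≤ M * |X - Y| := mul_le_mul_of_nonneg_right hx' (abs_nonneg _)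
    have b2 : Real.exp Y * |X - Y| ≤ M * |X - Y| := mul_le_mul_of_nonneg_right hy' (abs_nonneg _)
    constructor <;> linarith
  unfold AbsolutelyContinuousOnInterval at hA0 ⊢
  have h1 := hA0.const_mul (M * |lam|)
  rw [mul_zero] at h1
  refine squeeze_zero' (Eventually.of_forall fun E => Finset.sum_nonneg fun i _ => dist_nonneg) ?_ h1
  rw [eventually_inf_principal]
  refine Eventually.of_forall ?_
  intro E hE
  rw [Finset.mul_sum]
  refine Finset.sum_le_sum fun i hi => ?_
  have := hE.1 i hi
  exact key _ this.1 _ this.2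

theorem exp_prim_int {l : ℝ → ℝ} (hl : LocallyIntegrable l volume) (c lam s t : ℝ) :
    ∫ r in s..t, lam * (l r * Real.exp (lam * ∫ x in c..r, l x))
      = Real.exp (lam * ∫ x in c..t, l x) - Real.exp (lam * ∫ x in c..s, l x) := by
  rw [← (exp_prim_ac hl c lam s t).integral_deriv_eq_sub]
  refine intervalIntegral.integral_congr_ae ?_
  filter_upwards [LocallyIntegrable.ae_hasDerivAt_integral hl] with r hr _
  have := ((hr c).const_mul lam).exp
  rw [this.deriv]
  ring

theorem weight_bound {l : ℝ → ℝ} (hl : LocallyIntegrable l volume) (hl0 : ∀ r, 0 ≤ l r) (c t : ℝ) :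
    |∫ r in c..t, l r * Real.exp (2 * |∫ x in c..r, l x|)|
      ≤ Real.exp (2 * |∫ x in c..t, l x|) / 2 := by
  rcases le_total c t with h | h
  · have e : ∫ r in c..t, l r * Real.exp (2 * |∫ x in c..r, l x|)
        = ∫ r in c..t, l r * Real.exp (2 * ∫ x in c..r, l x) := by
      refine intervalIntegral.integral_congr ?_
      intro r hr
      rw [uIcc_of_le h] at hr
      simp only
      rw [abs_of_nonneg (intervalIntegral.integral_nonneg hr.1 fun u _ => hl0 u)]
    have e2 := exp_prim_int hl c 2 c t
    rw [intervalIntegral.integral_const_mul] at e2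
    have hp := intervalIntegral.integral_nonneg (μ := volume) h fun u _ => hl0 u
    have hp1 : 0 ≤ ∫ r in c..t, l r * Real.exp (2 * ∫ x in c..r, l x) :=
      intervalIntegral.integral_nonneg h fun u _ => mul_nonneg (hl0 u) (Real.exp_nonneg _)
    rw [e, abs_of_nonneg hp1, abs_of_nonneg hp]
    simp at e2
    linarith
  · have e : ∫ r in c..t, l r * Real.exp (2 * |∫ x in c..r, l x|)
        = ∫ r in c..t, l r * Real.exp (-2 * ∫ x in c..r, l x) := by
      refine intervalIntegral.integral_congr ?_
      intro r hr
      rw [uIcc_of_ge h] at hr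
      simp only
      rw [intervalIntegral.integral_symm, abs_neg,
        abs_of_nonneg (intervalIntegral.integral_nonneg hr.2 fun u _ => hl0 u)]
      ring_nf
    have e2 := exp_prim_int hl c (-2) c t
    rw [intervalIntegral.integral_const_mul] at e2
    have hp := intervalIntegral.integral_nonneg (μ := volume) h fun u _ => hl0 u
    have hp1 : 0 ≤ ∫ r in t..c, l r * Real.exp (-2 * ∫ x in c..r, l x) :=
      intervalIntegral.integral_nonneg h fun u _ => mul_nonneg (hl0 u) (Real.exp_nonneg _)
    rw [e, intervalIntegral.integral_symm, abs_neg, abs_of_nonneg hp1,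
      intervalIntegral.integral_symm (μ := volume) (f := l) t c, abs_neg, abs_of_nonneg hp]
    rw [intervalIntegral.integral_symm t c, intervalIntegral.integral_symm (f := l) t c] at e2
    simp at e2
    simp
    linarith

theorem abs_int_le {c t : ℝ} {F G : ℝ → ℝ} (hG : IntervalIntegrable G volume c t)
    (h : ∀ r ∈ uIcc c t, |F r| ≤ G r) : |∫ r in c..t, F r| ≤ |∫ r in c..t, G r| := by
  have := intervalIntegral.norm_integral_le_abs_of_norm_le (f := F) (g := G) (a := c) (b := t)
    (μ := volume) ?_ hG
  · simpa using this
  · rw [ae_restrict_iff' measurableSet_uIoc]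
    exact Eventually.of_forall fun r hr => by simpa using h r (uIoc_subset_uIcc hr)

theorem gron {l : ℝ → ℝ} (hl : LocallyIntegrable l volume) (hl0 : ∀ r, 0 ≤ l r) (c t1 D0 : ℝ)
    (D : ℝ → ℝ) (hD : Continuous D) (hDn : ∀ r, 0 ≤ D r)
    (h : ∀ t ∈ uIcc c t1, D t ≤ D0 + |∫ r in c..t, l r * D r|) :
    D t1 ≤ 2 * D0 * Real.exp (2 * |∫ x in c..t1, l x|) := by
  have hAc : Continuous fun r => ∫ x in c..r, l x :=
    intervalIntegral.continuous_primitive (fun a b => li_ii hl a b) c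
  set E : ℝ → ℝ := fun r => Real.exp (2 * |∫ x in c..r, l x|) with hE
  have hEc : Continuous E := by fun_prop
  have hE1 : ∀ r, 1 ≤ E r := fun r => Real.one_le_exp (by positivity)
  have hEp : ∀ r, 0 < E r := fun r => Real.exp_pos _
  obtain ⟨z, hz, hzm⟩ := isCompact_uIcc.exists_isMaxOn (s := uIcc c t1) ⟨c, left_mem_uIcc⟩
    (f := fun r => D r / E r) (hD.div hEc (fun r => (hEp r).ne')).continuousOn
  have hzm' : ∀ r ∈ uIcc c t1, D r ≤ D z / E z * E r := by
    intro r hr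
    have := hzm hr
    simp only [mem_ofPred_eq] at this
    rwa [div_le_iff₀ (hEp r)] at this
  set M := D z / E z with hM
  have hM0 : 0 ≤ M := div_nonneg (hDn z) (hEp z).le
  have h1 := h z hz
  have hsub : uIcc c z ⊆ uIcc c t1 := uIcc_subset_uIcc left_mem_uIcc hz
  have h2 : |∫ r in c..z, l r * D r| ≤ |∫ r in c..z, M * (l r * E r)| := by
    refine abs_int_le ((li_mul_ii hl hEc c z).const_mul M) ?_
    intro r hr
    rw [abs_of_nonneg (mul_nonneg (hl0 r) (hDn r))]
    have := hzm' r (hsub hr)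
    have := mul_le_mul_of_nonneg_left this (hl0 r)
    linarith
  have h3 : |∫ r in c..z, M * (l r * E r)| ≤ M * (E z / 2) := by
    rw [intervalIntegral.integral_const_mul, abs_mul, abs_of_nonneg hM0]
    exact mul_le_mul_of_nonneg_left (weight_bound hl hl0 c z) hM0
  have h4 : M * E z = D z := by rw [hM]; field_simp [(hEp z).ne']
  have h5 : M ≤ 2 * D0 := by
    have : M * E z ≤ 2 * D0 := by linarith
    have : M * 1 ≤ M * E z := mul_le_mul_of_nonneg_left (hE1 z) hM0
    linarith
  have h6 := hzm' t1 right_mem_uIcc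
  exact h6.trans (mul_le_mul_of_nonneg_right h5 (hEp t1).le)

/-- integral form of the planar system on an interval -/
def SolOn (q f u v : ℝ → ℝ) (c t1 : ℝ) : Prop :=
  Continuous u ∧ Continuous v ∧ ∀ t ∈ uIcc c t1,
    u t = u c + (∫ r in c..t, v r) ∧ v t = v c - ∫ r in c..t, q r * f (u r)

theorem sol_dep {q f : ℝ → ℝ} (hq : LocallyIntegrable q volume) {Λ : ℝ} (hΛ : 0 ≤ Λ)
    (hf : ∀ x y, |f x - f y| ≤ Λ * |x - y|) (hfc : Continuous f)
    {u1 v1 u2 v2 : ℝ → ℝ} {c t1 : ℝ} (h1 : SolOn q f u1 v1 c t1) (h2 : SolOn q f u2 v2 c t1) :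
    |u1 t1 - u2 t1| + |v1 t1 - v2 t1| ≤
      2 * (|u1 c - u2 c| + |v1 c - v2 c|) * Real.exp (2 * |∫ x in c..t1, (1 + Λ * |q x|)|) := by
  obtain ⟨hu1, hv1, e1⟩ := h1
  obtain ⟨hu2, hv2, e2⟩ := h2
  have hl : LocallyIntegrable (fun x => 1 + Λ * |q x|) volume := by
    have : LocallyIntegrable (fun x => |q x|) volume := li_abs hq
    exact (continuous_const.locallyIntegrable).add (this.smul Λ)
  have hl0 : ∀ x, 0 ≤ 1 + Λ * |q x| := fun x => by positivity
  set D : ℝ → ℝ := fun t => |u1 t - u2 t| + |v1 t - v2 t| with hD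
  have hDc : Continuous D := by fun_prop
  have hDn : ∀ r, 0 ≤ D r := fun r => by positivity
  refine gron hl hl0 c t1 (D c) D hDc hDn ?_
  intro t ht
  obtain ⟨a1, b1⟩ := e1 t ht
  obtain ⟨a2, b2⟩ := e2 t ht
  have hqa : LocallyIntegrable (fun x => |q x|) volume := li_abs hq
  have i1 := (hv1.sub hv2).intervalIntegrable c t (μ := volume)
  have du : u1 t - u2 t = (u1 c - u2 c) + ∫ r in c..t, (v1 r - v2 r) := by
    rw [a1, a2, intervalIntegral.integral_sub (hv1.intervalIntegrable _ _)
      (hv2.intervalIntegrable _ _)]; ring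
  have dv : v1 t - v2 t = (v1 c - v2 c) - ∫ r in c..t, q r * (f (u1 r) - f (u2 r)) := by
    have : ∫ r in c..t, q r * (f (u1 r) - f (u2 r))
      = (∫ r in c..t, q r * f (u1 r)) - ∫ r in c..t, q r * f (u2 r) := by
      have e := intervalIntegral.integral_sub (li_mul_ii hq (hfc.comp hu1) c t)
        (li_mul_ii hq (hfc.comp hu2) c t)
      simp only [Function.comp] at e
      rw [← e]
      simp only [mul_sub]
    rw [b1, b2, this]; ring
  have hA : Continuous fun r => |v1 r - v2 r| := by fun_prop
  have hB : Continuous fun r => |u1 r - u2 r| := by fun_prop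
  have k1 : |∫ r in c..t, (v1 r - v2 r)| ≤ |∫ r in c..t, (|v1 r - v2 r|)| :=
    abs_int_le (hA.intervalIntegrable _ _) fun r _ => le_rfl
  have i2 : IntervalIntegrable (fun r => Λ * (|q r| * |u1 r - u2 r|)) volume c t :=
    (li_mul_ii hqa hB c t).const_mul Λ
  have k2 : |∫ r in c..t, q r * (f (u1 r) - f (u2 r))| ≤ |∫ r in c..t, Λ * (|q r| * |u1 r - u2 r|)| := by
    refine abs_int_le i2 fun r _ => ?_
    rw [abs_mul]
    have := mul_le_mul_of_nonneg_left (hf (u1 r) (u2 r)) (abs_nonneg (q r))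
    linarith
  have i3 : IntervalIntegrable (fun r => (1 + Λ * |q r|) * D r) volume c t := li_mul_ii hl hDc c t
  have k3 : |∫ r in c..t, (|v1 r - v2 r|)| + |∫ r in c..t, Λ * (|q r| * |u1 r - u2 r|)|
      ≤ |∫ r in c..t, (1 + Λ * |q r|) * D r| := by
    have gen : ∀ (p : ℝ → ℝ), (∀ r, 0 ≤ p r) → |∫ r in c..t, p r| = ∫ r in uIoc c t, p r := by
      intro p hp
      rw [intervalIntegral.abs_intervalIntegral_eq, abs_of_nonneg]
      exact integral_nonneg hp
    rw [gen _ (fun r => abs_nonneg _), gen _ (fun r => by positivity),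
      gen _ (fun r => mul_nonneg (hl0 r) (hDn r))]
    rw [← integral_add ((hA.intervalIntegrable c t).def'.integrable) i2.def'.integrable]
    refine integral_mono ((hA.intervalIntegrable c t).def'.integrable.add i2.def'.integrable)
      i3.def'.integrable ?_
    intro r
    simp only [hD]
    have x1 : 0 ≤ Λ * |q r| * |v1 r - v2 r| := by positivity
    have x2 : 0 ≤ |u1 r - u2 r| := abs_nonneg _
    nlinarith
  have k4 : |u1 t - u2 t| ≤ |u1 c - u2 c| + |∫ r in c..t, (v1 r - v2 r)| := by
    rw [du]; exact abs_add_le _ _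
  have k5 : |v1 t - v2 t| ≤ |v1 c - v2 c| + |∫ r in c..t, q r * (f (u1 r) - f (u2 r))| := by
    rw [dv]; exact abs_sub _ _
  simp only [hD] at k3 ⊢
  linarith

def GSol (q f u v : ℝ → ℝ) : Prop :=
  (∀ t, HasDerivAt u (v t) t) ∧ Continuous v ∧ ∀ s t, v t = v s - ∫ r in s..t, q r * f (u r)

theorem GSol.contu {q f u v : ℝ → ℝ} (h : GSol q f u v) : Continuous u :=
  continuous_iff_continuousAt.2 fun t => (h.1 t).continuousAt

theorem GSol.solOn {q f u v : ℝ → ℝ} (h : GSol q f u v) (c t : ℝ) : SolOn q f u v c t := by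
  refine ⟨h.contu, h.2.1, fun t _ => ⟨?_, h.2.2 c t⟩⟩
  rw [intervalIntegral.integral_eq_sub_of_hasDerivAt (fun x _ => h.1 x)
    (h.2.1.intervalIntegrable _ _)]
  ring

theorem weight_core {q : ℝ → ℝ} (hq : LocallyIntegrable q volume) {Λ : ℝ} (hΛ : 0 ≤ Λ) (c : ℝ)
    {P : ℝ → ℝ} (hP : Continuous P) {K : ℝ} (hK : 0 ≤ K)
    (h : ∀ r, |P r| ≤ Λ * (K * Real.exp (2 * |∫ x in c..r, (1 + Λ * |q x|)|))) (t : ℝ) :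
    |∫ s in c..t, ∫ r in c..s, q r * P r| ≤
      K / 4 * Real.exp (2 * |∫ x in c..t, (1 + Λ * |q x|)|) := by
  have hqa := li_abs hq
  have hl : LocallyIntegrable (fun x => 1 + Λ * |q x|) volume :=
    (continuous_const.locallyIntegrable).add (hqa.smul Λ)
  have hl0 : ∀ x, 0 ≤ 1 + Λ * |q x| := fun x => by positivity
  have hAc : Continuous fun r => ∫ x in c..r, (1 + Λ * |q x|) :=
    intervalIntegral.continuous_primitive (fun a b => li_ii hl a b) c
  set E : ℝ → ℝ := fun r => Real.exp (2 * |∫ x in c..r, (1 + Λ * |q x|)|) with hE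
  have hEc : Continuous E := by fun_prop
  have hE0 : ∀ r, 0 ≤ E r := fun r => Real.exp_nonneg _
  have s1 : ∀ s, |∫ r in c..s, q r * P r| ≤ K * (E s / 2) := by
    intro s
    have : |∫ r in c..s, q r * P r| ≤ |∫ r in c..s, K * ((1 + Λ * |q r|) * E r)| := by
      refine abs_int_le ((li_mul_ii hl hEc c s).const_mul K) ?_
      intro r _
      rw [abs_mul]
      have h1 := mul_le_mul_of_nonneg_left (h r) (abs_nonneg (q r))
      have h2 : 0 ≤ K * E r := mul_nonneg hK (hE0 r)
      have h3 : |q r| * (Λ * (K * Real.exp (2 * |∫ x in c..r, (1 + Λ * |q x|)|))) = Λ * |q r| * (K * E r) := by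
        simp only [hE]; ring
      rw [h3] at h1
      linarith
    refine this.trans ?_
    rw [intervalIntegral.integral_const_mul, abs_mul, abs_of_nonneg hK]
    exact mul_le_mul_of_nonneg_left (weight_bound hl hl0 c s) hK
  have : |∫ s in c..t, ∫ r in c..s, q r * P r| ≤ |∫ s in c..t, K / 2 * ((1 + Λ * |q s|) * E s)| := by
    refine abs_int_le ((li_mul_ii hl hEc c t).const_mul _) ?_
    intro s _
    refine (s1 s).trans ?_
    have h1 : 0 ≤ Λ * |q s| * (K * E s) := by have := hE0 s; positivity
    linarith
  refine this.trans ?_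
  rw [intervalIntegral.integral_const_mul, abs_mul, abs_of_nonneg (by positivity)]
  have := mul_le_mul_of_nonneg_left (weight_bound hl hl0 c t) (show 0 ≤ K / 2 by positivity)
  simp only [hE]
  linarith

theorem sol_exists {q f : ℝ → ℝ} (hq : LocallyIntegrable q volume) {Λ : ℝ} (hΛ : 0 ≤ Λ)
    (hf : ∀ x y, |f x - f y| ≤ Λ * |x - y|) (hfc : Continuous f) (hf0 : f 0 = 0) (c x y : ℝ) :
    ∃ u v, GSol q f u v ∧ u c = x ∧ v c = y := by
  have hqa := li_abs hq
  have hl : LocallyIntegrable (fun x => 1 + Λ * |q x|) volume :=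
    (continuous_const.locallyIntegrable).add (hqa.smul Λ)
  have hl0 : ∀ x, 0 ≤ 1 + Λ * |q x| := fun x => by positivity
  have hAc : Continuous fun r => ∫ x in c..r, (1 + Λ * |q x|) :=
    intervalIntegral.continuous_primitive (fun a b => li_ii hl a b) c
  obtain ⟨E, hE⟩ : ∃ E : ℝ → ℝ, E = fun r => Real.exp (2 * |∫ x in c..r, (1 + Λ * |q x|)|) := ⟨_, rfl⟩
  have hEc : Continuous E := by rw [hE]; fun_prop
  have hEp : ∀ r, 0 < E r := fun r => by rw [hE]; exact Real.exp_pos _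
  have hE1 : ∀ r, 1 ≤ E r := fun r => by rw [hE]; exact Real.one_le_exp (by positivity)
  have hEt : ∀ t, |t - c| ≤ E t := by
    intro t
    have h1 : |∫ x in c..t, (1:ℝ)| ≤ |∫ x in c..t, (1 + Λ * |q x|)| := by
      refine abs_int_le (li_ii hl c t) fun r _ => ?_
      rw [abs_one]
      have : 0 ≤ Λ * |q r| := by positivity
      linarith
    have h2 : ∫ x in c..t, (1:ℝ) = t - c := by simp
    rw [h2] at h1
    have h3 := Real.add_one_le_exp (2 * |∫ x in c..t, (1 + Λ * |q x|)|)
    rw [hE]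
    have := abs_nonneg (∫ x in c..t, (1 + Λ * |q x|))
    simp only
    linarith
  have fE : ∀ w : BoundedContinuousFunction ℝ ℝ, Continuous fun r => f (E r * w r) := fun w =>
    hfc.comp (hEc.mul w.continuous)
  have hin : ∀ w : BoundedContinuousFunction ℝ ℝ,
      Continuous fun s => ∫ r in c..s, q r * f (E r * w r) := fun w =>
    intervalIntegral.continuous_primitive (fun a b => li_mul_ii hq (fE w) a b) c
  let raw : BoundedContinuousFunction ℝ ℝ → ℝ → ℝ := fun w t =>
    x + y * (t - c) - ∫ s in c..t, ∫ r in c..s, q r * f (E r * w r)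
  have hrawc : ∀ w, Continuous (raw w) := fun w => by
    have : Continuous fun t => ∫ s in c..t, ∫ r in c..s, q r * f (E r * w r) :=
      intervalIntegral.continuous_primitive (fun a b => (hin w).intervalIntegrable a b) c
    simp only [raw]
    fun_prop
  have hbd : ∀ w t, ‖raw w t / E t‖ ≤ |x| + |y| + ‖w‖ := by
    intro w t
    rw [Real.norm_eq_abs, abs_div, abs_of_pos (hEp t), div_le_iff₀ (hEp t)]
    have := weight_core hq hΛ c (fE w) (norm_nonneg w) (fun r => by
      have h1 := hf (E r * w r) 0
      rw [hf0, sub_zero, sub_zero] at h1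
      refine h1.trans (mul_le_mul_of_nonneg_left ?_ hΛ)
      rw [abs_mul, abs_of_pos (hEp r), mul_comm]
      have h2 := w.norm_coe_le_norm r
      rw [Real.norm_eq_abs] at h2
      have := mul_le_mul_of_nonneg_right h2 (hEp r).le
      simpa [hE] using this) t
    have e : Real.exp (2 * |∫ x in c..t, (1 + Λ * |q x|)|) = E t := by rw [hE]
    rw [e] at this
    have h5 : |y * (t - c)| ≤ |y| * E t := by
      rw [abs_mul]; exact mul_le_mul_of_nonneg_left (hEt t) (abs_nonneg _)
    have h6 : |x| ≤ |x| * E t := le_mul_of_one_le_right (abs_nonneg _) (hE1 t)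
    have h7 : 0 ≤ ‖w‖ * E t := mul_nonneg (norm_nonneg _) (hEp t).le
    have h8 := abs_sub (x + y * (t - c)) (∫ s in c..t, ∫ r in c..s, q r * f (E r * w r))
    have h9 := abs_add_le x (y * (t - c))
    simp only [raw]
    linarith
  let Φ : BoundedContinuousFunction ℝ ℝ → BoundedContinuousFunction ℝ ℝ := fun w =>
    BoundedContinuousFunction.ofNormedAddCommGroup (fun t => raw w t / E t)
      ((hrawc w).div hEc fun t => (hEp t).ne') (|x| + |y| + ‖w‖) (hbd w)
  have hΦ : ContractingWith (1/4) Φ := by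
    refine ⟨by rw [← NNReal.coe_lt_coe]; norm_num, LipschitzWith.of_dist_le_mul fun w1 w2 => ?_⟩
    rw [BoundedContinuousFunction.dist_le (by positivity)]
    intro t
    change dist (raw w1 t / E t) (raw w2 t / E t) ≤ _
    rw [Real.dist_eq, ← sub_div, abs_div, abs_of_pos (hEp t), div_le_iff₀ (hEp t)]
    have hd : raw w1 t - raw w2 t
        = - ∫ s in c..t, ∫ r in c..s, q r * (f (E r * w1 r) - f (E r * w2 r)) := by
      have e1 : ∀ s, ∫ r in c..s, q r * (f (E r * w1 r) - f (E r * w2 r))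
          = (∫ r in c..s, q r * f (E r * w1 r)) - ∫ r in c..s, q r * f (E r * w2 r) := by
        intro s
        rw [← intervalIntegral.integral_sub (li_mul_ii hq (fE w1) c s) (li_mul_ii hq (fE w2) c s)]
        simp only [mul_sub]
      simp only [e1]
      rw [intervalIntegral.integral_sub ((hin w1).intervalIntegrable _ _)
        ((hin w2).intervalIntegrable _ _)]
      simp only [raw]
      ring
    rw [hd, abs_neg]
    have := weight_core hq hΛ c ((fE w1).sub (fE w2)) (dist_nonneg (x := w1) (y := w2)) (fun r => by
      have h1 := hf (E r * w1 r) (E r * w2 r)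
      refine h1.trans (mul_le_mul_of_nonneg_left ?_ hΛ)
      rw [← mul_sub, abs_mul, abs_of_pos (hEp r), mul_comm]
      have h2 := BoundedContinuousFunction.dist_coe_le_dist (f := w1) (g := w2) r
      rw [Real.dist_eq] at h2
      have := mul_le_mul_of_nonneg_right h2 (hEp r).le
      simpa [hE] using this) t
    have e : Real.exp (2 * |∫ x in c..t, (1 + Λ * |q x|)|) = E t := by rw [hE]
    rw [e] at this
    refine this.trans (le_of_eq ?_)
    push_cast
    ring
  set w := hΦ.fixedPoint Φ with hw
  have hfix : Φ w = w := hΦ.fixedPoint_isFixedPt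
  have hraw : ∀ t, E t * w t = raw w t := by
    intro t
    have : (Φ w) t = raw w t / E t := rfl
    rw [hfix] at this
    rw [this]; field_simp [(hEp t).ne']
  have hfr : ∀ r, f (E r * w r) = f (raw w r) := fun r => by rw [hraw]
  refine ⟨raw w, fun t => y - ∫ r in c..t, q r * f (raw w r), ⟨?_, ?_, ?_⟩, by simp [raw], by simp⟩
  · intro t
    simp only [← hfr]
    have h1 : HasDerivAt (fun t => ∫ s in c..t, ∫ r in c..s, q r * f (E r * w r))
        (∫ r in c..t, q r * f (E r * w r)) t :=
      intervalIntegral.integral_hasDerivAt_right ((hin w).intervalIntegrable _ _)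
        ((hin w).stronglyMeasurableAtFilter _ _) (hin w).continuousAt
    have h2 : HasDerivAt (fun t => x + y * (t - c)) y t := by
      simpa using ((((hasDerivAt_id t).sub_const c).const_mul y).const_add x)
    exact h2.sub h1
  · have := hin w
    simp only [hfr] at this
    fun_prop
  · intro s t
    have i : ∀ a b, IntervalIntegrable (fun r => q r * f (raw w r)) volume a b := fun a b =>
      li_mul_ii hq (hfc.comp (hrawc w)) a b
    simp only
    rw [← intervalIntegral.integral_add_adjacent_intervals (i c s) (i s t)]
    ring

theorem gsol_dep {q f : ℝ → ℝ} (hq : LocallyIntegrable q volume) {Λ : ℝ} (hΛ : 0 ≤ Λ)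
    (hf : ∀ x y, |f x - f y| ≤ Λ * |x - y|) (c t : ℝ)
    (u v : ℝ × ℝ → ℝ → ℝ) (h : ∀ p, GSol q f (u p) (v p) ∧ u p c = p.1 ∧ v p c = p.2)
    (hfc : Continuous f) :
    Continuous fun p => (u p t, v p t) := by
  set C := 2 * Real.exp (2 * |∫ x in c..t, (1 + Λ * |q x|)|) with hC
  have hC0 : 0 ≤ C := by positivity
  have key : ∀ p p', |u p t - u p' t| + |v p t - v p' t| ≤ C * (2 * dist p p') := by
    intro p p'
    have := sol_dep hq hΛ hf hfc ((h p).1.solOn c t) ((h p').1.solOn c t)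
    rw [(h p).2.1, (h p).2.2, (h p').2.1, (h p').2.2] at this
    have h1 : |p.1 - p'.1| ≤ dist p p' := by
      rw [Prod.dist_eq, ← Real.dist_eq]; exact le_max_left _ _
    have h2 : |p.2 - p'.2| ≤ dist p p' := by
      rw [Prod.dist_eq, ← Real.dist_eq]; exact le_max_right _ _
    refine this.trans ?_
    have := mul_le_mul_of_nonneg_left (show |p.1 - p'.1| + |p.2 - p'.2| ≤ 2 * dist p p' by linarith) hC0
    calc _ = C * (|p.1 - p'.1| + |p.2 - p'.2|) := by rw [hC]; ring
      _ ≤ _ := this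
  have hL : LipschitzWith (Real.toNNReal (C * 2)) (fun p => (u p t, v p t)) := by
    refine LipschitzWith.of_dist_le_mul fun p p' => ?_
    rw [Real.coe_toNNReal _ (by positivity), Prod.dist_eq, Real.dist_eq, Real.dist_eq]
    have := key p p'
    have h1 := abs_nonneg (u p t - u p' t)
    have h2 := abs_nonneg (v p t - v p' t)
    refine max_le ?_ ?_ <;> simp only <;> linarith
  exact hL.continuous

theorem gsol_uniq {q f : ℝ → ℝ} (hq : LocallyIntegrable q volume) {Λ : ℝ} (hΛ : 0 ≤ Λ)
    (hf : ∀ x y, |f x - f y| ≤ Λ * |x - y|) (hfc : Continuous f) {c t : ℝ}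
    {u1 v1 u2 v2 : ℝ → ℝ} (h1 : SolOn q f u1 v1 c t) (h2 : SolOn q f u2 v2 c t)
    (hu : u1 c = u2 c) (hv : v1 c = v2 c) : u1 t = u2 t ∧ v1 t = v2 t := by
  have := sol_dep hq hΛ hf hfc h1 h2
  rw [hu, hv] at this
  simp only [sub_self, abs_zero, add_zero, mul_zero, zero_mul] at this
  have a1 := abs_nonneg (u1 t - u2 t)
  have a2 := abs_nonneg (v1 t - v2 t)
  constructor
  · have : |u1 t - u2 t| = 0 := by linarith
    rw [abs_eq_zero] at this; linarith
  · have : |v1 t - v2 t| = 0 := by linarith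
    rw [abs_eq_zero] at this; linarith


theorem chain_lemma {J : Type} [Fintype J] (nx : J ≃ J) (s : J → Bool)
    (E : J → ℝ × ℝ → ℝ × ℝ) (H : J → ℝ × ℝ → ℝ) (hE : ∀ j, Continuous (E j))
    (hH : ∀ j, Continuous (H j)) (ρ Y Yn : ℝ) (hρ : 0 < ρ) (hY : 0 < Y) (hYn : 0 < Yn)
    (p1 : ∀ j x y, 0 ≤ x → x ≤ ρ → H j (x, y) = 0 → 0 ≤ (E j (x, y)).1 ∧ Y + 1 ≤ (E j (x, y)).2)
    (p2 : ∀ j x, 0 ≤ x → x ≤ ρ → 0 < H j (x, Y) ∧ (E j (x, Y)).1 < 0)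
    (p3 : ∀ j x, 0 ≤ x → x ≤ ρ → H j (x, -Yn) < 0 ∧ (E j (x, -Yn)).1 < 0)
    (p4 : ∀ j x y, 0 ≤ x → (E j (x, y)).1 < 0 → (E j (x, y)).2 < 0)
    (p5 : ∀ j y, y < 0 → (E j (0, y)).1 < 0 ∧ (E j (0, y)).2 = y)
    (p6 : ∀ j y, 0 ≤ y → (E j (ρ, y)).1 < 0)
    (p7 : ∀ j x y, 0 ≤ x → ρ < (E j (x, y)).1 → 0 ≤ (E j (x, y)).2) :
    ∃ w : J → ℝ × ℝ, ∀ j, 0 ≤ (w j).1 ∧ (w j).1 ≤ ρ ∧ E j (w j) = w (nx j) ∧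
      (s j = true → 0 < H j (w j)) ∧ (s j = false → H j (w j) < 0) := by
  -- choice of the constants K
  have hface : ∀ j, ∀ y, (∀ x, 0 ≤ x → x ≤ ρ → (E j (x, y)).1 < 0) →
      ∃ d : ℝ, 0 < d ∧ ∀ x, 0 ≤ x → x ≤ ρ → (E j (x, y)).1 ≤ -d := by
    intro j y h
    obtain ⟨z, hz, hzm⟩ := isCompact_Icc.exists_isMaxOn (s := Icc (0:ℝ) ρ) ⟨0, le_rfl, hρ.le⟩
      (f := fun x => (E j (x, y)).1) (by have := hE j; fun_prop)
    refine ⟨-(E j (z, y)).1, by linarith [h z hz.1 hz.2], fun x h1 h2 => ?_⟩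
    have := hzm (show x ∈ Icc 0 ρ from ⟨h1, h2⟩)
    simp at this
    linarith
  have hK : ∀ j, ∃ K : ℝ, 0 < K ∧ ∀ x, 0 ≤ x → x ≤ ρ → K * (E j (x, Y)).1 ≤ -Yn ∧
      K * (E j (x, -Yn)).1 ≤ -Yn := by
    intro j
    obtain ⟨d1, hd1, h1⟩ := hface j Y fun x a b => (p2 j x a b).2
    obtain ⟨d2, hd2, h2⟩ := hface j (-Yn) fun x a b => (p3 j x a b).2
    have g1 : 0 < Yn / d1 := div_pos hYn hd1
    have g2 : 0 < Yn / d2 := div_pos hYn hd2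
    refine ⟨Yn / d1 + Yn / d2, by positivity, fun x a b => ?_⟩
    have e1 : Yn / d1 * d1 = Yn := by field_simp
    have e2 : Yn / d2 * d2 = Yn := by field_simp
    have h1' := h1 x a b
    have h2' := h2 x a b
    constructor
    · nlinarith
    · nlinarith
  choose K hK0 hKb using hK
  let V : J → ℝ × ℝ → ℝ := fun j p => (E j p).2 - K j * max (-(E j p).1) 0
  have hV : ∀ j, Continuous (V j) := fun j => by have := hE j; simp only [V]; fun_prop
  have hVpos : ∀ j p, 0 ≤ (E j p).1 → V j p = (E j p).2 := fun j p h => by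
    simp only [V]; rw [max_eq_right (by linarith)]; ring
  have hVneg : ∀ j p, (E j p).1 < 0 → V j p = (E j p).2 + K j * (E j p).1 := fun j p h => by
    simp only [V]; rw [max_eq_left (by linarith)]; ring
  let cl : ℝ → ℝ := fun t => max 0 (min 1 t)
  have hcl : Continuous cl := by simp only [cl]; fun_prop
  have hcl0 : ∀ t, 0 ≤ cl t := fun t => le_max_left _ _
  have hcl1 : ∀ t, cl t ≤ 1 := fun t => max_le zero_le_one (min_le_left _ _)
  have hclid : ∀ t, 0 ≤ t → t ≤ 1 → cl t = t := fun t h0 h1 => by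
    simp only [cl]; rw [min_eq_right h1, max_eq_right h0]
  let P : (J × Bool → ℝ) → J → ℝ × ℝ := fun t j =>
    (ρ * cl (t (j, false)), -Yn + (Y + Yn) * cl (t (j, true)))
  have hPc : ∀ j, Continuous fun t => P t j := fun j => by simp only [P]; fun_prop
  have hPx0 : ∀ t j, 0 ≤ (P t j).1 := fun t j => mul_nonneg hρ.le (hcl0 _)
  have hPx1 : ∀ t j, (P t j).1 ≤ ρ := fun t j => mul_le_of_le_one_right hρ.le (hcl1 _)
  have hPy0 : ∀ t j, -Yn ≤ (P t j).2 := fun t j => by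
    have := mul_nonneg (show 0 ≤ Y + Yn by linarith) (hcl0 (t (j, true)))
    simp only [P]; linarith
  have hPy1 : ∀ t j, (P t j).2 ≤ Y := fun t j => by
    have := mul_le_of_le_one_right (show 0 ≤ Y + Yn by linarith) (hcl1 (t (j, true)))
    simp only [P]; linarith
  have hH0 : ∀ t j, H j (P t j) = 0 → max (V j (P t j)) (Y + 1) = V j (P t j) := by
    intro t j h
    have := p1 j (P t j).1 (P t j).2 (hPx0 t j) (hPx1 t j) h
    rw [hVpos _ _ this.1]
    exact max_eq_left this.2
  let A0 : J → (J × Bool → ℝ) → ℝ := fun j t =>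
    if H j (P t j) ≤ 0 then V j (P t j) else max (V j (P t j)) (Y + 1)
  let A1 : J → (J × Bool → ℝ) → ℝ := fun j t =>
    if 0 ≤ H j (P t j) then V j (P t j) else max (V j (P t j)) (Y + 1)
  have hVP : ∀ j, Continuous fun t => V j (P t j) := fun j => (hV j).comp (hPc j)
  have hHP : ∀ j, Continuous fun t => H j (P t j) := fun j => (hH j).comp (hPc j)
  have hA0 : ∀ j, Continuous (A0 j) := fun j => by
    refine Continuous.if_le (hVP j) ((hVP j).max continuous_const) (hHP j) continuous_const ?_
    intro t ht
    exact (hH0 t j ht).symm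
  have hA1 : ∀ j, Continuous (A1 j) := fun j => by
    refine Continuous.if_le (hVP j) ((hVP j).max continuous_const) continuous_const (hHP j) ?_
    intro t ht
    exact (hH0 t j ht.symm).symm
  let F : (J × Bool → ℝ) → (J × Bool → ℝ) := fun t i =>
    match i with
    | (j, false) => (P t j).1 - max 0 (min ρ (E (nx.symm j) (P t (nx.symm j))).1)
    | (j, true) => if s j then (P t (nx j)).2 - A1 j t else A0 j t - (P t (nx j)).2
  have hF : Continuous F := by
    refine continuous_pi ?_
    rintro ⟨j, b⟩
    cases b
    · have h1 := hPc j
      have h2 : Continuous fun t => E (nx.symm j) (P t (nx.symm j)) := (hE _).comp (hPc _)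
      simp only [F]
      fun_prop
    · have h1 := hPc (nx j)
      have h2 := hA0 j
      have h3 := hA1 j
      simp only [F]
      cases s j
      · simp only [Bool.false_eq_true, if_false]; fun_prop
      · simp only [if_true]; fun_prop
  obtain ⟨t, -, ht⟩ := pm_general F hF (by
    rintro t htb ⟨j, b⟩ hi
    cases b
    · simp only [F, P, hi]
      have : cl 0 = 0 := hclid 0 le_rfl zero_le_one
      rw [this]
      have := le_max_left 0 (min ρ (E (nx.symm j) (P t (nx.symm j))).1)
      simp only [P] at this
      linarith
    · have e1 : P t j = ((P t j).1, -Yn) := by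
        have : cl 0 = 0 := hclid 0 le_rfl zero_le_one
        simp only [P, hi, this]; simp
      have h3 := p3 j _ (hPx0 t j) (hPx1 t j)
      rw [← e1] at h3
      have h4 := (hKb j _ (hPx0 t j) (hPx1 t j)).2
      rw [← e1] at h4
      have h5 := p4 j (P t j).1 (P t j).2 (hPx0 t j) h3.2
      simp only [F]
      cases s j
      · simp only [Bool.false_eq_true, if_false, A0]
        rw [if_pos h3.1.le, hVneg _ _ h3.2]
        have := hPy0 t (nx j)
        simp only [Prod.mk.eta] at h5
        linarith
      · simp only [if_true, A1]
        rw [if_neg (not_le.2 h3.1)]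
        have := hPy1 t (nx j)
        have := le_max_right (V j (P t j)) (Y + 1)
        linarith) (by
    rintro t htb ⟨j, b⟩ hi
    cases b
    · simp only [F, P, hi]
      have : cl 1 = 1 := hclid 1 zero_le_one le_rfl
      rw [this]
      have : max 0 (min ρ (E (nx.symm j) (P t (nx.symm j))).1) ≤ ρ := max_le hρ.le (min_le_left _ _)
      simp only [P] at this
      linarith
    · have e1 : P t j = ((P t j).1, Y) := by
        have : cl 1 = 1 := hclid 1 zero_le_one le_rfl
        simp only [P, hi, this]; simp
      have h3 := p2 j _ (hPx0 t j) (hPx1 t j)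
      rw [← e1] at h3
      have h4 := (hKb j _ (hPx0 t j) (hPx1 t j)).1
      rw [← e1] at h4
      have h5 := p4 j (P t j).1 (P t j).2 (hPx0 t j) h3.2
      simp only [F]
      cases s j
      · simp only [Bool.false_eq_true, if_false, A0]
        rw [if_neg (not_le.2 h3.1)]
        have := hPy1 t (nx j)
        have := le_max_right (V j (P t j)) (Y + 1)
        linarith
      · simp only [if_true, A1]
        rw [if_pos h3.1.le, hVneg _ _ h3.2]
        have := hPy0 t (nx j)
        simp only [Prod.mk.eta] at h5
        linarith)
  have hx : ∀ j, (P t (nx j)).1 = max 0 (min ρ (E j (P t j)).1) := by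
    intro j
    have := congrFun ht (nx j, false)
    simp only [F, Equiv.symm_apply_apply, Pi.zero_apply] at this
    linarith
  have hy : ∀ j, V j (P t j) = (P t (nx j)).2 ∧ (s j = true → 0 < H j (P t j)) ∧
      (s j = false → H j (P t j) < 0) := by
    intro j
    have h := congrFun ht (j, true)
    simp only [F, Pi.zero_apply] at h
    have hb := hPy1 t (nx j)
    have hm := le_max_right (V j (P t j)) (Y + 1)
    cases hs : s j
    · simp only [hs, Bool.false_eq_true, if_false, A0] at h
      by_cases hH' : H j (P t j) ≤ 0
      · rw [if_pos hH'] at h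
        refine ⟨by linarith, by simp, fun _ => lt_of_le_of_ne hH' fun h0 => ?_⟩
        have := hH0 t j h0
        linarith
      · rw [if_neg hH'] at h
        linarith
    · simp only [hs, if_true, A1] at h
      by_cases hH' : 0 ≤ H j (P t j)
      · rw [if_pos hH'] at h
        refine ⟨by linarith, fun _ => lt_of_le_of_ne hH' fun h0 => ?_, by simp⟩
        have := hH0 t j h0.symm
        linarith
      · rw [if_neg hH'] at h
        linarith
  -- exclusion of dead steps
  have step : ∀ j, (E j (P t j)).1 < 0 → (P t (nx j)).1 = 0 ∧ (P t (nx j)).2 < 0 ∧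
      (E (nx j) (P t (nx j))).1 < 0 ∧ (P t (nx (nx j))).2 < (P t (nx j)).2 := by
    intro j h
    have h1 : (P t (nx j)).1 = 0 := by
      rw [hx, max_eq_left]
      exact (min_le_right _ _).trans h.le
    have h2 : (P t (nx j)).2 < 0 := by
      rw [← (hy j).1, hVneg _ _ h]
      have := p4 j (P t j).1 (P t j).2 (hPx0 t j) h
      simp only [Prod.mk.eta] at this
      have := mul_pos (hK0 j) (neg_pos.2 h)
      linarith
    have e : P t (nx j) = (0, (P t (nx j)).2) := by rw [← h1]
    have h3 := p5 (nx j) (P t (nx j)).2 h2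
    rw [← e] at h3
    refine ⟨h1, h2, h3.1, ?_⟩
    rw [← (hy (nx j)).1, hVneg _ _ h3.1, h3.2]
    have := mul_pos (hK0 (nx j)) (neg_pos.2 h3.1)
    linarith
  have nodead : ∀ j, 0 ≤ (E j (P t j)).1 := by
    by_contra hc
    push Not at hc
    obtain ⟨j0, hj0⟩ := hc
    classical
    obtain ⟨j, hj, hmin⟩ := Finset.exists_min_image
      (Finset.univ.filter fun j => (E j (P t j)).1 < 0) (fun j => (P t (nx j)).2) ⟨j0, by simpa using hj0⟩
    have hj' : (E j (P t j)).1 < 0 := by simpa using hj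
    obtain ⟨-, -, h3, h4⟩ := step j hj'
    have := hmin (nx j) (by simpa using h3)
    linarith
  have nobig : ∀ j, (E j (P t j)).1 ≤ ρ := by
    intro j
    by_contra hc
    push Not at hc
    have h1 : (P t (nx j)).1 = ρ := by
      rw [hx, min_eq_left hc.le, max_eq_right hρ.le]
    have h2 : (P t (nx j)).2 = (E j (P t j)).2 := by rw [← (hy j).1, hVpos _ _ (nodead j)]
    have h3 := p7 j (P t j).1 (P t j).2 (hPx0 t j) hc
    have h4 := p6 (nx j) (P t (nx j)).2 (by rw [h2]; exact h3)
    have e : P t (nx j) = (ρ, (P t (nx j)).2) := by rw [← h1]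
    rw [← e] at h4
    linarith [nodead (nx j)]
  refine ⟨fun j => P t j, fun j => ⟨hPx0 t j, hPx1 t j, ?_, (hy j).2.1, (hy j).2.2⟩⟩
  ext
  · rw [hx, min_eq_right (nobig j), max_eq_right (nodead j)]
  · rw [← (hy j).1, hVpos _ _ (nodead j)]


theorem gs_ubound {q f u v : ℝ → ℝ} (h : GSol q f u v) {s t k : ℝ} (hst : s ≤ t)
    (hk : ∀ r ∈ Icc s t, v r ≤ k) : u t ≤ u s + k * (t - s) := by
  have h1 := ((h.solOn s t).2.2 t right_mem_uIcc).1
  have h2 : ∫ r in s..t, v r ≤ ∫ r in s..t, k :=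
    intervalIntegral.integral_mono_on hst (h.2.1.intervalIntegrable _ _) (by simp) hk
  simp at h2
  linarith

theorem gs_lbound {q f u v : ℝ → ℝ} (h : GSol q f u v) {s t k : ℝ} (hst : s ≤ t)
    (hk : ∀ r ∈ Icc s t, k ≤ v r) : u s + k * (t - s) ≤ u t := by
  have h1 := ((h.solOn s t).2.2 t right_mem_uIcc).1
  have h2 : ∫ r in s..t, k ≤ ∫ r in s..t, v r :=
    intervalIntegral.integral_mono_on hst (by simp) (h.2.1.intervalIntegrable _ _) hk
  simp at h2
  linarith

theorem gs_ii {q f u v : ℝ → ℝ} (hq : LocallyIntegrable q volume) (hfc : Continuous f)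
    (h : GSol q f u v) (s t : ℝ) : IntervalIntegrable (fun r => q r * f (u r)) volume s t :=
  li_mul_ii hq (hfc.comp h.contu) s t

/-- positive weight -/
theorem gs_vlo {q f u v : ℝ → ℝ} (hq : LocallyIntegrable q volume) (hfc : Continuous f)
    (h : GSol q f u v) {s t k : ℝ} (hst : s ≤ t) (hs : ∀ᵐ r, r ∈ Icc s t → 0 ≤ q r)
    (hk : ∀ r ∈ Icc s t, f (u r) ≤ k) : v s - k * (∫ r in s..t, q r) ≤ v t := by
  have h1 := h.2.2 s t
  have h2 : ∫ r in s..t, q r * f (u r) ≤ ∫ r in s..t, q r * k := by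
    refine intervalIntegral.integral_mono_ae_restrict hst (gs_ii hq hfc h s t)
      ((li_ii hq s t).mul_const k) ?_
    refine (ae_restrict_iff' measurableSet_Icc).2 ?_
    filter_upwards [hs] with r hr hr2
    exact mul_le_mul_of_nonneg_left (hk r hr2) (hr hr2)
  rw [intervalIntegral.integral_mul_const] at h2
  linarith

theorem gs_vhi {q f u v : ℝ → ℝ} (hq : LocallyIntegrable q volume) (hfc : Continuous f)
    (h : GSol q f u v) {s t k : ℝ} (hst : s ≤ t) (hs : ∀ᵐ r, r ∈ Icc s t → 0 ≤ q r)
    (hk : ∀ r ∈ Icc s t, k ≤ f (u r)) : v t ≤ v s - k * (∫ r in s..t, q r) := by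
  have h1 := h.2.2 s t
  have h2 : ∫ r in s..t, q r * k ≤ ∫ r in s..t, q r * f (u r) := by
    refine intervalIntegral.integral_mono_ae_restrict hst ((li_ii hq s t).mul_const k)
      (gs_ii hq hfc h s t) ?_
    refine (ae_restrict_iff' measurableSet_Icc).2 ?_
    filter_upwards [hs] with r hr hr2
    exact mul_le_mul_of_nonneg_left (hk r hr2) (hr hr2)
  rw [intervalIntegral.integral_mul_const] at h2
  linarith

/-- negative weight -/
theorem gs_nhi {q f u v : ℝ → ℝ} (hq : LocallyIntegrable q volume) (hfc : Continuous f)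
    (h : GSol q f u v) {s t k : ℝ} (hst : s ≤ t) (hs : ∀ᵐ r, r ∈ Icc s t → q r ≤ 0)
    (hk : ∀ r ∈ Icc s t, f (u r) ≤ k) : v t ≤ v s - k * (∫ r in s..t, q r) := by
  have h1 := h.2.2 s t
  have h2 : ∫ r in s..t, q r * k ≤ ∫ r in s..t, q r * f (u r) := by
    refine intervalIntegral.integral_mono_ae_restrict hst ((li_ii hq s t).mul_const k)
      (gs_ii hq hfc h s t) ?_
    refine (ae_restrict_iff' measurableSet_Icc).2 ?_
    filter_upwards [hs] with r hr hr2
    exact mul_le_mul_of_nonpos_left (hk r hr2) (hr hr2)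
  rw [intervalIntegral.integral_mul_const] at h2
  linarith

theorem gs_nlo {q f u v : ℝ → ℝ} (hq : LocallyIntegrable q volume) (hfc : Continuous f)
    (h : GSol q f u v) {s t k : ℝ} (hst : s ≤ t) (hs : ∀ᵐ r, r ∈ Icc s t → q r ≤ 0)
    (hk : ∀ r ∈ Icc s t, k ≤ f (u r)) : v s - k * (∫ r in s..t, q r) ≤ v t := by
  have h1 := h.2.2 s t
  have h2 : ∫ r in s..t, q r * f (u r) ≤ ∫ r in s..t, q r * k := by
    refine intervalIntegral.integral_mono_ae_restrict hst (gs_ii hq hfc h s t)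
      ((li_ii hq s t).mul_const k) ?_
    refine (ae_restrict_iff' measurableSet_Icc).2 ?_
    filter_upwards [hs] with r hr hr2
    exact mul_le_mul_of_nonpos_left (hk r hr2) (hr hr2)
  rw [intervalIntegral.integral_mul_const] at h2
  linarith

theorem ae_sub {p : ℝ → Prop} {s t s' t' : ℝ} (h : ∀ᵐ r, r ∈ Icc s t → p r) (h1 : s ≤ s') (h2 : t' ≤ t) :
    ∀ᵐ r, r ∈ Icc s' t' → p r := by
  filter_upwards [h] with r hr hr2
  exact hr ⟨h1.trans hr2.1, hr2.2.trans h2⟩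

/-- standing assumptions on the (truncated) nonlinearity and weight -/
structure Base (q f : ℝ → ℝ) : Prop where
  hq : LocallyIntegrable q volume
  hfc : Continuous f
  hlip : ∃ Λ : ℝ, 0 ≤ Λ ∧ ∀ x y, |f x - f y| ≤ Λ * |x - y|
  hneg : ∀ x ≤ 0, f x = 0
  hpos : ∀ x, 0 ≤ f x

theorem Base.lin {q f u v : ℝ → ℝ} (b : Base q f) (h : GSol q f u v) {ξ : ℝ} (hu : u ξ ≤ 0)
    (hv : v ξ ≤ 0) {t : ℝ} (ht : ξ ≤ t) : u t = u ξ + v ξ * (t - ξ) ∧ v t = v ξ := by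
  obtain ⟨Λ, h0, hl⟩ := b.hlip
  refine gsol_uniq b.hq h0 hl b.hfc (u2 := fun t => u ξ + v ξ * (t - ξ)) (v2 := fun _ => v ξ)
    (h.solOn ξ t) ?_ (by simp) rfl
  refine ⟨by fun_prop, by fun_prop, fun s hs => ⟨by simp; ring, ?_⟩⟩
  have : ∫ r in ξ..s, q r * f (u ξ + v ξ * (r - ξ)) = ∫ r in ξ..s, (0:ℝ) := by
    refine intervalIntegral.integral_congr fun r hr => ?_
    rw [uIcc_of_le ht] at hs
    rw [uIcc_of_le hs.1] at hr
    rw [b.hneg, mul_zero]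
    have := mul_nonneg_of_nonpos_of_nonpos hv (show -(r - ξ) ≤ 0 by linarith [hr.1])
    linarith
  rw [this]; simp

theorem Base.dead {q f u v : ℝ → ℝ} (b : Base q f) (h : GSol q f u v) {c t : ℝ} (hct : c ≤ t)
    (hu : 0 ≤ u c) (ht : u t < 0) : ∃ ξ ∈ Icc c t, u ξ < 0 ∧ v ξ < 0 := by
  have hcl : IsCompact {r | r ∈ Icc c t ∧ 0 ≤ u r} :=
    isCompact_Icc.of_isClosed_subset
      (isClosed_Icc.inter (isClosed_le continuous_const h.contu)) (fun r hr => hr.1)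
  obtain ⟨ζ, hζ, hmax⟩ := hcl.exists_isMaxOn ⟨c, ⟨le_rfl, hct⟩, hu⟩ continuous_id.continuousOn
  have hlt : ζ < t := lt_of_le_of_ne hζ.1.2 (fun e => by have := hζ.2; rw [e] at this; linarith)
  obtain ⟨ξ, hξ, e⟩ := exists_hasDerivAt_eq_slope u v hlt h.contu.continuousOn (fun x _ => h.1 x)
  refine ⟨ξ, ⟨hζ.1.1.trans hξ.1.le, hξ.2.le⟩, ?_, ?_⟩
  · by_contra hc
    have := hmax ⟨⟨hζ.1.1.trans hξ.1.le, hξ.2.le⟩, not_lt.1 hc⟩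
    simp at this
    linarith [hξ.1]
  · rw [e]
    refine div_neg_of_neg_of_pos ?_ (by linarith)
    have := hζ.2
    linarith

theorem Base.dead' {q f u v : ℝ → ℝ} (b : Base q f) (h : GSol q f u v) {c t t' : ℝ} (hct : c ≤ t)
    (htt : t ≤ t') (hu : 0 ≤ u c) (ht : u t < 0) : u t' < 0 ∧ v t' < 0 := by
  obtain ⟨ξ, hξ, h1, h2⟩ := b.dead h hct hu ht
  obtain ⟨e1, e2⟩ := b.lin h h1.le h2.le (hξ.2.trans htt)
  rw [e1, e2]
  refine ⟨?_, h2⟩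
  have := mul_nonneg (neg_nonneg.2 h2.le) (show 0 ≤ t' - ξ by linarith [hξ.2])
  linarith

theorem Base.vmono {q f u v : ℝ → ℝ} (b : Base q f) (h : GSol q f u v) {s t : ℝ} (hst : s ≤ t)
    (hs : ∀ᵐ r, r ∈ Icc s t → q r ≤ 0) : v s ≤ v t := by
  have := gs_nlo b.hq b.hfc h hst hs (k := 0) (fun r _ => b.hpos _)
  linarith

theorem Base.vanti {q f u v : ℝ → ℝ} (b : Base q f) (h : GSol q f u v) {s t : ℝ} (hst : s ≤ t)
    (hs : ∀ᵐ r, r ∈ Icc s t → 0 ≤ q r) : v t ≤ v s := by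
  have := gs_vhi b.hq b.hfc h hst hs (k := 0) (fun r _ => b.hpos _)
  linarith

/-- a priori bound on a positive hump -/
theorem Base.apriori {q f u v : ℝ → ℝ} (b : Base q f) (h : GSol q f u v) {σ α β τ δ M s0 R : ℝ}
    (h1 : σ < α) (h2 : α ≤ β) (h3 : β < τ) (hs : ∀ᵐ r, r ∈ Icc σ τ → 0 ≤ q r)
    (hδ : 0 < δ) (hδ1 : δ * (τ - σ) ≤ α - σ) (hδ2 : δ * (τ - σ) ≤ τ - β)
    (hM : ∀ s, s0 ≤ s → M * s ≤ f s) (hM0 : 0 ≤ M)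
    (hMi : 1 / (α - σ) + 1 / (τ - β) < M * δ * ∫ r in α..β, q r) (hR0 : 0 ≤ R) (hR : s0 ≤ δ * R)
    (hu : ∀ t ∈ Icc σ τ, 0 ≤ u t) : ∀ t ∈ Icc σ τ, u t ≤ R := by
  have hστ : σ < τ := by linarith
  obtain ⟨z, hz, hzm⟩ := isCompact_Icc.exists_isMaxOn (s := Icc σ τ) ⟨σ, left_mem_Icc.2 hστ.le⟩
    h.contu.continuousOn
  have hzm' : ∀ t ∈ Icc σ τ, u t ≤ u z := fun t ht => hzm ht
  intro t ht
  refine (hzm' t ht).trans ?_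
  by_contra hc
  push Not at hc
  set H := u z with hH
  have hH0 : 0 < H := lt_of_le_of_lt hR0 hc
  have anti : ∀ x ∈ Icc σ τ, ∀ y ∈ Icc σ τ, x ≤ y → v y ≤ v x := fun x hx y hy hxy =>
    b.vanti h hxy (ae_sub hs hx.1 hy.2)
  have up : ∀ x ∈ Icc σ τ, ∀ y ∈ Icc σ τ, x ≤ y → u y ≤ u x + v x * (y - x) := fun x hx y hy hxy =>
    gs_ubound h hxy fun r hr => anti x hx r ⟨hx.1.trans hr.1, hr.2.trans hy.2⟩ hr.1
  have lo : ∀ x ∈ Icc σ τ, ∀ y ∈ Icc σ τ, x ≤ y → u x + v y * (y - x) ≤ u y := fun x hx y hy hxy =>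
    gs_lbound h hxy fun r hr => anti r ⟨hx.1.trans hr.1, hr.2.trans hy.2⟩ y hy hr.2
  have hσm : σ ∈ Icc σ τ := left_mem_Icc.2 hστ.le
  have hτm : τ ∈ Icc σ τ := right_mem_Icc.2 hστ.le
  have key : ∀ t ∈ Icc α β, δ * H ≤ u t := by
    intro t ht
    have htm : t ∈ Icc σ τ := ⟨by linarith [ht.1], by linarith [ht.2]⟩
    have hut := hu t htm
    rcases le_total t z with htz | htz
    · have e1 := up t htm z hz htz
      have e2 := lo σ hσm t htm htm.1
      have e3 := hu σ hσm
      by_cases hv : v t ≤ 0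
      · have : v t * (z - t) ≤ 0 := mul_nonpos_of_nonpos_of_nonneg hv (by linarith)
        have hδ' : δ ≤ 1 := by
          by_contra hx
          push Not at hx
          nlinarith
        have : δ * H ≤ 1 * H := mul_le_mul_of_nonneg_right hδ' hH0.le
        linarith
      · push Not at hv
        have f1 : H - u t ≤ v t * (z - t) := by linarith
        have f2 : v t * (t - σ) ≤ u t := by linarith
        have hp : 0 < t - σ := by linarith [ht.1]
        have hzt : 0 ≤ z - t := by linarith
        have f3 : (H - u t) * (t - σ) ≤ u t * (z - t) := by
          calc (H - u t) * (t - σ) ≤ v t * (z - t) * (t - σ) := mul_le_mul_of_nonneg_right f1 hp.le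
            _ = v t * (t - σ) * (z - t) := by ring
            _ ≤ _ := mul_le_mul_of_nonneg_right f2 hzt
        have f4 : H * (t - σ) ≤ u t * (τ - σ) := by
          have : u t * (z - σ) ≤ u t * (τ - σ) := mul_le_mul_of_nonneg_left (by linarith [hz.2]) hut
          nlinarith
        have f5 : H * (δ * (τ - σ)) ≤ H * (t - σ) :=
          mul_le_mul_of_nonneg_left (by linarith [ht.1]) hH0.le
        have : (δ * H) * (τ - σ) ≤ u t * (τ - σ) := by linarith
        exact le_of_mul_le_mul_right this (by linarith)
    · have e1 := lo z hz t htm htz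
      have e2 := up t htm τ hτm htm.2
      have e3 := hu τ hτm
      by_cases hv : 0 ≤ v t
      · have : 0 ≤ v t * (t - z) := mul_nonneg hv (by linarith)
        have hδ' : δ ≤ 1 := by
          by_contra hx
          push Not at hx
          nlinarith
        have : δ * H ≤ 1 * H := mul_le_mul_of_nonneg_right hδ' hH0.le
        linarith
      · push Not at hv
        have f1 : H - u t ≤ (-v t) * (t - z) := by linarith
        have f2 : (-v t) * (τ - t) ≤ u t := by linarith
        have hp : 0 < τ - t := by linarith [ht.2]
        have hzt : 0 ≤ t - z := by linarith
        have f3 : (H - u t) * (τ - t) ≤ u t * (t - z) := by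
          calc (H - u t) * (τ - t) ≤ (-v t) * (t - z) * (τ - t) := mul_le_mul_of_nonneg_right f1 hp.le
            _ = (-v t) * (τ - t) * (t - z) := by ring
            _ ≤ _ := mul_le_mul_of_nonneg_right f2 hzt
        have f4 : H * (τ - t) ≤ u t * (τ - σ) := by
          have : u t * (τ - z) ≤ u t * (τ - σ) := mul_le_mul_of_nonneg_left (by linarith [hz.1]) hut
          nlinarith
        have f5 : H * (δ * (τ - σ)) ≤ H * (τ - t) :=
          mul_le_mul_of_nonneg_left (by linarith [ht.2]) hH0.le
        have : (δ * H) * (τ - σ) ≤ u t * (τ - σ) := by linarith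
        exact le_of_mul_le_mul_right this (by linarith)
  have hα : α ∈ Icc σ τ := ⟨h1.le, by linarith⟩
  have hβ : β ∈ Icc σ τ := ⟨by linarith, h3.le⟩
  have k1 := gs_vhi b.hq b.hfc h h2 (ae_sub hs h1.le h3.le) (k := M * (δ * H)) (fun r hr => by
    have := key r hr
    have h5 : δ * R ≤ δ * H := mul_le_mul_of_nonneg_left hc.le hδ.le
    exact (mul_le_mul_of_nonneg_left this hM0).trans (hM _ (by linarith)))
  have k2 : v α ≤ H * (1 / (α - σ)) := by
    have := lo σ hσm α hα h1.le
    have e3 := hu σ hσm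
    have e4 := hzm' α hα
    rw [mul_one_div, le_div_iff₀ (by linarith)]
    linarith
  have k3 : -v β ≤ H * (1 / (τ - β)) := by
    have := up β hβ τ hτm h3.le
    have e3 := hu τ hτm
    have e4 := hzm' β hβ
    rw [mul_one_div, le_div_iff₀ (by linarith)]
    linarith
  have k4 := mul_lt_mul_of_pos_left hMi hH0
  have k5 : H * (M * δ * ∫ r in α..β, q r) = M * (δ * H) * ∫ r in α..β, q r := by ring
  rw [k5] at k4
  linarith

structure Hump (q f : ℝ → ℝ) (c σ τ c' R G r e η Y Yn : ℝ) : Prop extends Base q f where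
  h1 : c < σ
  h2 : σ < τ
  h3 : τ < c'
  q1 : ∀ᵐ r, r ∈ Icc c σ → q r ≤ 0
  q2 : ∀ᵐ r, r ∈ Icc σ τ → 0 ≤ q r
  q3 : ∀ᵐ r, r ∈ Icc τ c' → q r ≤ 0
  r0 : 0 < r
  rR : r ≤ R
  e0 : 0 ≤ e
  η0 : 0 < η
  G0 : 0 ≤ G
  fG : ∀ s ≤ R, f s ≤ G
  fe : ∀ s ≤ r, f s ≤ e
  fη : ∀ s, r / 4 ≤ s → η ≤ f s
  ap : ∀ u v, GSol q f u v → (∀ t ∈ Icc σ τ, 0 ≤ u t) → ∀ t ∈ Icc σ τ, u t ≤ R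
  c1 : G * (∫ r in σ..τ, q r) + R / (τ - σ) < Y
  c2 : r < (τ - σ) * Y
  c3 : Y ≤ η * -∫ r in c..σ, q r
  c4 : Y + 1 + e * (∫ r in σ..τ, q r) ≤ η * -∫ r in τ..c', q r
  c5 : e * (∫ r in σ..τ, q r) * (τ - σ) ≤ r / 2
  c6 : e * (∫ r in σ..τ, q r) * (c' - τ) ≤ r / 4
  c7 : G * (-∫ r in c..σ, q r) + 2 * (r / (σ - c)) + 1 ≤ Yn

section
variable {q f : ℝ → ℝ} {c σ τ c' R G r e η Y Yn : ℝ} {u v : ℝ → ℝ}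

theorem Hump.intpos (H : Hump q f c σ τ c' R G r e η Y Yn) : 0 ≤ ∫ r in σ..τ, q r := by
  refine intervalIntegral.integral_nonneg_of_ae_restrict H.h2.le ?_
  exact (ae_restrict_iff' measurableSet_Icc).2 H.q2

theorem Hump.intneg (H : Hump q f c σ τ c' R G r e η Y Yn) {t : ℝ} (ht : t ∈ Icc c σ) :
    0 ≤ - ∫ r in c..t, q r := by
  rw [← intervalIntegral.integral_neg]
  refine intervalIntegral.integral_nonneg_of_ae_restrict ht.1 ?_
  refine (ae_restrict_iff' measurableSet_Icc).2 ?_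
  filter_upwards [H.q1] with r hr hr2
  have := hr ⟨hr2.1, hr2.2.trans ht.2⟩
  simpa using this

theorem Hump.Ypos (H : Hump q f c σ τ c' R G r e η Y Yn) : 0 < Y := by
  by_contra hc
  have := H.c2
  have := H.r0
  have := H.h2
  nlinarith

theorem Hump.int_small (H : Hump q f c σ τ c' R G r e η Y Yn) {s t : ℝ} (hs : σ ≤ s) (hst : s ≤ t)
    (ht : t ≤ τ) : ∫ r in s..t, q r ≤ ∫ r in σ..τ, q r := by
  refine intervalIntegral.integral_mono_interval hs hst ht ?_ (li_ii H.hq _ _)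
  refine (ae_restrict_iff' measurableSet_Ioc).2 ?_
  filter_upwards [H.q2] with r hr hr2
  exact hr ⟨hr2.1.le, hr2.2⟩

theorem Hump.die (H : Hump q f c σ τ c' R G r e η Y Yn) (h : GSol q f u v) (hu : 0 ≤ u σ)
    (hv : Y ≤ v σ) : u c' < 0 := by
  by_contra hc
  have hnn : ∀ t ∈ Icc σ τ, 0 ≤ u t := by
    intro t ht
    by_contra hn
    exact hc (H.dead' h ht.1 (ht.2.trans H.h3.le) hu (not_le.1 hn)).1
  have hR := H.ap u v h hnn
  have hA := H.intpos
  have : ∀ t ∈ Icc σ τ, Y - G * (∫ r in σ..τ, q r) ≤ v t := by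
    intro t ht
    have := gs_vlo H.hq H.hfc h ht.1 (ae_sub H.q2 le_rfl ht.2) (k := G) (fun r hr =>
      H.fG _ (hR r ⟨hr.1, hr.2.trans ht.2⟩))
    have h2 := H.int_small le_rfl ht.1 ht.2
    have h3 := mul_le_mul_of_nonneg_left h2 H.G0
    linarith
  have h2 := gs_lbound h H.h2.le this
  have h3 := hR τ (right_mem_Icc.2 H.h2.le)
  have h4 := H.c1
  have h5 : 0 < τ - σ := by linarith [H.h2]
  have h6 : R / (τ - σ) * (τ - σ) = R := by field_simp
  have h7 : R / (τ - σ) * (τ - σ) < (Y - G * (∫ r in σ..τ, q r)) * (τ - σ) :=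
    mul_lt_mul_of_pos_right (by linarith) h5
  linarith

theorem Hump.p2 (H : Hump q f c σ τ c' R G r e η Y Yn) (h : GSol q f u v) (hu : 0 ≤ u c)
    (hv : v c = Y) : r < u σ + (τ - σ) * v σ ∧ u c' < 0 := by
  have hY := H.Ypos
  have m : ∀ t ∈ Icc c σ, Y ≤ v t := fun t ht => by
    rw [← hv]; exact H.vmono h ht.1 (ae_sub H.q1 le_rfl ht.2)
  have h1 := gs_lbound h H.h1.le m
  have h2 := m σ (right_mem_Icc.2 H.h1.le)
  have h3 : 0 ≤ Y * (σ - c) := mul_nonneg hY.le (by linarith [H.h1])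
  have h4 : (τ - σ) * Y ≤ (τ - σ) * v σ := mul_le_mul_of_nonneg_left h2 (by linarith [H.h2])
  exact ⟨by linarith [H.c2], H.die h (by linarith) h2⟩

theorem Hump.p6 (H : Hump q f c σ τ c' R G r e η Y Yn) (h : GSol q f u v) (hu : u c = r / 4)
    (hv : 0 ≤ v c) : u c' < 0 := by
  have m : ∀ t ∈ Icc c σ, 0 ≤ v t := fun t ht => hv.trans
    (H.vmono h ht.1 (ae_sub H.q1 le_rfl ht.2))
  have h1 : ∀ t ∈ Icc c σ, r / 4 ≤ u t := fun t ht => by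
    have := gs_lbound h ht.1 (fun r hr => m r ⟨hr.1, hr.2.trans ht.2⟩)
    linarith
  have h2 := gs_nlo H.hq H.hfc h H.h1.le H.q1 (fun r hr => H.fη _ (h1 r hr))
  have := H.r0
  have := h1 σ (right_mem_Icc.2 H.h1.le)
  exact H.die h (by linarith) (by linarith [H.c3])

theorem Hump.p1 (H : Hump q f c σ τ c' R G r e η Y Yn) (h : GSol q f u v) (hu : 0 ≤ u c)
    (hu1 : u c ≤ r / 4) (hH : u σ + (τ - σ) * v σ = r) : 0 ≤ u c' ∧ Y + 1 ≤ v c' := by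
  have hr := H.r0
  have hL : 0 < τ - σ := by linarith [H.h2]
  have hv0 : 0 ≤ v σ := by
    by_contra hc
    push Not at hc
    have := gs_ubound h H.h1.le (fun t ht => H.vmono h ht.2 (ae_sub H.q1 ht.1 le_rfl))
    have h2 : v σ * (σ - c) ≤ 0 := mul_nonpos_of_nonpos_of_nonneg hc.le (by linarith [H.h1])
    have h3 : (τ - σ) * v σ ≤ 0 := mul_nonpos_of_nonneg_of_nonpos hL.le hc.le
    linarith
  have hu0 : 0 ≤ u σ := by
    by_contra hc
    have := (H.dead' h H.h1.le le_rfl hu (not_le.1 hc)).2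
    linarith
  have hur : ∀ t ∈ Icc σ τ, u t ≤ r := by
    intro t ht
    have := gs_ubound h ht.1 (fun s hs => H.vanti h hs.1 (ae_sub H.q2 le_rfl (hs.2.trans ht.2)))
    have h2 : v σ * (t - σ) ≤ v σ * (τ - σ) := mul_le_mul_of_nonneg_left (by linarith [ht.2]) hv0
    linarith
  have hA := H.intpos
  have hvt : ∀ t ∈ Icc σ τ, v σ - e * (∫ r in σ..τ, q r) ≤ v t := by
    intro t ht
    have := gs_vlo H.hq H.hfc h ht.1 (ae_sub H.q2 le_rfl ht.2) (k := e) (fun s hs =>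
      H.fe _ (hur s ⟨hs.1, hs.2.trans ht.2⟩))
    have h2 := H.int_small le_rfl ht.1 ht.2
    have h3 := mul_le_mul_of_nonneg_left h2 H.e0
    linarith
  have h5 := gs_lbound h H.h2.le hvt
  have h6 := H.c5
  have huτ : r / 2 ≤ u τ := by linarith
  have hvτ : - (e * (∫ r in σ..τ, q r)) ≤ v τ := by
    have := hvt τ (right_mem_Icc.2 H.h2.le)
    linarith
  have hvc : ∀ t ∈ Icc τ c', - (e * (∫ r in σ..τ, q r)) ≤ v t := fun t ht => hvτ.trans
    (H.vmono h ht.1 (ae_sub H.q3 le_rfl ht.2))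
  have huc : ∀ t ∈ Icc τ c', r / 4 ≤ u t := by
    intro t ht
    have := gs_lbound h ht.1 (fun s hs => hvc s ⟨hs.1, hs.2.trans ht.2⟩)
    have h7 := H.c6
    have h8 := mul_le_mul_of_nonneg_left (show t - τ ≤ c' - τ by linarith [ht.2])
      (mul_nonneg H.e0 hA)
    linarith
  have h9 := gs_nlo H.hq H.hfc h H.h3.le H.q3 (fun s hs => H.fη _ (huc s hs))
  have h10 := H.c4
  have := huc c' (right_mem_Icc.2 H.h3.le)
  exact ⟨by linarith, by linarith⟩

theorem Hump.p3 (H : Hump q f c σ τ c' R G r e η Y Yn) (h : GSol q f u v) (hu : 0 ≤ u c)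
    (hu1 : u c ≤ r / 4) (hv : v c = -Yn) : u σ + (τ - σ) * v σ < r ∧ u c' < 0 := by
  have hr := H.r0
  have hl : 0 < σ - c := by linarith [H.h1]
  set κ := r / (σ - c) with hκ
  have hκ0 : 0 < κ := div_pos hr hl
  have hB := H.intneg (right_mem_Icc.2 H.h1.le)
  have hGB := mul_nonneg H.G0 hB
  have c7 := H.c7
  have hvσ : v σ ≤ -κ := by
    by_contra hc
    push Not at hc
    obtain ⟨t, ht, hte⟩ := intermediate_value_Icc H.h1.le h.2.1.continuousOn
      (show -κ ∈ Icc (v c) (v σ) from ⟨by linarith, hc.le⟩)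
    have hm : ∀ s ∈ Icc c t, v s ≤ 0 := fun s hs => by
      have := H.vmono h hs.2 (ae_sub H.q1 hs.1 ht.2)
      linarith
    have hus : ∀ s ∈ Icc c t, u s ≤ R := fun s hs => by
      have := gs_ubound h hs.1 (fun x hx => hm x ⟨hx.1, hx.2.trans hs.2⟩)
      have := H.rR
      linarith
    have h2 := gs_nhi H.hq H.hfc h ht.1 (ae_sub H.q1 le_rfl ht.2) (fun s hs => H.fG _ (hus s hs))
    have h3 : - (∫ r in c..t, q r) ≤ -∫ r in c..σ, q r := by
      have i := intervalIntegral.integral_mono_interval (f := fun r => - q r) (μ := volume)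
        le_rfl ht.1 ht.2 ?_ (li_ii H.hq c σ).neg
      · rw [intervalIntegral.integral_neg, intervalIntegral.integral_neg] at i
        exact i
      · refine (ae_restrict_iff' measurableSet_Ioc).2 ?_
        filter_upwards [H.q1] with r hr hr2
        have := hr ⟨hr2.1.le, hr2.2⟩
        simpa using this
    have h4 := mul_le_mul_of_nonneg_left h3 H.G0
    linarith
  have h5 := gs_ubound h H.h1.le (k := -κ) (fun t ht =>
    (H.vmono h ht.2 (ae_sub H.q1 ht.1 le_rfl)).trans hvσ)
  have h6 : κ * (σ - c) = r := by rw [hκ]; field_simp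
  have h7 : u σ < 0 := by linarith
  have h8 : (τ - σ) * v σ ≤ 0 :=
    mul_nonpos_of_nonneg_of_nonpos (by linarith [H.h2]) (by linarith)
  exact ⟨by linarith, (H.dead' h H.h1.le (H.h2.trans H.h3).le hu h7).1⟩

theorem Hump.p7 (H : Hump q f c σ τ c' R G r e η Y Yn) (h : GSol q f u v) (hu : 0 ≤ u c)
    (hu1 : r / 4 < u c') : 0 ≤ v c' := by
  by_contra hc
  push Not at hc
  have hr := H.r0
  have hnn : ∀ t ∈ Icc σ τ, 0 ≤ u t := by
    intro t ht
    by_contra hn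
    have := (H.dead' h (H.h1.le.trans ht.1) (ht.2.trans H.h3.le) hu (not_le.1 hn)).1
    linarith
  have hR := H.ap u v h hnn
  have hm : ∀ t ∈ Icc τ c', v t ≤ 0 := fun t ht => by
    have := H.vmono h ht.2 (ae_sub H.q3 ht.1 le_rfl)
    linarith
  have hut : ∀ t ∈ Icc τ c', r / 4 ≤ u t := fun t ht => by
    have := gs_ubound h ht.2 (fun x hx => hm x ⟨ht.1.trans hx.1, hx.2⟩)
    linarith
  have h9 := gs_nlo H.hq H.hfc h H.h3.le H.q3 (fun s hs => H.fη _ (hut s hs))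
  have c4 := H.c4
  have c1 := H.c1
  have hA := H.intpos
  have heA := mul_nonneg H.e0 hA
  have hvs : ∀ t ∈ Icc σ τ, v t ≤ - (R / (τ - σ)) := by
    intro t ht
    have := gs_vlo H.hq H.hfc h ht.2 (ae_sub H.q2 ht.1 le_rfl) (k := G) (fun s hs =>
      H.fG _ (hR s ⟨ht.1.trans hs.1, hs.2⟩))
    have h2 := H.int_small ht.1 ht.2 le_rfl
    have h3 := mul_le_mul_of_nonneg_left h2 H.G0
    linarith
  have h10 := gs_ubound h H.h2.le hvs
  have h5 : 0 < τ - σ := by linarith [H.h2]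
  have h6 : R / (τ - σ) * (τ - σ) = R := by field_simp
  have h11 := hR σ (left_mem_Icc.2 H.h2.le)
  have h12 := hut τ (left_mem_Icc.2 H.h3.le)
  linarith
end


theorem GSol.shift {q f u v : ℝ → ℝ} (h : GSol q f u v) {S : ℝ} (hq : Function.Periodic q S) :
    GSol q f (fun t => u (t + S)) (fun t => v (t + S)) := by
  refine ⟨fun t => (h.1 (t + S)).comp_add_const t S, by have := h.2.1; fun_prop, fun s t => ?_⟩
  have h1 := h.2.2 (s + S) (t + S)
  simp only
  rw [h1, ← intervalIntegral.integral_comp_add_right (fun r => q r * f (u r)) S]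
  simp only [hq _]

theorem GSol.eq_of {q f u1 v1 u2 v2 : ℝ → ℝ} (b : Base q f) (h1 : GSol q f u1 v1)
    (h2 : GSol q f u2 v2) {c : ℝ} (hu : u1 c = u2 c) (hv : v1 c = v2 c) (t : ℝ) :
    u1 t = u2 t ∧ v1 t = v2 t := by
  obtain ⟨Λ, h0, hl⟩ := b.hlip
  exact gsol_uniq b.hq h0 hl b.hfc (h1.solOn c t) (h2.solOn c t) hu hv

theorem per_sol {q f : ℝ → ℝ} {c σ τ : ℕ → ℝ} {R G r e η Y Yn S : ℝ} {N : ℕ} (hN : 0 < N)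
    (hS : 0 < S) (hqS : Function.Periodic q S)
    (hH : ∀ j, Hump q f (c j) (σ j) (τ j) (c (j + 1)) R G r e η Y Yn)
    (hc : ∀ j, c (j + N) = c j + S) (hσ : ∀ j, σ (j + N) = σ j + S)
    (hτ : ∀ j, τ (j + N) = τ j + S)
    (s : ℕ → Bool) (hs : ∀ j, s (j + N) = s j) (hs1 : ∃ j, s j = true) :
    ∃ u v, GSol q f u v ∧ Function.Periodic u S ∧ Function.Periodic v S ∧ (∀ t, 0 < u t) ∧
      (∀ t, u t ≤ R) ∧
      ∀ j, s j = true ↔ r < u (σ j) + (τ j - σ j) * v (σ j) := by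
  have b : Base q f := (hH 0).toBase
  have hr := (hH 0).r0
  obtain ⟨Λ, hΛ, hlip⟩ := b.hlip
  have hex : ∀ (t0 : ℝ) (p : ℝ × ℝ), ∃ u v, GSol q f u v ∧ u t0 = p.1 ∧ v t0 = p.2 := fun t0 p =>
    sol_exists b.hq hΛ hlip b.hfc (b.hneg 0 le_rfl) t0 p.1 p.2
  choose U V hUV using hex
  have hdep : ∀ t0 t, Continuous fun p => (U t0 p t, V t0 p t) := fun t0 t =>
    gsol_dep b.hq hΛ hlip t0 t (U t0) (V t0) (hUV t0) b.hfc
  have : NeZero N := ⟨hN.ne'⟩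
  have hsh : ∀ n : ℕ, ∀ j, c (j + n * N) = c j + n * S ∧ σ (j + n * N) = σ j + n * S ∧
      τ (j + n * N) = τ j + n * S ∧ s (j + n * N) = s j := by
    intro n
    induction n with
    | zero => intro j; simp
    | succ n ih =>
      intro j
      have e : j + (n + 1) * N = (j + n * N) + N := by ring
      obtain ⟨i1, i2, i3, i4⟩ := ih j
      rw [e, hc, hσ, hτ, hs, i1, i2, i3, i4]
      push_cast
      refine ⟨by ring, by ring, by ring, rfl⟩
  obtain ⟨w, hw⟩ := chain_lemma (J := Fin N) (Equiv.addRight 1) (fun j => s j)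
    (fun j p => (U (c j) p (c (j + 1)), V (c j) p (c (j + 1))))
    (fun j p => U (c j) p (σ j) + (τ j - σ j) * V (c j) p (σ j) - r)
    (fun j => hdep _ _)
    (fun j => by
      have h1 := hdep (c j) (σ j)
      have h2 := h1.fst
      have h3 := h1.snd
      simp only at h2 h3
      fun_prop) (r / 4) Y Yn (by linarith) (hH 0).Ypos (by
      have h0 := hH 0
      have := mul_nonneg h0.G0 (h0.intneg (right_mem_Icc.2 h0.h1.le))
      have h2 : 0 < r / (σ 0 - c 0) := div_pos hr (by linarith [h0.h1])
      have := h0.c7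
      linarith)
    (fun j x y h1 h2 h3 => by
      obtain ⟨g, e1, e2⟩ := hUV (c j) (x, y)
      exact (hH j).p1 g (by rw [e1]; exact h1) (by rw [e1]; exact h2) (by linarith))
    (fun j x h1 h2 => by
      obtain ⟨g, e1, e2⟩ := hUV (c j) (x, Y)
      have := (hH j).p2 g (by rw [e1]; exact h1) e2
      exact ⟨by linarith [this.1], this.2⟩)
    (fun j x h1 h2 => by
      obtain ⟨g, e1, e2⟩ := hUV (c j) (x, -Yn)
      have := (hH j).p3 g (by rw [e1]; exact h1) (by rw [e1]; exact h2) e2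
      exact ⟨by linarith [this.1], this.2⟩)
    (fun j x y h1 h2 => by
      obtain ⟨g, e1, e2⟩ := hUV (c j) (x, y)
      exact (b.dead' g ((hH j).h1.trans ((hH j).h2.trans (hH j).h3)).le le_rfl
        (by rw [e1]; exact h1) h2).2)
    (fun j y h1 => by
      obtain ⟨g, e1, e2⟩ := hUV (c j) (0, y)
      have hlt := (hH j).h1.trans ((hH j).h2.trans (hH j).h3)
      have := b.lin g (by rw [e1]) (by rw [e2]; exact h1.le) hlt.le
      rw [e1, e2] at this
      refine ⟨?_, this.2⟩
      simp only [this.1]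
      have := mul_neg_of_neg_of_pos h1 (show 0 < c (j + 1) - c j by linarith)
      linarith)
    (fun j y h1 => by
      obtain ⟨g, e1, e2⟩ := hUV (c j) (r / 4, y)
      exact (hH j).p6 g e1 (by rw [e2]; exact h1))
    (fun j x y h1 h2 => by
      obtain ⟨g, e1, e2⟩ := hUV (c j) (x, y)
      exact (hH j).p7 g (by rw [e1]; exact h1) h2)
  have hmodlt : ∀ n, n % N < N := fun n => Nat.mod_lt n hN
  let W : ℕ → ℝ × ℝ := fun n => w ⟨n % N, hmodlt n⟩
  have hW : ∀ n, 0 ≤ (W n).1 ∧ (W n).1 ≤ r / 4 ∧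
      (U (c (n % N)) (W n) (c (n % N + 1)), V (c (n % N)) (W n) (c (n % N + 1))) = W (n + 1) ∧
      (s n = true ↔ r < U (c (n % N)) (W n) (σ (n % N)) +
        (τ (n % N) - σ (n % N)) * V (c (n % N)) (W n) (σ (n % N))) := by
    intro n
    obtain ⟨a1, a2, a3, a4, a5⟩ := hw ⟨n % N, hmodlt n⟩
    have en : n = n % N + n / N * N := by rw [mul_comm]; exact (Nat.mod_add_div n N).symm
    have esn : s n = s (n % N) := by
      have := (hsh (n / N) (n % N)).2.2.2
      rw [← en] at this
      exact this
    refine ⟨a1, a2, ?_, ?_⟩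
    · refine a3.trans ?_
      simp only [W]
      congr 1
      apply Fin.ext
      simp only [Equiv.coe_addRight, Fin.val_add, Fin.val_one']
      simp [Nat.add_mod]
    · rw [esn]
      simp only at a4 a5
      constructor
      · intro h
        have := a4 h
        simp only [W]
        linarith
      · intro h
        by_contra hne
        have := a5 (by simpa using hne)
        simp only [W] at h
        linarith
  obtain ⟨g, e1, e2⟩ := hUV (c 0) (W 0)
  set u := U (c 0) (W 0) with hu
  set v := V (c 0) (W 0) with hv
  have shn : ∀ n : ℕ, Function.Periodic q (n * S) := fun n => hqS.nat_mul n
  -- transfer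
  have trans : ∀ n, u (c n) = (W n).1 → v (c n) = (W n).2 → ∀ t,
      u (t + (n / N : ℕ) * S) = U (c (n % N)) (W n) t ∧ v (t + (n / N : ℕ) * S) = V (c (n % N)) (W n) t := by
    intro n h1 h2 t
    obtain ⟨g', e1', e2'⟩ := hUV (c (n % N)) (W n)
    have en : n = n % N + n / N * N := by rw [mul_comm]; exact (Nat.mod_add_div n N).symm
    have ec : c (n % N) + (n / N : ℕ) * S = c n := by
      have := (hsh (n / N) (n % N)).1
      rw [← en] at this
      exact this.symm
    refine GSol.eq_of b (g.shift (shn (n / N))) g' (c := c (n % N)) ?_ ?_ t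
    · rw [ec, h1, e1']
    · rw [ec, h2, e2']
  have hcW : ∀ n, u (c n) = (W n).1 ∧ v (c n) = (W n).2 := by
    intro n
    induction n with
    | zero => exact ⟨e1, e2⟩
    | succ n ih =>
      have := trans n ih.1 ih.2 (c (n % N + 1))
      have en : n + 1 = (n % N + 1) + n / N * N := by
        have := Nat.mod_add_div n N
        rw [mul_comm]; omega
      have ec : c (n % N + 1) + (n / N : ℕ) * S = c (n + 1) := by
        have := (hsh (n / N) (n % N + 1)).1
        rw [← en] at this
        exact this.symm
      rw [ec] at this
      have h3 := (hW n).2.2.1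
      rw [← h3]
      exact this
  have hcode : ∀ n, s n = true ↔ r < u (σ n) + (τ n - σ n) * v (σ n) := by
    intro n
    have := trans n (hcW n).1 (hcW n).2 (σ (n % N))
    have en : n = n % N + n / N * N := by rw [mul_comm]; exact (Nat.mod_add_div n N).symm
    have h5 := hsh (n / N) (n % N)
    rw [← en] at h5
    rw [← h5.2.1] at this
    have h6 : τ n - σ n = τ (n % N) - σ (n % N) := by rw [h5.2.1, h5.2.2.1]; ring
    rw [(hW n).2.2.2, h6, this.1, this.2]
  have hW0N : W N = W 0 := by simp [W]
  have hper : ∀ t, u (t + S) = u t ∧ v (t + S) = v t := by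
    intro t
    refine GSol.eq_of b (g.shift hqS) g (c := c 0) ?_ ?_ t
    · have := (hcW N).1
      have h2 := hc 0
      rw [zero_add] at h2
      rw [← h2, this, hW0N, e1]
    · have := (hcW N).2
      have h2 := hc 0
      rw [zero_add] at h2
      rw [← h2, this, hW0N, e2]
  have hup : Function.Periodic u S := fun t => (hper t).1
  have hvp : Function.Periodic v S := fun t => (hper t).2
  have hbig : ∀ (t a : ℝ), ∃ n : ℕ, t ≤ a + n * S := by
    intro t a
    obtain ⟨n, hn⟩ := exists_nat_ge ((t - a) / S)
    rw [div_le_iff₀ hS] at hn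
    exact ⟨n, by linarith⟩
  have hnn : ∀ t, 0 ≤ u t := by
    intro t
    by_contra hneg
    push Not at hneg
    obtain ⟨n, hn⟩ := hbig (c 0) t
    have h1 : u (t + n * S) < 0 := by rw [(hup.nat_mul n) t]; exact hneg
    obtain ⟨n', hn'⟩ := hbig (t + n * S) (c 0)
    have h0 : 0 ≤ u (c 0) := by rw [e1]; exact (hW 0).1
    have h2 := (b.dead' g hn hn' h0 h1).1
    rw [(hup.nat_mul n') (c 0)] at h2
    linarith
  have hR : ∀ n, ∀ t ∈ Icc (c 0) (c n), u t ≤ R := by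
    intro n
    induction n with
    | zero =>
      intro t ht
      have : t = c 0 := le_antisymm ht.2 ht.1
      rw [this, e1]
      have := (hW 0).2.1
      have := (hH 0).rR
      linarith
    | succ n ih =>
      intro t ht
      rcases le_total t (c n) with h1 | h1
      · exact ih t ⟨ht.1, h1⟩
      have Hn := hH n
      have hrR := Hn.rR
      have hRn := Hn.ap u v g (fun t _ => hnn t)
      have hcn : u (c n) ≤ R := by rw [(hcW n).1]; linarith [(hW n).2.1]
      have hcn1 : u (c (n+1)) ≤ R := by rw [(hcW (n+1)).1]; linarith [(hW (n+1)).2.1]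
      have conv : ∀ x y, x ≤ t → t ≤ y → (∀ᵐ r, r ∈ Icc x y → q r ≤ 0) → u x ≤ R → u y ≤ R → u t ≤ R := by
        intro x y hx hy hq hux huy
        rcases le_total (v t) 0 with hvt | hvt
        · have := gs_ubound g hx (k := 0) (fun z hz =>
            (b.vmono g hz.2 (ae_sub hq hz.1 hy)).trans hvt)
          linarith
        · have := gs_lbound g hy (k := 0) (fun z hz =>
            hvt.trans (b.vmono g hz.1 (ae_sub hq hx hz.2)))
          linarith
      rcases le_total t (σ n) with h2 | h2
      · exact conv _ _ h1 h2 Hn.q1 hcn (hRn _ (left_mem_Icc.2 Hn.h2.le))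
      rcases le_total t (τ n) with h3 | h3
      · exact hRn t ⟨h2, h3⟩
      · exact conv _ _ h3 ht.2 Hn.q3 (hRn _ (right_mem_Icc.2 Hn.h2.le)) hcn1
  have hR' : ∀ t, u t ≤ R := by
    intro t
    obtain ⟨n, hn⟩ := hbig (c 0) t
    obtain ⟨n', hn'⟩ := hbig (t + n * S) (c 0)
    rw [← (hup.nat_mul n) t]
    refine hR (0 + n' * N) _ ⟨hn, ?_⟩
    rw [(hsh n' 0).1]
    exact hn'
  refine ⟨u, v, g, hup, hvp, ?_, hR', hcode⟩
  intro t
  refine lt_of_le_of_ne (hnn t) fun h0 => ?_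
  have hmin : IsLocalMin u t := Filter.Eventually.of_forall fun x => by rw [← h0]; exact hnn x
  have hv0 := hmin.hasDerivAt_eq_zero (g.1 t)
  obtain ⟨j, hj⟩ := hs1
  obtain ⟨n, hn⟩ := hbig t (σ j)
  have h5 := hsh n j
  rw [← h5.2.1] at hn
  have h6 := b.lin g h0.symm.le hv0.le hn
  rw [← h5.2.2.2] at hj
  have h7 := (hcode _).1 hj
  rw [h6.1, h6.2, ← h0, hv0] at h7
  linarith


theorem trunc {g : ℝ → ℝ} (hg : ContDiffOn ℝ 1 g (Ici 0)) (hg0 : g 0 = 0)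
    (hgp : ∀ s, 0 < s → 0 < g s) {M s0 R : ℝ} (hM : 0 ≤ M) (hs0 : 0 < s0) (hR : s0 ≤ R)
    (hMs : ∀ s, s0 ≤ s → M * s ≤ g s) :
    ∃ f : ℝ → ℝ, Continuous f ∧ (∃ Λ : ℝ, 0 ≤ Λ ∧ ∀ x y, |f x - f y| ≤ Λ * |x - y|) ∧
      (∀ x ≤ 0, f x = 0) ∧ (∀ x, 0 ≤ f x) ∧ (∀ x, 0 ≤ x → x ≤ R → f x = g x) ∧
      (∀ s, s0 ≤ s → M * s ≤ f s) ∧ ∀ ρ, 0 < ρ → ρ ≤ R → ∃ η, 0 < η ∧ ∀ s, ρ ≤ s → η ≤ f s := by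
  have hR0 : 0 < R := by linarith
  obtain ⟨Λ, hΛ⟩ : ∃ K, LipschitzOnWith K g (Icc 0 R) :=
    (hg.mono Icc_subset_Ici_self).exists_lipschitzOnWith one_ne_zero (convex_Icc _ _) isCompact_Icc
  let cl : ℝ → ℝ := fun s => max 0 (min R s)
  have hcl : ∀ s, cl s ∈ Icc 0 R := fun s => ⟨le_max_left _ _, max_le hR0.le (min_le_left _ _)⟩
  have hclid : ∀ s, 0 ≤ s → s ≤ R → cl s = s := fun s h0 h1 => by
    simp only [cl]; rw [min_eq_right h1, max_eq_right h0]
  have hcll : ∀ x y, |cl x - cl y| ≤ |x - y| := by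
    intro x y
    simp only [cl]
    have h1 := abs_max_sub_max_le_abs (min R x) (min R y) 0
    have h2 := abs_min_sub_min_le_max R x R y
    rw [max_comm 0, max_comm 0]
    simp at h2
    exact h1.trans h2
  let f : ℝ → ℝ := fun s => g (cl s) + M * max (s - R) 0
  have hlip : ∀ x y, |f x - f y| ≤ (Λ + M) * |x - y| := by
    intro x y
    have h1 := hΛ.dist_le_mul (cl x) (hcl x) (cl y) (hcl y)
    rw [Real.dist_eq, Real.dist_eq] at h1
    have h2 : (Λ:ℝ) * |cl x - cl y| ≤ Λ * |x - y| := mul_le_mul_of_nonneg_left (hcll x y) Λ.2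
    have h3 : |max (x - R) 0 - max (y - R) 0| ≤ |x - y| := by
      have := abs_max_sub_max_le_abs (x - R) (y - R) 0
      simpa using this
    have h4 : |M * max (x - R) 0 - M * max (y - R) 0| ≤ M * |x - y| := by
      rw [← mul_sub, abs_mul, abs_of_nonneg hM]
      exact mul_le_mul_of_nonneg_left h3 hM
    have h5 : f x - f y = (g (cl x) - g (cl y)) + (M * max (x - R) 0 - M * max (y - R) 0) := by
      simp only [f]; ring
    rw [h5]
    have := abs_add_le (g (cl x) - g (cl y)) (M * max (x - R) 0 - M * max (y - R) 0)
    linarith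
  have hfc : Continuous f := by
    have : LipschitzWith (Real.toNNReal (Λ + M)) f := LipschitzWith.of_dist_le_mul fun x y => by
      rw [Real.coe_toNNReal _ (by positivity), Real.dist_eq, Real.dist_eq]; exact hlip x y
    exact this.continuous
  have hgn : ∀ s, 0 ≤ s → 0 ≤ g s := fun s hs => by
    rcases hs.eq_or_lt with h | h
    · rw [← h, hg0]
    · exact (hgp s h).le
  refine ⟨f, hfc, ⟨Λ + M, by positivity, hlip⟩, ?_, ?_, ?_, ?_, ?_⟩
  · intro x hx
    simp only [f, cl]
    rw [min_eq_right (by linarith), max_eq_left hx, max_eq_right (by linarith), hg0]; ring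
  · intro x
    exact add_nonneg (hgn _ (hcl x).1) (mul_nonneg hM (le_max_right _ _))
  · intro x h0 h1
    simp only [f]
    rw [hclid x h0 h1, max_eq_right (by linarith)]; ring
  · intro s hs
    rcases le_total s R with h | h
    · simp only [f]
      rw [hclid s (by linarith) h, max_eq_right (by linarith)]
      linarith [hMs s hs]
    · simp only [f, cl]
      rw [min_eq_left h, max_eq_right hR0.le, max_eq_left (by linarith)]
      linarith [hMs R hR]
  · intro ρ hρ hρR
    obtain ⟨z, hz, hzm⟩ := isCompact_Icc.exists_isMinOn (s := Icc ρ R) ⟨ρ, le_rfl, hρR⟩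
      (hg.continuousOn.mono (fun x hx => hρ.le.trans hx.1))
    refine ⟨g z, hgp z (by linarith [hz.1]), fun s hs => ?_⟩
    have h1 : cl s ∈ Icc ρ R := ⟨le_max_of_le_right (le_min hρR hs), (hcl s).2⟩
    have h2 := hzm h1
    simp only [mem_ofPred_eq] at h2
    have := mul_nonneg hM (le_max_right (s - R) 0)
    simp only [f]
    linarith

theorem small_g {g : ℝ → ℝ} (hg : ContDiffOn ℝ 1 g (Ici 0)) (hg0 : g 0 = 0)
    (hg'0 : derivWithin g (Ici 0) 0 = 0) {ε : ℝ} (hε : 0 < ε) :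
    ∃ r, 0 < r ∧ ∀ s, 0 ≤ s → s ≤ r → g s ≤ ε * s := by
  have h1 : HasDerivWithinAt g 0 (Ici 0) 0 := by
    have := (hg.differentiableOn one_ne_zero 0 (by simp)).hasDerivWithinAt
    rwa [hg'0] at this
  rw [hasDerivWithinAt_iff_isLittleO] at h1
  have h2 := h1.def hε
  rw [eventually_nhdsWithin_iff, Metric.eventually_nhds_iff] at h2
  obtain ⟨d, hd, h3⟩ := h2
  refine ⟨d / 2, by linarith, fun s hs hs2 => ?_⟩
  have := h3 (y := s) (by rw [Real.dist_eq, sub_zero, abs_of_nonneg hs]; linarith) hs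
  simp [hg0] at this
  rw [abs_of_nonneg hs] at this
  exact (le_abs_self _).trans this

theorem per_bdd {m : ℕ} (hm : 0 < m) {φ : ℕ → ℝ} (h : ∀ j, φ (j + m) = φ j) :
    ∃ B, 0 < B ∧ ∀ j, φ j ≤ B := by
  have hmod : ∀ j, φ j = φ (j % m) := by
    intro j
    have : ∀ n i, φ (i + n * m) = φ i := by
      intro n
      induction n with
      | zero => simp
      | succ n ih => intro i; rw [show i + (n + 1) * m = (i + n * m) + m by ring, h, ih]
    conv_lhs => rw [← Nat.mod_add_div j m, mul_comm]
    exact this _ _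
  refine ⟨∑ i ∈ Finset.range m, |φ i| + 1, by positivity, fun j => ?_⟩
  rw [hmod]
  have := Finset.single_le_sum (f := fun i => |φ i|) (fun i _ => abs_nonneg _)
    (Finset.mem_range.2 (Nat.mod_lt j hm))
  have h2 := le_abs_self (φ (j % m))
  linarith


structure Geom (a : ℝ → ℝ) (T : ℝ) (m : ℕ) (c σ α β τ : ℕ → ℝ) : Prop where
  hm : 0 < m
  ha : LocallyIntegrable a volume
  per : Function.Periodic a T
  h1 : ∀ j, c j < σ j
  h2 : ∀ j, σ j < α j
  h3 : ∀ j, α j < β j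
  h4 : ∀ j, β j < τ j
  h5 : ∀ j, τ j < c (j + 1)
  pc : ∀ j, c (j + m) = c j + T
  pσ : ∀ j, σ (j + m) = σ j + T
  pα : ∀ j, α (j + m) = α j + T
  pβ : ∀ j, β (j + m) = β j + T
  pτ : ∀ j, τ (j + m) = τ j + T
  a1 : ∀ j, ∀ᵐ r, r ∈ Icc (c j) (σ j) → a r ≤ 0
  a2 : ∀ j, ∀ᵐ r, r ∈ Icc (σ j) (τ j) → 0 ≤ a r
  a3 : ∀ j, ∀ᵐ r, r ∈ Icc (τ j) (c (j + 1)) → a r ≤ 0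
  i1 : ∀ j, ∫ r in (c j)..(σ j), a r < 0
  i2 : ∀ j, 0 < ∫ r in (α j)..(β j), a r
  i3 : ∀ j, ∫ r in (τ j)..(c (j + 1)), a r < 0

theorem per_int {a : ℝ → ℝ} {T : ℝ} (h : Function.Periodic a T) (x y : ℝ) :
    ∫ r in (x + T)..(y + T), a r = ∫ r in x..y, a r := by
  rw [← intervalIntegral.integral_comp_add_right a T]
  simp only [h _]

theorem q_li {a : ℝ → ℝ} (ha : LocallyIntegrable a volume) (μ : ℝ) :
    LocallyIntegrable (fun t => max (a t) 0 - μ * max (-a t) 0) volume := by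
  intro x
  obtain ⟨s, hs, hi⟩ := ha x
  exact ⟨s, hs, hi.pos_part.sub (hi.neg_part.const_mul μ)⟩

theorem setup {a : ℝ → ℝ} {T : ℝ} {m : ℕ} {c σ α β τ : ℕ → ℝ} (D : Geom a T m c σ α β τ)
    {g : ℝ → ℝ} (hg : ContDiffOn ℝ 1 g (Ici 0)) (hg0 : g 0 = 0)
    (hgp : ∀ s, 0 < s → 0 < g s) (hg'0 : derivWithin g (Ici 0) 0 = 0)
    (hgsup : Tendsto (fun s => g s / s) atTop atTop) :
    ∃ μs : ℝ, 0 < μs ∧ ∃ (f : ℝ → ℝ) (R G r e η Y : ℝ), (∀ x, 0 ≤ x → x ≤ R → f x = g x) ∧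
      ∀ μ, μs < μ → ∃ Yn, ∀ j, Hump (fun t => max (a t) 0 - μ * max (-a t) 0) f
        (c j) (σ j) (τ j) (c (j + 1)) R G r e η Y Yn := by
  have hm := D.hm
  have l1 : ∀ j, 0 < σ j - c j := fun j => sub_pos.2 (D.h1 j)
  have l2 : ∀ j, 0 < α j - σ j := fun j => sub_pos.2 (D.h2 j)
  have l4 : ∀ j, 0 < τ j - β j := fun j => sub_pos.2 (D.h4 j)
  have l5 : ∀ j, 0 < c (j + 1) - τ j := fun j => sub_pos.2 (D.h5 j)
  have lL : ∀ j, 0 < τ j - σ j := fun j => by linarith [D.h2 j, D.h3 j, D.h4 j]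
  have pc1 : ∀ j, c (j + m + 1) = c (j + 1) + T := fun j => by
    rw [show j + m + 1 = (j + 1) + m by ring, D.pc]
  let δ : ℕ → ℝ := fun j => min (α j - σ j) (τ j - β j) / (τ j - σ j)
  have hδ : ∀ j, 0 < δ j := fun j => div_pos (lt_min (l2 j) (l4 j)) (lL j)
  let A : ℕ → ℝ := fun j => ∫ r in (σ j)..(τ j), a r
  let A' : ℕ → ℝ := fun j => ∫ r in (α j)..(β j), a r
  let B1 : ℕ → ℝ := fun j => - ∫ r in (c j)..(σ j), a r
  let B2 : ℕ → ℝ := fun j => - ∫ r in (τ j)..(c (j + 1)), a r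
  have hB1 : ∀ j, 0 < B1 j := fun j => neg_pos.2 (D.i1 j)
  have hB2 : ∀ j, 0 < B2 j := fun j => neg_pos.2 (D.i3 j)
  have hA' : ∀ j, 0 < A' j := D.i2
  have hA0 : ∀ j, 0 ≤ A j := fun j => by
    refine intervalIntegral.integral_nonneg_of_ae_restrict (by linarith [lL j]) ?_
    exact (ae_restrict_iff' measurableSet_Icc).2 (D.a2 j)
  have pA : ∀ j, A (j + m) = A j := fun j => by simp only [A, D.pσ, D.pτ, per_int D.per]
  have pA' : ∀ j, A' (j + m) = A' j := fun j => by simp only [A', D.pα, D.pβ, per_int D.per]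
  have pB1 : ∀ j, B1 (j + m) = B1 j := fun j => by simp only [B1, D.pc, D.pσ, per_int D.per]
  have pB2 : ∀ j, B2 (j + m) = B2 j := fun j => by simp only [B2, D.pτ, pc1, per_int D.per]
  have pδ : ∀ j, δ (j + m) = δ j := fun j => by
    simp only [δ, D.pα, D.pβ, D.pσ, D.pτ, add_sub_add_right_eq_sub]
  obtain ⟨M, hM0, hM⟩ := per_bdd hm
    (φ := fun j => (1 / (α j - σ j) + 1 / (τ j - β j) + 1) / (δ j * A' j)) (fun j => by
      simp only [pδ, pA', D.pα, D.pβ, D.pσ, D.pτ, add_sub_add_right_eq_sub])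
  have hM' : ∀ j, 1 / (α j - σ j) + 1 / (τ j - β j) < M * δ j * A' j := fun j => by
    have := hM j
    rw [div_le_iff₀ (mul_pos (hδ j) (hA' j))] at this
    linarith
  obtain ⟨s1, hs1⟩ := (hgsup.eventually_ge_atTop M).exists_forall_of_atTop
  set s0 := max s1 1 with hs0
  have hs0p : 0 < s0 := lt_max_of_lt_right one_pos
  have hMs : ∀ s, s0 ≤ s → M * s ≤ g s := fun s hs => by
    have := hs1 s ((le_max_left _ _).trans hs)
    rwa [le_div_iff₀ (hs0p.trans_le hs)] at this
  obtain ⟨R0, hR00, hR0⟩ := per_bdd hm (φ := fun j => s0 / δ j) (fun j => by simp only [pδ])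
  set R := max R0 s0 with hR
  have hRs : s0 ≤ R := le_max_right _ _
  have hRp : 0 < R := hs0p.trans_le hRs
  have hRδ : ∀ j, s0 ≤ δ j * R := fun j => by
    have := (hR0 j).trans (le_max_left R0 s0)
    rw [div_le_iff₀ (hδ j)] at this
    linarith
  obtain ⟨f, hfc, hfl, hfn, hfp, hfg, hfM, hfη⟩ := trunc hg hg0 hgp hM0.le hs0p hRs hMs
  obtain ⟨G, hG⟩ := isCompact_Icc.exists_bound_of_continuousOn (s := Icc 0 R) hfc.continuousOn
  have hG0 : 0 ≤ G := (norm_nonneg _).trans (hG 0 ⟨le_rfl, hRp.le⟩)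
  have hfG : ∀ s ≤ R, f s ≤ G := fun s hs => by
    rcases le_total s 0 with h | h
    · rw [hfn s h]; exact hG0
    · exact (le_abs_self _).trans (hG s ⟨h, hs⟩)
  obtain ⟨Q, hQ0, hQ⟩ := per_bdd hm
    (φ := fun j => A j * (τ j - σ j) + A j * (c (j + 1) - τ j)) (fun j => by
      simp only [pA, D.pσ, D.pτ, pc1, add_sub_add_right_eq_sub])
  set ε := 1 / (4 * Q) with hε
  have hεp : 0 < ε := by positivity
  have hεQ : ε * Q = 1 / 4 := by rw [hε]; field_simp
  obtain ⟨r1, hr1, hgr⟩ := small_g hg hg0 hg'0 hεp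
  set r := min r1 R with hr
  have hrp : 0 < r := lt_min hr1 hRp
  have hrR : r ≤ R := min_le_right _ _
  obtain ⟨η, hη0, hη⟩ := hfη (r / 4) (by linarith) (by linarith)
  set e := ε * r with he
  have he0 : 0 ≤ e := by positivity
  have hfe : ∀ s ≤ r, f s ≤ e := fun s hs => by
    rcases le_total s 0 with h | h
    · rw [hfn s h]; exact he0
    · rw [hfg s h (hs.trans hrR)]
      exact (hgr s h (hs.trans (min_le_left _ _))).trans (mul_le_mul_of_nonneg_left hs hεp.le)
  obtain ⟨Y, hY0, hY⟩ := per_bdd hm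
    (φ := fun j => G * A j + R / (τ j - σ j) + 1 + (r + 1) / (τ j - σ j)) (fun j => by
      simp only [pA, D.pσ, D.pτ, add_sub_add_right_eq_sub])
  obtain ⟨μs, hμ0, hμ⟩ := per_bdd hm
    (φ := fun j => Y / (η * B1 j) + (Y + 1 + e * A j) / (η * B2 j)) (fun j => by
      simp only [pA, pB1, pB2])
  refine ⟨μs, hμ0, f, R, G, r, e, η, Y, hfg, fun μ hμμ => ?_⟩
  have hμp : 0 < μ := hμ0.trans hμμ
  obtain ⟨Yn, -, hYn⟩ := per_bdd hm
    (φ := fun j => G * (μ * B1 j) + 2 * (r / (σ j - c j)) + 1) (fun j => by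
      simp only [pB1, D.pσ, D.pc, add_sub_add_right_eq_sub])
  set q : ℝ → ℝ := fun t => max (a t) 0 - μ * max (-a t) 0 with hq
  have hqp : ∀ t, 0 ≤ a t → q t = a t := fun t h => by
    simp only [hq]; rw [max_eq_left h, max_eq_right (by linarith)]; ring
  have hqn : ∀ t, a t ≤ 0 → q t = μ * a t := fun t h => by
    simp only [hq]; rw [max_eq_right h, max_eq_left (by linarith)]; ring
  have ipos : ∀ x y, x ≤ y → (∀ᵐ r, r ∈ Icc x y → 0 ≤ a r) → ∫ r in x..y, q r = ∫ r in x..y, a r := by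
    intro x y hxy h
    refine intervalIntegral.integral_congr_ae ?_
    filter_upwards [h] with t ht ht2
    rw [uIoc_of_le hxy] at ht2
    exact hqp t (ht ⟨ht2.1.le, ht2.2⟩)
  have ineg : ∀ x y, x ≤ y → (∀ᵐ r, r ∈ Icc x y → a r ≤ 0) → ∫ r in x..y, q r = μ * ∫ r in x..y, a r := by
    intro x y hxy h
    rw [← intervalIntegral.integral_const_mul]
    refine intervalIntegral.integral_congr_ae ?_
    filter_upwards [h] with t ht ht2
    rw [uIoc_of_le hxy] at ht2
    exact hqn t (ht ⟨ht2.1.le, ht2.2⟩)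
  have base : Base q f := ⟨q_li D.ha μ, hfc, hfl, hfn, hfp⟩
  refine ⟨Yn, fun j => ?_⟩
  have q2 : ∀ᵐ r, r ∈ Icc (σ j) (τ j) → 0 ≤ q r := by
    filter_upwards [D.a2 j] with t ht ht2
    rw [hqp t (ht ht2)]; exact ht ht2
  have nq : ∀ x y, (∀ᵐ r, r ∈ Icc x y → a r ≤ 0) → ∀ᵐ r, r ∈ Icc x y → q r ≤ 0 := by
    intro x y h
    filter_upwards [h] with t ht ht2
    rw [hqn t (ht ht2)]; exact mul_nonpos_of_nonneg_of_nonpos hμp.le (ht ht2)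
  have E1 := ineg _ _ (D.h1 j).le (D.a1 j)
  have E2 := ipos (σ j) (τ j) (by linarith [lL j]) (D.a2 j)
  have E3 := ineg _ _ (D.h5 j).le (D.a3 j)
  have E4 := ipos (α j) (β j) (D.h3 j).le (ae_sub (D.a2 j) (D.h2 j).le (D.h4 j).le)
  have hYj := hY j
  have hR' : 0 < R / (τ j - σ j) := div_pos hRp (lL j)
  have hr' : 0 < (r + 1) / (τ j - σ j) := div_pos (by linarith) (lL j)
  have hGA : 0 ≤ G * A j := mul_nonneg hG0 (hA0 j)
  have hQj := hQ j
  have z1 : 0 ≤ A j * (τ j - σ j) := mul_nonneg (hA0 j) (lL j).le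
  have z2 : 0 ≤ A j * (c (j + 1) - τ j) := mul_nonneg (hA0 j) (l5 j).le
  have hμj := (hμ j).trans hμμ.le
  have w1 : 0 < η * B1 j := mul_pos hη0 (hB1 j)
  have w2 : 0 < η * B2 j := mul_pos hη0 (hB2 j)
  have w3 : 0 ≤ e * A j := mul_nonneg he0 (hA0 j)
  have w4 : 0 < Y / (η * B1 j) := div_pos hY0 w1
  have w5 : 0 < (Y + 1 + e * A j) / (η * B2 j) := div_pos (by linarith) w2
  refine { toBase := base, h1 := D.h1 j, h2 := by linarith [lL j], h3 := D.h5 j, q1 := nq _ _ (D.a1 j), q2 := q2,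
           q3 := nq _ _ (D.a3 j), r0 := hrp, rR := hrR, e0 := he0, η0 := hη0, G0 := hG0, fG := hfG,
           fe := hfe, fη := hη, ap := ?_, c1 := ?_, c2 := ?_, c3 := ?_, c4 := ?_, c5 := ?_, c6 := ?_,
           c7 := ?_ }
  · intro u v h hu
    refine base.apriori h (D.h2 j) (D.h3 j).le (D.h4 j) q2 (hδ j) ?_ ?_ hfM hM0.le ?_ hRp.le (hRδ j) hu
    · have : δ j * (τ j - σ j) = min (α j - σ j) (τ j - β j) := div_mul_cancel₀ _ (lL j).ne'
      rw [this]; exact min_le_left _ _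
    · have : δ j * (τ j - σ j) = min (α j - σ j) (τ j - β j) := div_mul_cancel₀ _ (lL j).ne'
      rw [this]; exact min_le_right _ _
    · rw [E4]; exact hM' j
  · rw [E2]
    change G * A j + _ < Y
    linarith
  · have h7 : (r + 1) / (τ j - σ j) ≤ Y := by linarith
    rw [div_le_iff₀ (lL j)] at h7
    linarith
  · rw [E1]
    have h7 : Y / (η * B1 j) ≤ μ := by linarith
    rw [div_le_iff₀ w1] at h7
    simp only [B1] at h7
    linarith
  · rw [E2, E3]
    have h7 : (Y + 1 + e * A j) / (η * B2 j) ≤ μ := by linarith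
    rw [div_le_iff₀ w2] at h7
    simp only [A, B2] at h7
    linarith
  · rw [E2]
    have h7 := mul_le_mul_of_nonneg_left (show A j * (τ j - σ j) ≤ Q by linarith) hεp.le
    have h8 := mul_le_mul_of_nonneg_left h7 hrp.le
    rw [hεQ] at h8
    change e * A j * _ ≤ _
    have : e * A j * (τ j - σ j) = r * (ε * (A j * (τ j - σ j))) := by rw [he]; ring
    linarith
  · rw [E2]
    have h7 := mul_le_mul_of_nonneg_left (show A j * (c (j + 1) - τ j) ≤ Q by linarith) hεp.le
    have h8 := mul_le_mul_of_nonneg_left h7 hrp.le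
    rw [hεQ] at h8
    change e * A j * _ ≤ _
    have : e * A j * (c (j + 1) - τ j) = r * (ε * (A j * (c (j + 1) - τ j))) := by rw [he]; ring
    linarith
  · rw [E1]
    have h7 := hYn j
    have : -(μ * ∫ r in (c j)..(σ j), a r) = μ * B1 j := by simp only [B1]; ring
    rw [this]
    exact h7



theorem posOn_int {p : ℝ → ℝ} (hp : LocallyIntegrable p volume) {x y : ℝ} (hxy : x < y)
    (h : PosOn p (Icc x y)) : 0 < ∫ r in x..y, p r := by
  obtain ⟨h1, h2⟩ := h
  rw [intervalIntegral.integral_of_le hxy.le, ← integral_Icc_eq_integral_Ioc]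
  have hi : IntegrableOn p (Icc x y) volume := hp.integrableOn_isCompact isCompact_Icc
  refine lt_of_le_of_ne (integral_nonneg_of_ae h1) (fun h0 => h2 ?_)
  exact (integral_eq_zero_iff_of_nonneg_ae h1 hi).1 h0.symm

theorem split_int {p : ℝ → ℝ} (hp : LocallyIntegrable p volume) {x y : ℝ} (hxy : x < y)
    (h : 0 < ∫ r in x..y, p r) :
    ∃ d, x < d ∧ d < y ∧ 0 < (∫ r in x..d, p r) ∧ 0 < ∫ r in d..y, p r := by
  have ii : ∀ s t, IntervalIntegrable p volume s t := fun s t => li_ii hp s t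
  have hc : Continuous (fun d => ∫ r in x..d, p r) :=
    intervalIntegral.continuous_primitive ii x
  have := intermediate_value_Icc hxy.le hc.continuousOn
  have hm : (∫ r in x..y, p r) / 2 ∈ Icc (∫ r in x..x, p r) (∫ r in x..y, p r) := by
    rw [intervalIntegral.integral_same]; constructor <;> linarith
  obtain ⟨d, hd, he⟩ := this hm
  simp only at he
  have hs := intervalIntegral.integral_add_adjacent_intervals (ii x d) (ii d y)
  refine ⟨d, lt_of_le_of_ne hd.1 ?_, lt_of_le_of_ne hd.2 ?_, by linarith, by linarith⟩
  · rintro rfl; rw [intervalIntegral.integral_same] at he; linarith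
  · rintro rfl; linarith

theorem ae_shift {p : ℝ → Prop} {T : ℝ} (h : ∀ᵐ r, p r) : ∀ᵐ r : ℝ, p (r - T) :=
  (measurePreserving_sub_right volume T).quasiMeasurePreserving.ae h

theorem per_ind {m : ℕ} (hm : 0 < m) {P : ℕ → Prop} (h0 : ∀ j < m, P j)
    (h1 : ∀ j, P j → P (j + m)) (j : ℕ) : P j := by
  induction j using Nat.strong_induction_on with
  | _ j ih =>
    by_cases hj : j < m
    · exact h0 j hj
    · have := h1 (j - m) (ih (j - m) (by omega))
      rwa [Nat.sub_add_cancel (by omega)] at this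

noncomputable def pext (m : ℕ) (T : ℝ) (f : ℕ → ℝ) (j : ℕ) : ℝ := f (j % m) + (j / m : ℕ) * T

theorem pext_add {m : ℕ} (hm : 0 < m) (T : ℝ) (f : ℕ → ℝ) (j : ℕ) :
    pext m T f (j + m) = pext m T f j + T := by
  unfold pext
  rw [Nat.add_mod_right, Nat.add_div_right _ hm]
  push_cast; ring

theorem pext_lt {m : ℕ} (T : ℝ) (f : ℕ → ℝ) {j : ℕ} (hj : j < m) : pext m T f j = f j := by
  unfold pext
  rw [Nat.mod_eq_of_lt hj, Nat.div_eq_of_lt hj]; simp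

theorem geom_exists {a : ℝ → ℝ} {T : ℝ} {m : ℕ} (hm : 1 ≤ m)
    (haper : Function.Periodic a T) (haloc : LocallyIntegrable a volume)
    (h : SignCond a T m) : ∃ c σ α β τ : ℕ → ℝ, Geom a T m c σ α β τ := by
  obtain ⟨s, s0, sT, sm, hp, hn⟩ := h
  have hm' : 0 < 2 * m := by omega
  set S := pext (2 * m) T s with hS
  have Sadd : ∀ j, S (j + 2 * m) = S j + T := pext_add hm' T s
  have Slt : ∀ j, j ≤ 2 * m → S j = s j := by
    intro j hj
    rcases hj.lt_or_eq with hj | rfl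
    · exact pext_lt T s hj
    · have := Sadd 0
      rw [zero_add] at this
      rw [this, hS, pext_lt T s hm', s0, sT, zero_add]
  have S2 : ∀ j i, S (2 * (j + m) + i) = S (2 * j + i) + T := fun j i => by
    rw [← Sadd]; congr 1; ring
  have S2' : ∀ j, S (2 * (j + m)) = S (2 * j) + T := fun j => S2 j 0
  have Sinc1 : ∀ j, S (2 * j) < S (2 * j + 1) := by
    refine per_ind (m := m) (by omega) (fun j hj => ?_) (fun j hj => ?_)
    · rw [Slt _ (by omega), Slt _ (by omega)]; exact sm _ (by omega)
    · rw [S2, S2']; linarith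
  have Sinc2 : ∀ j, S (2 * j + 1) < S (2 * j + 2) := by
    refine per_ind (m := m) (by omega) (fun j hj => ?_) (fun j hj => ?_)
    · rw [Slt _ (by omega), Slt _ (by omega)]; exact sm _ (by omega)
    · rw [S2, S2]; linarith
  have naloc : LocallyIntegrable (fun t => - a t) volume := haloc.neg
  have ap : ∀ r, a (r - T) = a r := fun r => haper.sub_eq r
  have A1 : ∀ j, ∀ᵐ r, r ∈ Icc (S (2 * j)) (S (2 * j + 1)) → 0 ≤ a r := by
    refine per_ind (m := m) (by omega) (fun j hj => ?_) (fun j hj => ?_)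
    · rw [Slt _ (by omega), Slt _ (by omega)]
      exact (ae_restrict_iff' measurableSet_Icc).1 (hp j hj).1
    · filter_upwards [ae_shift (T := T) hj] with r hr hr'
      rw [S2, S2'] at hr'
      rw [← ap]; exact hr ⟨by linarith [hr'.1], by linarith [hr'.2]⟩
  have A2 : ∀ j, ∀ᵐ r, r ∈ Icc (S (2 * j + 1)) (S (2 * j + 2)) → a r ≤ 0 := by
    refine per_ind (m := m) (by omega) (fun j hj => ?_) (fun j hj => ?_)
    · rw [Slt _ (by omega), Slt _ (by omega)]
      filter_upwards [(ae_restrict_iff' measurableSet_Icc).1 (hn j hj).1] with r hr hr'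
      linarith [hr hr']
    · filter_upwards [ae_shift (T := T) hj] with r hr hr'
      rw [S2, S2] at hr'
      rw [← ap]; exact hr ⟨by linarith [hr'.1], by linarith [hr'.2]⟩
  have B1 : ∀ j < m, ∃ x y, S (2 * j) < x ∧ x < y ∧ y < S (2 * j + 1) ∧ 0 < ∫ r in x..y, a r := by
    intro j hj
    have h1 := hp j hj
    rw [← Slt _ (by omega), ← Slt _ (by omega)] at h1
    obtain ⟨d, d1, d2, d3, d4⟩ := split_int haloc (Sinc1 j) (posOn_int haloc (Sinc1 j) h1)
    obtain ⟨e, e1, e2, e3, e4⟩ := split_int haloc d1 d3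
    exact ⟨e, d, e1, e2, d2, e4⟩
  have B2 : ∀ j < m, ∃ x, S (2 * j + 1) < x ∧ x < S (2 * j + 2) ∧
      (∫ r in (S (2 * j + 1))..x, a r) < 0 ∧ (∫ r in x..(S (2 * j + 2)), a r) < 0 := by
    intro j hj
    have h1 := hn j hj
    rw [← Slt _ (by omega), ← Slt _ (by omega)] at h1
    obtain ⟨d, d1, d2, d3, d4⟩ := split_int naloc (Sinc2 j) (posOn_int naloc (Sinc2 j) h1)
    rw [intervalIntegral.integral_neg] at d3 d4
    exact ⟨d, d1, d2, by linarith, by linarith⟩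
  choose! x y b1 b2 b3 b4 using B1
  choose! z z1 z2 z3 z4 using B2
  have hm0 : 0 < m := hm
  set X := pext m T x with hX
  set Y := pext m T y with hY
  set Z := pext m T z with hZ
  have Xa : ∀ j, X (j + m) = X j + T := pext_add hm0 T x
  have Ya : ∀ j, Y (j + m) = Y j + T := pext_add hm0 T y
  have Za : ∀ j, Z (j + m) = Z j + T := pext_add hm0 T z
  have Xl : ∀ j, j < m → X j = x j := fun j hj => pext_lt T x hj
  have Yl : ∀ j, j < m → Y j = y j := fun j hj => pext_lt T y hj
  have Zl : ∀ j, j < m → Z j = z j := fun j hj => pext_lt T z hj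
  have PXY : ∀ j, S (2 * j) < X j ∧ X j < Y j ∧ Y j < S (2 * j + 1) ∧
      0 < ∫ r in (X j)..(Y j), a r := by
    refine per_ind hm0 (fun j hj => ?_) (fun j hj => ?_)
    · rw [Xl j hj, Yl j hj]; exact ⟨b1 j hj, b2 j hj, b3 j hj, b4 j hj⟩
    · rw [Xa, Ya, S2, S2', per_int haper]
      exact ⟨by linarith [hj.1], by linarith [hj.2.1], by linarith [hj.2.2.1], hj.2.2.2⟩
  have PZ : ∀ j, S (2 * j + 1) < Z j ∧ Z j < S (2 * j + 2) ∧
      (∫ r in (S (2 * j + 1))..(Z j), a r) < 0 ∧ (∫ r in (Z j)..(S (2 * j + 2)), a r) < 0 := by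
    refine per_ind hm0 (fun j hj => ?_) (fun j hj => ?_)
    · rw [Zl j hj]; exact ⟨z1 j hj, z2 j hj, z3 j hj, z4 j hj⟩
    · rw [Za, S2, S2, per_int haper, per_int haper]
      exact ⟨by linarith [hj.1], by linarith [hj.2.1], hj.2.2⟩
  have sh : ∀ j, j + m + 1 = j + 1 + m := fun j => by ring
  refine ⟨Z, fun j => S (2 * (j + 1)), fun j => X (j + 1), fun j => Y (j + 1),
    fun j => S (2 * (j + 1) + 1), ⟨hm0, haloc, haper, fun j => (PZ j).2.1, fun j => (PXY (j+1)).1,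
    fun j => (PXY (j+1)).2.1, fun j => (PXY (j+1)).2.2.1, fun j => (PZ (j+1)).1, Za,
    fun j => ?_, fun j => ?_, fun j => ?_, fun j => ?_, fun j => ?_, fun j => A1 (j+1), fun j => ?_,
    fun j => (PZ j).2.2.2, fun j => (PXY (j+1)).2.2.2, fun j => (PZ (j+1)).2.2.1⟩⟩
  · simp only [sh, S2']
  · simp only [sh, Xa]
  · simp only [sh, Ya]
  · simp only [sh, S2]
  · filter_upwards [A2 j] with r hr hr'
    exact hr ⟨by linarith [hr'.1, (PZ j).1], hr'.2⟩
  · filter_upwards [A2 (j+1)] with r hr hr'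
    exact hr ⟨hr'.1, by linarith [hr'.2, (PZ (j+1)).2.1]⟩


def shw {A : Type} (w : ℕ → A) (n : ℕ) : A := w (n + 1)

theorem shw_it {A : Type} (l : ℕ) (w : ℕ → A) (n : ℕ) : (shw^[l] w) n = w (n + l) := by
  induction l generalizing w with
  | zero => rfl
  | succ l ih => rw [Function.iterate_succ_apply, ih]; simp only [shw]; congr 1

theorem comb (A : Type) [Fintype A] [Nonempty A] (k : ℕ) (hk : 0 < k) :
    ∃ W : Finset (ℕ → A),
      (∑ l ∈ k.divisors, (ArithmeticFunction.moebius l) * ((Fintype.card A : ℕ) : ℤ) ^ (k / l))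
        ≤ (k : ℤ) * (W.card : ℤ) ∧
      (∀ w ∈ W, (∀ n, w (n + k) = w n) ∧ ∀ l, 1 ≤ l → l < k → ¬ ∀ n, w (n + l) = w n) ∧
      ∀ w ∈ W, ∀ w' ∈ W, ∀ l, (∀ n, w' n = w (n + l)) → w = w' := by
  classical
  let rp : ∀ d : ℕ, 0 < d → (Fin d → A) → (ℕ → A) := fun d hd w n => w ⟨n % d, Nat.mod_lt _ hd⟩
  have rpinj : ∀ d hd, Function.Injective (rp d hd) := by
    intro d hd w w' h
    ext i
    have := congrFun h i
    simp only [rp, Nat.mod_eq_of_lt i.2] at this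
    exact this
  let F : ℕ → Finset (ℕ → A) := fun d => if hd : 0 < d then Finset.univ.image (rp d hd) else ∅
  have memF : ∀ d, 0 < d → ∀ w, w ∈ F d ↔ Function.IsPeriodicPt shw d w := by
    intro d hd w
    simp only [F, dif_pos hd, Finset.mem_image, Finset.mem_univ, true_and]
    constructor
    · rintro ⟨v, rfl⟩
      show shw^[d] _ = _
      ext n
      rw [shw_it]
      simp [rp]
    · intro h
      refine ⟨fun i => w i, ?_⟩
      ext n
      have h2 : Function.IsPeriodicPt shw (d * (n / d)) w := h.mul_const _
      have := congrFun h2 (n % d)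
      rw [shw_it, Nat.mod_add_div] at this
      exact this.symm
  have cardF : ∀ d, 0 < d → (F d).card = Fintype.card A ^ d := by
    intro d hd
    simp only [F, dif_pos hd]
    rw [Finset.card_image_of_injective _ (rpinj d hd)]
    simp
  let M : ℕ → Finset (ℕ → A) := fun d => (F d).filter (fun w => Function.minimalPeriod shw w = d)
  have hsum : ∀ n > 0, ∑ i ∈ n.divisors, ((M i).card : ℤ) = ((Fintype.card A : ℕ) : ℤ) ^ n := by
    intro n hn
    have := Finset.card_eq_sum_card_fiberwise (f := Function.minimalPeriod (shw (A := A)))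
      (s := F n) (t := n.divisors) (by
        intro w hw
        have := (memF n hn w).1 hw
        simp only [Finset.mem_coe, Nat.mem_divisors]
        exact ⟨this.minimalPeriod_dvd, hn.ne'⟩)
    rw [cardF n hn] at this
    have h2 : ∀ i ∈ n.divisors, (M i).card =
        ((F n).filter (fun w => Function.minimalPeriod shw w = i)).card := by
      intro i hi
      congr 1
      have hi' := Nat.dvd_of_mem_divisors hi
      have hi0 := Nat.pos_of_mem_divisors hi
      ext w
      simp only [M, Finset.mem_filter, memF n hn, memF i hi0]
      constructor
      · rintro ⟨h1, h2⟩; exact ⟨h1.trans_dvd hi', h2⟩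
      · rintro ⟨h1, h2⟩
        refine ⟨?_, h2⟩
        rw [← h2]; exact Function.isPeriodicPt_minimalPeriod _ _
    rw [← Finset.sum_congr rfl h2] at this
    exact_mod_cast this.symm
  have hmob := (ArithmeticFunction.sum_eq_iff_sum_mul_moebius_eq (R := ℤ)).1 hsum k hk
  simp only [Int.cast_id] at hmob
  rw [Nat.sum_divisorsAntidiagonal (fun x y => ArithmeticFunction.moebius x *
    ((Fintype.card A : ℕ) : ℤ) ^ y)] at hmob
  let κ : (ℕ → A) → Set (ℕ → A) := fun w => {w' | ∃ l, w' = shw^[l] w}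
  have memM : ∀ w, w ∈ M k ↔ Function.minimalPeriod shw w = k := by
    intro w
    simp only [M, Finset.mem_filter, memF k hk]
    constructor
    · exact fun h => h.2
    · intro h; refine ⟨?_, h⟩
      have := Function.isPeriodicPt_minimalPeriod shw w
      rwa [h] at this
  have perM : ∀ w ∈ M k, Function.IsPeriodicPt shw k w := by
    intro w hw
    have := Function.isPeriodicPt_minimalPeriod shw w
    rwa [(memM w).1 hw] at this
  have κeq : ∀ w ∈ M k, ∀ l, κ (shw^[l] w) = κ w := by
    intro w hw l
    ext x
    constructor
    · rintro ⟨l', rfl⟩; exact ⟨l' + l, by rw [Function.iterate_add_apply]⟩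
    · rintro ⟨l', rfl⟩
      refine ⟨l' + (k * l - l), ?_⟩
      have h1 : l ≤ k * l := Nat.le_mul_of_pos_left _ hk
      rw [← Function.iterate_add_apply, add_assoc, Nat.sub_add_cancel h1,
        Function.iterate_add_apply]
      congr 1
      exact ((perM w hw).mul_const l).symm
  have hρ : ∀ C ∈ (M k).image κ, ∃ w ∈ M k, κ w = C := fun C hC => Finset.mem_image.1 hC
  choose! ρ ρ1 ρ2 using hρ
  have cW : (((M k).image κ).image ρ).card = ((M k).image κ).card := by
    apply Finset.card_image_of_injOn
    intro C hC C' hC' h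
    rw [← ρ2 C hC, ← ρ2 C' hC', h]
  refine ⟨((M k).image κ).image ρ, ?_, ?_, ?_⟩
  · rw [hmob, cW]
    have := Finset.card_le_mul_card_image (f := κ) (M k) k (by
      intro C hC
      obtain ⟨w, hw, rfl⟩ := Finset.mem_image.1 hC
      refine (Finset.card_le_card (t := (Finset.range k).image (fun l => shw^[l] w)) ?_).trans
        (Finset.card_image_le.trans (Finset.card_range k).le)
      intro x hx
      rw [Finset.mem_filter] at hx
      have : x ∈ κ x := ⟨0, rfl⟩
      rw [hx.2] at this
      obtain ⟨l, rfl⟩ := this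
      rw [Finset.mem_image]
      exact ⟨l % k, Finset.mem_range.2 (Nat.mod_lt _ hk), (perM w hw).iterate_mod_apply l⟩)
    exact_mod_cast this
  · intro w hw
    obtain ⟨C, hC, rfl⟩ := Finset.mem_image.1 hw
    have hM := ρ1 C hC
    refine ⟨fun n => ?_, fun l h1 h2 h3 => ?_⟩
    · have := congrFun (perM _ hM) n
      rwa [shw_it] at this
    · refine Function.not_isPeriodicPt_of_pos_of_lt_minimalPeriod (f := shw) (x := ρ C) (n := l)
        (by omega) (by rw [(memM _).1 hM]; exact h2) ?_
      show shw^[l] _ = _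
      ext n; rw [shw_it]; exact h3 n
  · intro w hw w' hw' l h
    obtain ⟨C, hC, rfl⟩ := Finset.mem_image.1 hw
    obtain ⟨C', hC', rfl⟩ := Finset.mem_image.1 hw'
    have : ρ C' = shw^[l] (ρ C) := by ext n; rw [shw_it]; exact h n
    have h2 := κeq _ (ρ1 C hC) l
    rw [← this, ρ2 _ hC, ρ2 _ hC'] at h2
    rw [h2]

/-- Theorem 4.2: for `μ` large, for each `k ≥ 2` the equation
`u'' + (a⁺ - μ a⁻) g(u) = 0` has at least `S_{2^m}(k)` positive subharmonic solutions of
order `k`, pairwise not in the same periodicity class. -/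
theorem stmt7 (T : ℝ) (hT : 0 < T) (a : ℝ → ℝ)
    (haper : Function.Periodic a T)
    (haloc : MeasureTheory.LocallyIntegrable a MeasureTheory.volume)
    (m : ℕ) (hm : 1 ≤ m) (hasign : SignCond a T m)
    (g : ℝ → ℝ) (hgC1 : ContDiffOn ℝ 1 g (Set.Ici 0))
    (hg0 : g 0 = 0) (hgpos : ∀ s : ℝ, 0 < s → 0 < g s)
    (hg'0 : derivWithin g (Set.Ici 0) 0 = 0)
    (hgsup : Filter.Tendsto (fun s => g s / s) Filter.atTop Filter.atTop) :
    ∃ μstar : ℝ, 0 < μstar ∧ ∀ μ : ℝ, μstar < μ → ∀ k : ℕ, 2 ≤ k →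
      ∃ U : Finset (ℝ → ℝ), necklaceCount (2 ^ m) k ≤ (U.card : ℤ) ∧
        (∀ u ∈ U,
          IsSol (fun t s => (max (a t) 0 - μ * max (-a t) 0) * g s) u ∧
          (∀ t, 0 < u t) ∧ IsSubharmonic u T k) ∧
        ∀ u ∈ U, ∀ v ∈ U, u ≠ v → ¬ SameClass u v T := by
  obtain ⟨c, σ, α, β, τ, D⟩ := geom_exists hm haper haloc hasign
  obtain ⟨μs, hμs, f, R, G, r, e, η, Y, hfg, hμ⟩ := setup D hgC1 hg0 hgpos hg'0 hgsup
  refine ⟨μs, hμs, fun μ hlt k hk => ?_⟩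
  obtain ⟨Yn, hH⟩ := hμ μ hlt
  obtain ⟨W, hW1, hW2, hW3⟩ := comb (Fin m → Bool) k (by omega)
  have hm0 : 0 < m := hm
  set q : ℝ → ℝ := fun t => max (a t) 0 - μ * max (-a t) 0 with hq
  have qper : Function.Periodic q T := fun t => by simp only [hq, haper t]
  have sft : ∀ (x : ℕ → ℝ), (∀ j, x (j + m) = x j + T) →
      ∀ l j, x (j + l * m) = x j + (l : ℝ) * T := by
    intro x hx l
    induction l with
    | zero => intro j; simp
    | succ l ih =>
      intro j
      rw [show j + (l + 1) * m = (j + l * m) + m by ring, hx, ih]; push_cast; ring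
  let code : (ℕ → Fin m → Bool) → ℕ → Bool := fun w j => w (j / m) ⟨j % m, Nat.mod_lt _ hm0⟩
  have code_add : ∀ w l j, code w (j + l * m) = code (fun n => w (n + l)) j := by
    intro w l j
    simp only [code, Nat.add_mul_mod_self_right, Nat.add_mul_div_right _ _ hm0]
  have code_inj : ∀ w w', (∀ j, code w j = code w' j) → ∀ n, w n = w' n := by
    intro w w' h n
    ext i
    have := h (i + n * m)
    simp only [code, Nat.add_mul_mod_self_right, Nat.add_mul_div_right _ _ hm0,
      Nat.mod_eq_of_lt i.2, Nat.div_eq_of_lt i.2, zero_add] at this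
    rw [this]
  have key : ∀ w ∈ W, ∃ u v, GSol q f u v ∧ Function.Periodic u ((k : ℝ) * T) ∧
      (∀ t, 0 < u t) ∧ (∀ t, u t ≤ R) ∧
      ∀ j, code w j = true ↔ r < u (σ j) + (τ j - σ j) * v (σ j) := by
    intro w hw
    obtain ⟨u, v, h1, h2, _, h4, h5, h6⟩ := per_sol (q := q) (f := f) (N := k * m)
      (S := (k : ℝ) * T) (Nat.mul_pos (by omega) hm0)
      (mul_pos (by exact_mod_cast (by omega : 0 < k)) hT) (qper.nat_mul k) hH
      (sft c D.pc k) (sft σ D.pσ k) (sft τ D.pτ k) (code w)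
      (fun j => by
        rw [code_add]
        rw [show (fun n => w (n + k)) = w from funext (hW2 w hw).1])
      (by
        by_contra hcon
        push Not at hcon
        refine (hW2 w hw).2 1 le_rfl (by omega) ?_
        refine code_inj _ _ (fun j => ?_)
        rw [← code_add]
        have h1 := hcon (j + 1 * m)
        have h2 := hcon j
        rw [ne_eq, Bool.not_eq_true] at h1 h2
        rw [h1, h2])
    exact ⟨u, v, h1, h2, h4, h5, h6⟩
  choose! u v k1 k2 k3 k4 k5 using key
  have main : ∀ w ∈ W, ∀ w' ∈ W, ∀ l : ℕ, (∀ t, u w' t = u w (t + (l : ℝ) * T)) →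
      ∀ n, w' n = w (n + l) := by
    intro w hw w' hw' l h
    have hv : ∀ t, v w' t = v w (t + (l : ℝ) * T) := by
      intro t
      have d1 := (k1 w' hw').1 t
      have d2 := ((k1 w hw).1 (t + (l : ℝ) * T)).comp_add_const t ((l : ℝ) * T)
      rw [show u w' = fun t => u w (t + (l : ℝ) * T) from funext h] at d1
      exact d1.unique d2
    refine code_inj w' (fun n => w (n + l)) (fun j => ?_)
    rw [← code_add, Bool.eq_iff_iff, k5 w' hw', k5 w hw, h, hv, sft σ D.pσ, sft τ D.pτ]
    rw [show τ j + (l : ℝ) * T - (σ j + (l : ℝ) * T) = τ j - σ j by ring]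
  have inj : ∀ w ∈ W, ∀ w' ∈ W, u w = u w' → w = w' := by
    intro w hw w' hw' h
    refine hW3 w hw w' hw' 0 (main w hw w' hw' 0 (fun t => ?_))
    rw [h]; simp
  classical
  refine ⟨W.image u, ?_, ?_, ?_⟩
  · rw [Finset.card_image_of_injOn (fun w hw w' hw' h => inj w hw w' hw' h)]
    have hk0 : (0 : ℤ) < k := by exact_mod_cast (by omega : 0 < k)
    unfold necklaceCount
    refine Int.ediv_le_of_le_mul hk0 ?_
    have hc : Fintype.card (Fin m → Bool) = 2 ^ m := by simp
    rw [hc] at hW1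
    rw [mul_comm]
    exact hW1
  · intro x hx
    obtain ⟨w, hw, rfl⟩ := Finset.mem_image.1 hx
    have hfu : ∀ t, f (u w t) = g (u w t) := fun t => hfg _ (k3 w hw t).le (k4 w hw t)
    have hgu : Continuous (fun t => g (u w t)) := by
      have hcu : Continuous (u w) := (k1 w hw).contu
      exact hgC1.continuousOn.comp_continuous hcu (fun t => (k3 w hw t).le)
    refine ⟨⟨v w, (k1 w hw).1, ?_, fun t => ?_⟩, k3 w hw, k2 w hw, fun l h1 h2 h3 => ?_⟩
    · exact (q_li haloc μ).mul_continuous hgu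
    · rw [(k1 w hw).2.2 0 t]
      simp only [hfu]
      rfl
    · exact (hW2 w hw).2 l h1 h2 (fun n => (main w hw w hw l (fun t => (h3 t).symm) n).symm)
  · intro x hx y hy hxy hsc
    obtain ⟨w, hw, rfl⟩ := Finset.mem_image.1 hx
    obtain ⟨w', hw', rfl⟩ := Finset.mem_image.1 hy
    obtain ⟨l, hl⟩ := hsc
    apply hxy
    have hk0 : (k : ℤ) ≠ 0 := by exact_mod_cast (by omega : k ≠ 0)
    obtain ⟨n, hn⟩ := Int.eq_ofNat_of_zero_le (Int.emod_nonneg l hk0)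
    have hdm : l = n + (k : ℤ) * (l / k) := by
      have := Int.emod_add_mul_ediv l k
      rw [hn] at this; exact this.symm
    have hdm' : (l : ℝ) = n + (k : ℝ) * ((l / k : ℤ) : ℝ) := by exact_mod_cast congrArg (Int.cast (R := ℝ)) hdm
    rw [hW3 w hw w' hw' n (main w hw w' hw' n (fun t => ?_))]
    rw [hl t, hdm']
    have := ((k2 w hw).int_mul (l / k)) (t + (n : ℝ) * T)
    rw [← this]
    congr 1
    ring
end

section
/- Let T > 0, let q : ℝ → ℝ be T-periodic, locally integrable and not identically zero (a.e.), let g ∈ C¹([0,∞)) satisfy (g*) together with g'(s) > 0 for all s > 0, and let k ≥ 1 be an integer. If there exists a positive kT-periodic solution u of u'' + q(t) g(u) = 0, then k ∫_0^T q(t) dt = − ∫_0^{kT} (u'(t)/g(u(t)))² g'(u(t)) dt < 0; in particular ∫_0^T q(t) dt < 0. -/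
open MeasureTheory Set Filter

/-- if `g' > 0` on `(0,∞)` and `u` is a positive `kT`-periodic solution of
`u'' + q(t)g(u) = 0` with `q` not a.e. zero, then
`k ∫_0^T q = -∫_0^{kT} (u'/g(u))² g'(u) < 0`; in particular `∫_0^T q < 0`. -/
theorem stmt9 (T : ℝ) (hT : 0 < T) (q : ℝ → ℝ)
    (hqper : Function.Periodic q T)
    (hqloc : MeasureTheory.LocallyIntegrable q MeasureTheory.volume)
    (hqne : ¬ (∀ᵐ t ∂MeasureTheory.volume, q t = 0))
    (g : ℝ → ℝ) (hgC1 : ContDiffOn ℝ 1 g (Set.Ici 0))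
    (hg0 : g 0 = 0) (hgpos : ∀ s : ℝ, 0 < s → 0 < g s)
    (hg' : ∀ s : ℝ, 0 < s → 0 < derivWithin g (Set.Ici 0) s)
    (k : ℕ) (hk : 1 ≤ k)
    (u : ℝ → ℝ) (hu : IsSol (fun t s => q t * g s) u)
    (hupos : ∀ t, 0 < u t) (huper : Function.Periodic u ((k:ℝ) * T)) :
    (k : ℝ) * (∫ t in (0:ℝ)..T, q t) =
      - ∫ t in (0:ℝ)..((k:ℝ) * T),
          (deriv u t / g (u t)) ^ 2 * derivWithin g (Set.Ici 0) (u t) ∧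
    (k : ℝ) * (∫ t in (0:ℝ)..T, q t) < 0 ∧
    (∫ t in (0:ℝ)..T, q t) < 0 := by
  obtain ⟨v, hv, hF, hveq⟩ := hu
  simp only at hF hveq
  have hkpos : (0:ℝ) < k := by exact_mod_cast hk
  have hL : 0 < (k:ℝ) * T := mul_pos hkpos hT
  have hdu : deriv u = v := funext fun t => (hv t).deriv
  rw [hdu]
  set G := derivWithin g (Set.Ici 0) with hG
  have hgd : ∀ s, 0 < s → HasDerivAt g (G s) s := by
    intro s hs
    have h1 : DifferentiableWithinAt ℝ g (Ici 0) s :=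
      hgC1.differentiableOn (by norm_num) s hs.le
    exact h1.hasDerivWithinAt.hasDerivAt (Ici_mem_nhds hs)
  have hGc : ContinuousOn G (Ici 0) :=
    hgC1.continuousOn_derivWithin (uniqueDiffOn_Ici 0) (by norm_num)
  have huc : Continuous u := continuous_iff_continuousAt.2 fun t => (hv t).continuousAt
  have hGu : Continuous (fun t => G (u t)) :=
    hGc.comp_continuous huc fun t => (hupos t).le
  have hgu : Continuous (fun t => g (u t)) :=
    hgC1.continuousOn.comp_continuous huc fun t => (hupos t).le
  have hgu0 : ∀ t, g (u t) ≠ 0 := fun t => (hgpos _ (hupos t)).ne'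
  have hFi : ∀ a b : ℝ, IntervalIntegrable (fun s => q s * g (u s)) volume a b :=
    fun a b => intervalIntegrable_iff.mpr ((hF.integrableOn_isCompact isCompact_uIcc).mono_set uIoc_subset_uIcc)
  have hvfun : v = fun t => v 0 - ∫ s in (0:ℝ)..t, q s * g (u s) := funext hveq
  have hvc : Continuous v := by
    rw [hvfun]
    exact continuous_const.sub (intervalIntegral.continuous_primitive hFi 0)
  have hvac : AbsolutelyContinuousOnInterval v 0 (k*T) := by
    rw [hvfun]
    refine AbsolutelyContinuousOnInterval.fun_sub ?_ ?_
    · exact (contDiff_const.contDiffOn).absolutelyContinuousOnInterval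
    · exact (hFi 0 (k*T)).absolutelyContinuousOnInterval_intervalIntegral (by simp)
  have hvd : ∀ᵐ t : ℝ, HasDerivAt v (-(q t * g (u t))) t := by
    filter_upwards [LocallyIntegrable.ae_hasDerivAt_integral hF] with t ht
    rw [hvfun]
    exact (ht 0).const_sub _
  have hwd : ∀ t, HasDerivAt (fun t => (g (u t))⁻¹) (-(G (u t) * v t) / (g (u t))^2) t :=
    fun t => ((hgd _ (hupos t)).comp t (hv t)).inv (hgu0 t)
  have hwC : ContDiff ℝ 1 (fun t => (g (u t))⁻¹) := by
    rw [contDiff_one_iff_deriv]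
    refine ⟨fun t => (hwd t).differentiableAt, ?_⟩
    rw [funext fun t => (hwd t).deriv]
    exact (hGu.mul hvc).neg.div (hgu.pow 2) fun t => pow_ne_zero 2 (hgu0 t)
  have hvper : Function.Periodic v (k*T) := by
    intro t
    have h1 : HasDerivAt (fun x => u (x + k*T)) (v (t + k*T)) t := (hv (t+k*T)).comp_add_const t _
    rw [show (fun x => u (x + k*T)) = u from funext huper] at h1
    exact h1.unique (hv t)
  have hparts := hvac.integral_deriv_mul_eq_sub (hwC.contDiffOn.absolutelyContinuousOnInterval)
  have hqi : ∀ a b : ℝ, IntervalIntegrable q volume a b := fun a b => intervalIntegrable_iff.mpr ((hqloc.integrableOn_isCompact isCompact_uIcc).mono_set uIoc_subset_uIcc)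
  have hIc : Continuous (fun t => (v t / g (u t)) ^ 2 * G (u t)) :=
    ((hvc.div hgu hgu0).pow 2).mul hGu
  have hcong : ∫ x in (0:ℝ)..(k*T), deriv v x * (g (u x))⁻¹ + v x * deriv (fun t => (g (u t))⁻¹) x
      = ∫ x in (0:ℝ)..(k*T), (-(q x) - (v x / g (u x)) ^ 2 * G (u x)) := by
    apply intervalIntegral.integral_congr_ae
    filter_upwards [hvd] with t ht _
    rw [ht.deriv, (hwd t).deriv]
    have := hgu0 t
    field_simp
    try ring
  rw [hcong, intervalIntegral.integral_sub (f := fun x => -(q x)) (hqi _ _).neg (hIc.intervalIntegrable _ _),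
    intervalIntegral.integral_neg] at hparts
  have e1 : v (k*T) = v 0 := by simpa using hvper 0
  have e2 : u (k*T) = u 0 := by simpa using huper 0
  rw [e1, e2, sub_self] at hparts
  have hqk : ∫ t in (0:ℝ)..(k*T), q t = k * ∫ t in (0:ℝ)..T, q t := by
    have := hqper.intervalIntegral_add_zsmul_eq k 0 hqi
    simpa using this
  rw [hqk] at hparts
  have hpos : 0 < ∫ t in (0:ℝ)..(k*T), (v t / g (u t)) ^ 2 * G (u t) := by
    refine intervalIntegral.integral_pos hL hIc.continuousOn
      (fun t _ => mul_nonneg (sq_nonneg _) (hg' _ (hupos t)).le) ?_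
    by_contra hcon
    push Not at hcon
    have hv0 : ∀ t ∈ Icc (0:ℝ) (k*T), v t = 0 := by
      intro t ht
      by_contra hne
      have h2 : 0 < (v t / g (u t)) ^ 2 * G (u t) :=
        mul_pos (by have := div_ne_zero hne (hgu0 t); positivity) (hg' _ (hupos t))
      exact absurd (hcon t ht) (not_le.2 h2)
    have hvz : v = fun _ => 0 := by
      funext t
      obtain ⟨y, hy, hy2⟩ := hvper.exists_mem_Ico₀ hL t
      rw [hy2]
      exact hv0 y ⟨hy.1, hy.2.le⟩
    apply hqne
    filter_upwards [hvd] with t ht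
    rw [hvz] at ht
    have h3 := ht.unique (hasDerivAt_const t (0:ℝ))
    have h4 : q t * g (u t) = 0 := by linarith
    exact (mul_eq_zero.1 h4).resolve_right (hgu0 t)
  have hneg : (k:ℝ) * (∫ t in (0:ℝ)..T, q t) < 0 := by linarith
  refine ⟨by linarith, hneg, ?_⟩
  by_contra hc
  push Not at hc
  have := mul_nonneg hkpos.le hc
  linarith
end

section
/- Let T > 0 and let q : ℝ → ℝ be a T-periodic locally integrable function satisfying (q#) and (q*) with positivity intervals I⁺_1, …, I⁺_m. Let g ∈ C¹([0,∞)) satisfy (g*) and (gs). Then there exists R > 0 such that for every ν ≥ 0 and every integer k ≥ 1, every nonnegative kT-periodic solution u of u'' + q(t) g(u) + ν·𝟙(t) = 0, where 𝟙 is the T-periodic extension of the indicator function of the union of the intervals I⁺_1 ∪ … ∪ I⁺_m, satisfies max over ℝ of u(t) < R. -/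
open MeasureTheory Set Filter

theorem aux_ii (f : ℝ → ℝ) (hf : LocallyIntegrable f volume) (x y : ℝ) :
    IntervalIntegrable f volume x y :=
  (hf.integrableOn_isCompact isCompact_uIcc).intervalIntegrable

theorem aux_choice (q : ℝ → ℝ) (hq : LocallyIntegrable q volume) (a b : ℝ) (hab : a < b)
    (hpos : PosOn q (Icc a b)) :
    ∃ δ : ℝ, 0 < δ ∧ a + δ < b - δ ∧ 0 < ∫ t in (a + δ)..(b - δ), q t := by
  have hii : ∀ x y, IntervalIntegrable q volume x y := fun x y => aux_ii q hq x y
  have hI : 0 < ∫ t in a..b, q t := by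
    rw [intervalIntegral.integral_of_le hab.le, ← integral_Icc_eq_integral_Ioc]
    have h0 : 0 ≤ ∫ t in Icc a b, q t := integral_nonneg_of_ae hpos.1
    rcases h0.lt_or_eq with h | h
    · exact h
    · exfalso
      apply hpos.2
      have := (integral_eq_zero_iff_of_nonneg_ae hpos.1
        (hq.integrableOn_isCompact isCompact_Icc)).1 h.symm
      exact this
  have hc : Continuous (fun δ : ℝ => ∫ t in (a + δ)..(b - δ), q t) := by
    have h1 : Continuous (fun x => ∫ t in a..x, q t) := intervalIntegral.continuous_primitive hii a
    have : (fun δ : ℝ => ∫ t in (a + δ)..(b - δ), q t) =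
        fun δ => (∫ t in a..(b - δ), q t) - ∫ t in a..(a + δ), q t := by
      funext δ
      rw [intervalIntegral.integral_interval_sub_left (hii _ _) (hii _ _)]
    rw [this]
    exact (h1.comp (by fun_prop : Continuous fun δ : ℝ => b - δ)).sub
      (h1.comp (by fun_prop : Continuous fun δ : ℝ => a + δ))
  have he : ∀ᶠ δ in nhds (0:ℝ), 0 < ∫ t in (a + δ)..(b - δ), q t := by
    apply hc.continuousAt.eventually_const_lt
    simpa using hI
  obtain ⟨ε, hε, h⟩ := Metric.eventually_nhds_iff.1 he
  refine ⟨min (ε / 2) ((b - a) / 3), lt_min (by linarith) (by linarith), ?_, ?_⟩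
  · have := min_le_right (ε / 2) ((b - a) / 3)
    linarith
  · apply h
    have h1 := min_le_left (ε / 2) ((b - a) / 3)
    have h2 : 0 < min (ε / 2) ((b - a) / 3) := lt_min (by linarith) (by linarith)
    rw [Real.dist_eq, sub_zero, abs_of_pos h2]
    linarith

theorem aux_pos (q : ℝ → ℝ) (hq : LocallyIntegrable q volume) (a b : ℝ) (hab : a < b)
    (hpos : PosOn q (Icc a b)) (g : ℝ → ℝ)
    (hg0 : g 0 = 0) (hgpos : ∀ s : ℝ, 0 < s → 0 < g s)
    (hgsup : Tendsto (fun s => g s / s) atTop atTop) :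
    ∃ R : ℝ, 0 < R ∧ ∀ v v' G : ℝ → ℝ, (∀ t, HasDerivAt v (v' t) t) →
      (∀ s t, IntervalIntegrable G volume s t) →
      (∀ s t, v' t - v' s = - ∫ x in s..t, G x) →
      (∀ s ∈ Icc a b, q s * g (v s) ≤ G s) → (∀ t, 0 ≤ v t) →
      ∀ t ∈ Icc a b, v t < R := by
  obtain ⟨δ, hδ, hcd, hQ⟩ := aux_choice q hq a b hab hpos
  set Q := ∫ t in (a + δ)..(b - δ), q t with hQdef
  have hba : 0 < b - a := by linarith
  set K := 1 + 2 * (b - a) / (δ ^ 2 * Q) with hK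
  have hKpos : 0 < K := by positivity
  obtain ⟨N, hN⟩ := eventually_atTop.1 (hgsup.eventually_ge_atTop K)
  set N' := max N 1 with hN'
  have hN'1 : 0 < N' := lt_of_lt_of_le one_pos (le_max_right _ _)
  have hgK : ∀ s, N' ≤ s → K * s ≤ g s := by
    intro s hs
    have h1 : 0 < s := lt_of_lt_of_le hN'1 hs
    have := hN s ((le_max_left _ _).trans hs)
    rwa [le_div_iff₀ h1] at this
  refine ⟨N' * (b - a) / δ, by positivity, ?_⟩
  intro v v' G hv hG hv' hGq hv0 t ht
  by_contra! hcon
  have hcont : Continuous v := continuous_iff_continuousAt.2 fun x => (hv x).continuousAt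
  obtain ⟨p, hp, hpmax⟩ := isCompact_Icc.exists_isMaxOn ⟨t, ht⟩ hcont.continuousOn
  have hpm : ∀ x ∈ Icc a b, v x ≤ v p := fun x hx => hpmax hx
  set M := v p with hM
  have hMR : N' * (b - a) / δ ≤ M := hcon.trans (hpm t ht)
  have hMpos : 0 < M := lt_of_lt_of_le (by positivity) hMR
  have hgnn : ∀ x, 0 ≤ g (v x) := by
    intro x
    rcases (hv0 x).lt_or_eq with h | h
    · exact (hgpos _ h).le
    · rw [← h, hg0]
  have hqae : ∀ᵐ x ∂volume, x ∈ Icc a b → 0 ≤ q x := (ae_restrict_iff' measurableSet_Icc).1 hpos.1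
  have hanti : AntitoneOn v' (Icc a b) := by
    intro x hx y hy hxy
    have h1 := hv' x y
    have h2 : 0 ≤ ∫ s in x..y, G s := by
      apply intervalIntegral.integral_nonneg_of_ae_restrict hxy
      rw [EventuallyLE, ae_restrict_iff' measurableSet_Icc]
      filter_upwards [hqae] with s hs hsx
      have hs' : s ∈ Icc a b := ⟨hx.1.trans hsx.1, hsx.2.trans hy.2⟩
      exact (mul_nonneg (hs hs') (hgnn s)).trans (hGq s hs')
    linarith
  have hconc : ConcaveOn ℝ (Icc a b) v := by
    apply AntitoneOn.concaveOn_of_deriv (convex_Icc a b) hcont.continuousOn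
      (fun x _ => (hv x).differentiableAt.differentiableWithinAt)
    have : deriv v = v' := funext fun x => (hv x).deriv
    rw [this]
    exact hanti.mono interior_subset
  have hlow : ∀ x ∈ Icc (a + δ) (b - δ), M * δ / (b - a) ≤ v x := by
    intro x hx
    have key : ∀ e ∈ Icc a b, ∀ θ : ℝ, δ / (b - a) ≤ θ → θ ≤ 1 → x = (1 - θ) * e + θ * p →
        M * δ / (b - a) ≤ v x := by
      intro e he θ h1 h2 hxe
      have h3 : 0 ≤ θ := le_trans (by positivity) h1
      have h4 := hconc.2 he hp (by linarith : 0 ≤ 1 - θ) h3 (by ring)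
      simp only [smul_eq_mul] at h4
      rw [← hxe, ← hM] at h4
      have h5 : 0 ≤ (1 - θ) * v e := mul_nonneg (by linarith) (hv0 e)
      have h6 : δ / (b - a) * M ≤ θ * M := mul_le_mul_of_nonneg_right h1 hMpos.le
      have h7 : M * δ / (b - a) = δ / (b - a) * M := by ring
      linarith
    rcases le_total x p with h | h
    · have hpa : 0 < p - a := by linarith [hx.1]
      refine key a ⟨le_rfl, hab.le⟩ ((x - a) / (p - a)) ?_ ?_ ?_
      · apply div_le_div₀ <;> linarith [hx.1, hp.2]
      · rw [div_le_one hpa]; linarith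
      · field_simp; ring
    · have hpa : 0 < b - p := by linarith [hx.2]
      refine key b ⟨hab.le, le_rfl⟩ ((b - x) / (b - p)) ?_ ?_ ?_
      · apply div_le_div₀ <;> linarith [hx.2, hp.1]
      · rw [div_le_one hpa]; linarith
      · field_simp; ring
  have hNM : N' ≤ M * δ / (b - a) := by
    rw [le_div_iff₀ hba]
    rwa [div_le_iff₀ hδ] at hMR
  have hsl1 : v' (a + δ) ≤ M / δ := by
    obtain ⟨ξ, hξ, h⟩ := exists_hasDerivAt_eq_slope v v' (by linarith : a < a + δ)
      hcont.continuousOn (fun x _ => hv x)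
    have h1 : v' (a + δ) ≤ v' ξ :=
      hanti ⟨hξ.1.le, by linarith [hξ.2]⟩ ⟨by linarith, by linarith⟩ hξ.2.le
    have h2 : v' ξ ≤ M / δ := by
      rw [h, show a + δ - a = δ by ring]
      apply div_le_div_of_nonneg_right _ hδ.le
      linarith [hv0 a, hpm (a + δ) ⟨by linarith, by linarith⟩]
    exact h1.trans h2
  have hsl2 : -(M / δ) ≤ v' (b - δ) := by
    obtain ⟨ξ, hξ, h⟩ := exists_hasDerivAt_eq_slope v v' (by linarith : b - δ < b)
      hcont.continuousOn (fun x _ => hv x)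
    have h1 : v' ξ ≤ v' (b - δ) :=
      hanti ⟨by linarith, by linarith⟩ ⟨by linarith [hξ.1], hξ.2.le⟩ hξ.1.le
    have h2 : -(M / δ) ≤ v' ξ := by
      rw [h, show b - (b - δ) = δ by ring, ← neg_div]
      apply div_le_div_of_nonneg_right _ hδ.le
      linarith [hv0 b, hpm (b - δ) ⟨by linarith, by linarith⟩]
    exact h2.trans h1
  have hint : K * (M * δ / (b - a)) * Q ≤ ∫ x in (a + δ)..(b - δ), G x := by
    rw [hQdef, ← intervalIntegral.integral_const_mul]
    apply intervalIntegral.integral_mono_ae_restrict hcd.le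
      ((aux_ii q hq _ _).const_mul _) (hG _ _)
    rw [EventuallyLE, ae_restrict_iff' measurableSet_Icc]
    filter_upwards [hqae] with s hs hsx
    have hs' : s ∈ Icc a b := ⟨by linarith [hsx.1], by linarith [hsx.2]⟩
    refine le_trans ?_ (hGq s hs')
    rw [mul_comm]
    apply mul_le_mul_of_nonneg_left _ (hs hs')
    exact (mul_le_mul_of_nonneg_left (hlow s hsx) hKpos.le).trans
      (hgK _ (hNM.trans (hlow s hsx)))
  have hfin := hv' (a + δ) (b - δ)
  have hcalc : K * (M * δ / (b - a)) * Q = M * δ * Q / (b - a) + 2 * (M / δ) := by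
    rw [hK]; field_simp
  have : 0 < M * δ * Q / (b - a) := by positivity
  linarith

theorem aux_neg (a b R : ℝ) (v v' G : ℝ → ℝ) (hv : ∀ t, HasDerivAt v (v' t) t)
    (hv' : ∀ s t, v' t - v' s = - ∫ x in s..t, G x)
    (hG : ∀ᵐ s ∂volume, s ∈ Icc a b → G s ≤ 0) (ha : v a < R) (hb : v b < R) :
    ∀ t ∈ Icc a b, v t < R := by
  intro t ht
  have hcont : Continuous v := continuous_iff_continuousAt.2 fun x => (hv x).continuousAt
  have hmono : MonotoneOn v' (Icc a b) := by
    intro x hx y hy hxy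
    have h1 := hv' x y
    have h2 : 0 ≤ ∫ s in x..y, - G s := by
      apply intervalIntegral.integral_nonneg_of_ae_restrict hxy
      rw [EventuallyLE, ae_restrict_iff' measurableSet_Icc]
      filter_upwards [hG] with s hs hsx
      have hs' : s ∈ Icc a b := ⟨hx.1.trans hsx.1, hsx.2.trans hy.2⟩
      simpa using hs hs'
    rw [intervalIntegral.integral_neg] at h2
    linarith
  have hconv : ConvexOn ℝ (Icc a b) v := by
    apply MonotoneOn.convexOn_of_deriv (convex_Icc a b) hcont.continuousOn
      (fun x _ => (hv x).differentiableAt.differentiableWithinAt)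
    have : deriv v = v' := funext fun x => (hv x).deriv
    rw [this]
    exact hmono.mono interior_subset
  have hab : a ≤ b := ht.1.trans ht.2
  have := hconv.le_max_of_mem_Icc ⟨le_rfl, hab⟩ ⟨hab, le_rfl⟩ ht
  exact this.trans_lt (max_lt ha hb)

theorem aux_find (σ : ℕ → ℝ) (s : ℝ) (h0 : σ 0 ≤ s) (n : ℕ) (hn : s < σ n) :
    ∃ j < n, σ j ≤ s ∧ s < σ (j + 1) := by
  induction n with
  | zero => linarith
  | succ n ih =>
    by_cases h : s < σ n
    · obtain ⟨j, hj, h⟩ := ih h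
      exact ⟨j, by omega, h⟩
    · exact ⟨n, by omega, by linarith, hn⟩

/-- a priori bound: there is `R > 0` such that every nonnegative
`kT`-periodic solution of `u'' + q(t) g(u) + ν 𝟙(t) = 0` (with `𝟙` the `T`-periodic
extension of the indicator of `I⁺_1 ∪ … ∪ I⁺_m`, `I⁺_i = [σ(2i), σ(2i+1)]`) stays below
`R`, uniformly in `ν ≥ 0` and `k ≥ 1`. -/
theorem stmt10 (T : ℝ) (hT : 0 < T) (q : ℝ → ℝ)
    (hqper : Function.Periodic q T)
    (hqloc : MeasureTheory.LocallyIntegrable q MeasureTheory.volume)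
    (hqmean : (∫ t in (0:ℝ)..T, q t) < 0)
    (m : ℕ) (hm : 1 ≤ m) (σ : ℕ → ℝ)
    (hσ0 : σ 0 = 0) (hσT : σ (2*m) = T) (hσmono : ∀ i < 2*m, σ i < σ (i+1))
    (hqpos : ∀ i < m, PosOn q (Set.Icc (σ (2*i)) (σ (2*i+1))))
    (hqneg : ∀ i < m, PosOn (fun t => - q t) (Set.Icc (σ (2*i+1)) (σ (2*i+2))))
    (g : ℝ → ℝ) (hgC1 : ContDiffOn ℝ 1 g (Set.Ici 0))
    (hg0 : g 0 = 0) (hgpos : ∀ s : ℝ, 0 < s → 0 < g s)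
    (hg'0 : derivWithin g (Set.Ici 0) 0 = 0)
    (hgsup : Filter.Tendsto (fun s => g s / s) Filter.atTop Filter.atTop) :
    ∃ R : ℝ, 0 < R ∧ ∀ ν : ℝ, 0 ≤ ν → ∀ k : ℕ, 1 ≤ k → ∀ u : ℝ → ℝ,
      IsSol (fun t s => q t * g s +
        ν * Set.indicator
              {t : ℝ | ∃ i < m, t - T * ((⌊t / T⌋ : ℤ) : ℝ) ∈
                Set.Icc (σ (2*i)) (σ (2*i+1))}
              (fun _ => (1:ℝ)) t) u →
      (∀ t, 0 ≤ u t) → Function.Periodic u ((k:ℝ) * T) →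
      ∀ t, u t < R := by
  have hloc : ∀ i, ∃ R : ℝ, 0 < R ∧ (i < m → ∀ v v' G : ℝ → ℝ, (∀ t, HasDerivAt v (v' t) t) →
      (∀ s t, IntervalIntegrable G volume s t) →
      (∀ s t, v' t - v' s = - ∫ x in s..t, G x) →
      (∀ s ∈ Icc (σ (2*i)) (σ (2*i+1)), q s * g (v s) ≤ G s) → (∀ t, 0 ≤ v t) →
      ∀ t ∈ Icc (σ (2*i)) (σ (2*i+1)), v t < R) := by
    intro i
    by_cases hi : i < m
    · obtain ⟨R, hR, h⟩ := aux_pos q hqloc _ _ (hσmono (2*i) (by omega)) (hqpos i hi) g hg0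
        hgpos hgsup
      exact ⟨R, hR, fun _ => h⟩
    · exact ⟨1, one_pos, fun h => absurd h hi⟩
  choose Rf hRf hRb using hloc
  have hle : ∀ i < m, Rf i ≤ ∑ j ∈ Finset.range m, Rf j := fun i hi =>
    Finset.single_le_sum (fun j _ => (hRf j).le) (Finset.mem_range.2 hi)
  refine ⟨∑ j ∈ Finset.range m, Rf j, (hRf 0).trans_le (hle 0 (by omega)), ?_⟩
  intro ν hν k _ u hu hu0 _ t
  set R := ∑ j ∈ Finset.range m, Rf j with hRdef
  obtain ⟨u', hu1, hu2, hu3⟩ := hu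
  have hmonoσ : ∀ i j, i ≤ j → j ≤ 2*m → σ i ≤ σ j := by
    intro i j hij
    induction j, hij using Nat.le_induction with
    | base => intro _; exact le_rfl
    | succ j _ ih => intro h; exact (ih (by omega)).trans (hσmono j (by omega)).le
  set A : Set ℝ := {t : ℝ | ∃ i < m, t - T * ((⌊t / T⌋ : ℤ) : ℝ) ∈
                Set.Icc (σ (2*i)) (σ (2*i+1))} with hA
  set F : ℝ → ℝ := fun s => q s * g (u s) + ν * A.indicator (fun _ => (1:ℝ)) s with hF
  have hFi : ∀ x y, IntervalIntegrable F volume x y := fun x y => aux_ii F hu2 x y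
  have hqn : ∀ (n : ℤ) (x : ℝ), q (x + n * T) = q x := fun n x => hqper.int_mul n x
  have hind : ∀ x, 0 ≤ ν * A.indicator (fun _ => (1:ℝ)) x := fun x =>
    mul_nonneg hν (indicator_nonneg (fun _ _ => zero_le_one) x)
  have hv1 : ∀ n : ℤ, ∀ x, HasDerivAt (fun x => u (x + n * T)) (u' (x + n * T)) x := fun n x =>
    (hu1 (x + n * T)).comp_add_const x (n * T)
  have hv2 : ∀ n : ℤ, ∀ x y, u' (y + n * T) - u' (x + n * T)
      = - ∫ s in x..y, F (s + n * T) := by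
    intro n x y
    rw [intervalIntegral.integral_comp_add_right (fun s => F s), hu3 (y + n * T), hu3 (x + n * T),
      ← intervalIntegral.integral_interval_sub_left (hFi 0 (y + n * T)) (hFi 0 (x + n * T))]
    ring
  have hP : ∀ n : ℤ, ∀ i < m, ∀ x ∈ Icc (σ (2*i)) (σ (2*i+1)), u (x + n * T) < R := by
    intro n i hi x hx
    refine lt_of_lt_of_le (hRb i hi (fun x => u (x + n * T)) (fun x => u' (x + n * T))
      (fun s => F (s + n * T)) (hv1 n) ?_ (hv2 n) ?_ (fun t => hu0 _) x hx) (hle i hi)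
    · intro s t
      have := (hFi (s + n * T) (t + n * T)).comp_add_right (n * T)
      simpa using this
    · intro s _
      simp only [hF, hqn]
      linarith [hind (s + n * T)]
  set n := ⌊t / T⌋ with hn
  set s := t - T * (n : ℝ) with hs
  have hts : t = s + n * T := by rw [hs]; ring
  have hs0 : 0 ≤ s := by
    have := Int.floor_le (t / T)
    rw [le_div_iff₀ hT] at this
    rw [hs]; linarith
  have hsT : s < T := by
    have := Int.lt_floor_add_one (t / T)
    rw [div_lt_iff₀ hT] at this
    rw [hs]; linarith
  obtain ⟨j, hj, hj1, hj2⟩ := aux_find σ s (by rw [hσ0]; exact hs0) (2*m) (by rw [hσT]; exact hsT)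
  rw [hts]
  rcases Nat.even_or_odd' j with ⟨i, rfl | rfl⟩
  · exact hP n i (by omega) s ⟨hj1, hj2.le⟩
  · have hi : i < m := by omega
    refine aux_neg (σ (2*i+1)) (σ (2*i+2)) R (fun x => u (x + n * T)) (fun x => u' (x + n * T))
      (fun s => F (s + n * T)) (hv1 n) (hv2 n) ?_ ?_ ?_ s ⟨hj1, hj2.le⟩
    · have h1 : ∀ᵐ x ∂volume, x ∈ Icc (σ (2*i+1)) (σ (2*i+2)) → 0 ≤ - q x :=
        (ae_restrict_iff' measurableSet_Icc).1 (hqneg i hi).1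
      have h2 : ∀ c : ℝ, ∀ᵐ x ∂(volume : Measure ℝ), x ≠ c := fun c => by
        simp [ae_iff]
      filter_upwards [h1, h2 (σ (2*i+1)), h2 (σ (2*i+2))] with x hx hxa hxb hxI
      have hxa' : σ (2*i+1) < x := lt_of_le_of_ne hxI.1 (Ne.symm hxa)
      have hxb' : x < σ (2*i+2) := lt_of_le_of_ne hxI.2 hxb
      have hx0 : 0 ≤ x := by
        have := hmonoσ 0 (2*i+1) (by omega) (by omega)
        linarith
      have hxT : x < T := by
        have := hmonoσ (2*i+2) (2*m) (by omega) (by omega)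
        linarith
      have hnot : x + n * T ∉ A := by
        rintro ⟨l, hl, hmem⟩
        have hfl : ⌊(x + n * T) / T⌋ = n := by
          rw [Int.floor_eq_iff, le_div_iff₀ hT, div_lt_iff₀ hT]
          constructor <;> linarith
        rw [hfl, show x + n * T - T * (n : ℝ) = x by ring] at hmem
        rcases le_or_gt l i with h | h
        · have := hmonoσ (2*l+1) (2*i+1) (by omega) (by omega)
          linarith [hmem.2]
        · have := hmonoσ (2*i+2) (2*l) (by omega) (by omega)
          linarith [hmem.1]
      have hgnn : 0 ≤ g (u (x + n * T)) := by
        rcases (hu0 (x + n * T)).lt_or_eq with h | h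
        · exact (hgpos _ h).le
        · rw [← h, hg0]
      simp only [hF, hqn, indicator_of_notMem hnot, mul_zero, add_zero]
      exact mul_nonpos_of_nonpos_of_nonneg (by linarith [hx hxI]) hgnn
    · exact hP n i hi _ ⟨(hσmono (2*i) (by omega)).le, le_rfl⟩
    · by_cases him : i + 1 < m
      · exact hP n (i+1) him _ ⟨le_rfl, (hσmono (2*(i+1)) (by omega)).le⟩
      · have h1 : 2*i+2 = 2*m := by omega
        have h2 := hP (n+1) 0 (by omega) (σ (2*0)) ⟨le_rfl, (hσmono (2*0) (by omega)).le⟩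
        rw [h1, hσT]
        have h3 : σ (2*0) + ((n+1 : ℤ) : ℝ) * T = T + n * T := by
          rw [mul_zero, hσ0]; push_cast; ring
        rw [h3] at h2
        exact h2
end

section
/- Let T > 0, let q : ℝ → ℝ be T-periodic and locally integrable satisfying (q*), and let g ∈ C¹([0,∞)) satisfy (g*). Define f : ℝ × ℝ → ℝ by f(t,s) = −s for s ≤ 0 and f(t,s) = q(t) g(s) for s ≥ 0. Then every T-periodic solution u of u'' + f(t,u) = 0 satisfies u(t) ≥ 0 for all t ∈ ℝ, and if moreover u is not identically zero then u(t) > 0 for all t ∈ ℝ; in particular, every nontrivial T-periodic solution of u'' + f(t,u) = 0 is a positive T-periodic solution of u'' + q(t) g(u) = 0. -/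
open MeasureTheory Set Filter

lemma aux_nonneg (T : ℝ) (hT : 0 < T) (q g u u' : ℝ → ℝ)
    (hd : ∀ t, HasDerivAt u (u' t) t)
    (hF : LocallyIntegrable (fun s => if u s ≤ 0 then -u s else q s * g (u s)) volume)
    (hint : ∀ t, u' t = u' 0 - ∫ s in (0:ℝ)..t, (if u s ≤ 0 then -u s else q s * g (u s)))
    (huper : Function.Periodic u T) : ∀ t, 0 ≤ u t := by
  have hc : Continuous u := continuous_iff_continuousAt.2 fun t => (hd t).continuousAt
  have hII : ∀ a b : ℝ, IntervalIntegrable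
      (fun s => if u s ≤ 0 then -u s else q s * g (u s)) volume a b :=
    fun a b => (hF.integrableOn_isCompact isCompact_uIcc).intervalIntegrable
  obtain ⟨t0, -, ht0⟩ := (isCompact_Icc (a := (0:ℝ)) (b := T)).exists_isMinOn
    ⟨0, by simp [hT.le]⟩ hc.continuousOn
  have hmin : ∀ t, u t0 ≤ u t := by
    intro t
    obtain ⟨y, hy, hyt⟩ := huper.exists_mem_Ico₀ hT t
    rw [hyt]
    exact ht0 ⟨hy.1, hy.2.le⟩
  by_contra hneg
  push Not at hneg
  obtain ⟨t2, ht2⟩ := hneg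
  have hu0 : u t0 < 0 := (hmin t2).trans_lt ht2
  have hd0 : u' t0 = 0 := by
    have : IsLocalMin u t0 := Filter.Eventually.of_forall hmin
    exact this.hasDerivAt_eq_zero (hd t0)
  have hev : ∀ᶠ t in nhds t0, u t < 0 := hc.continuousAt.eventually_lt_const hu0
  obtain ⟨δ, hδ, hb⟩ := Metric.eventually_nhds_iff.1 hev
  have hloc : ∀ t ∈ Ioo t0 (t0 + δ), u' t < 0 := by
    intro t ht
    have h1 : u' t = - ∫ s in t0..t, (if u s ≤ 0 then -u s else q s * g (u s)) := by
      have := intervalIntegral.integral_add_adjacent_intervals (hII 0 t0) (hII t0 t)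
      have e1 := hint t
      have e2 := hint t0
      linarith
    have h2 : 0 < ∫ s in t0..t, (if u s ≤ 0 then -u s else q s * g (u s)) := by
      apply intervalIntegral.intervalIntegral_pos_of_pos_on (hII _ _) _ ht.1
      intro x hx
      have : u x < 0 := hb (by
        rw [Real.dist_eq, abs_of_pos (by linarith [hx.1])]; linarith [hx.2, ht.2])
      rw [if_pos this.le]; linarith
    linarith
  obtain ⟨c, hc1, hc2⟩ := exists_hasDerivAt_eq_slope u u' (show t0 < t0 + δ by linarith)
    hc.continuousOn (fun x _ => hd x)
  have := hloc c hc1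
  have h3 := hmin (t0 + δ)
  have : 0 ≤ (u (t0 + δ) - u t0) / (t0 + δ - t0) :=
    div_nonneg (by linarith) (by linarith)
  linarith

lemma aux_open (q g u u' : ℝ → ℝ)
    (hqloc : LocallyIntegrable q volume)
    (hgC1 : ContDiffOn ℝ 1 g (Set.Ici 0)) (hg0 : g 0 = 0)
    (hd : ∀ t, HasDerivAt u (u' t) t)
    (hF : LocallyIntegrable (fun s => if u s ≤ 0 then -u s else q s * g (u s)) volume)
    (hint : ∀ t, u' t = u' 0 - ∫ s in (0:ℝ)..t, (if u s ≤ 0 then -u s else q s * g (u s)))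
    (hnn : ∀ t, 0 ≤ u t) (t0 : ℝ) (ht0 : u t0 = 0) : ∀ᶠ t in nhds t0, u t = 0 := by
  have hc : Continuous u := continuous_iff_continuousAt.2 fun t => (hd t).continuousAt
  have hII : ∀ a b : ℝ, IntervalIntegrable
      (fun s => if u s ≤ 0 then -u s else q s * g (u s)) volume a b :=
    fun a b => (hF.integrableOn_isCompact isCompact_uIcc).intervalIntegrable
  have hd0 : u' t0 = 0 := by
    have : IsLocalMin u t0 := Filter.Eventually.of_forall fun t => by rw [ht0]; exact hnn t
    exact this.hasDerivAt_eq_zero (hd t0)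
  have hgd : DifferentiableWithinAt ℝ g (Ici 0) 0 :=
    (hgC1.differentiableOn (by norm_num)) 0 (by simp)
  obtain ⟨C, hCpos, hC⟩ := hgd.isBigO_sub.exists_pos
  have hC' := hC.bound
  have htend : Tendsto u (nhds t0) (nhdsWithin 0 (Ici 0)) :=
    tendsto_nhdsWithin_iff.2 ⟨ht0 ▸ hc.continuousAt, Filter.Eventually.of_forall hnn⟩
  obtain ⟨δ, hδ, hb⟩ := Metric.eventually_nhds_iff.1 (htend.eventually hC')
  set Q : ℝ := ∫ s in Icc (t0 - 1) (t0 + 1), |q s| with hQ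
  have hQ0 : 0 ≤ Q := integral_nonneg fun s => abs_nonneg _
  have hqI : IntegrableOn (fun s => |q s|) (Icc (t0 - 1) (t0 + 1)) volume :=
    (hqloc.integrableOn_isCompact isCompact_Icc).abs
  obtain ⟨ε, hε, hε1, hεδ, hεQ⟩ : ∃ ε > 0, ε ≤ 1 ∧ ε < δ ∧ C * Q * ε < 1 := by
    refine ⟨min 1 (min (δ/2) (1 / (C * Q + 1))), by positivity, min_le_left _ _, ?_, ?_⟩
    · exact ((min_le_right _ _).trans (min_le_left _ _)).trans_lt (by linarith)
    · have h0 : 0 ≤ C * Q := by positivity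
      calc C * Q * _ ≤ C * Q * (1 / (C * Q + 1)) := by
            gcongr
            exact (min_le_right _ _).trans (min_le_right _ _)
        _ < 1 := by
            rw [mul_one_div, div_lt_one (by linarith)]; linarith
  set K := Icc (t0 - ε) (t0 + ε) with hK
  have ht0K : t0 ∈ K := ⟨by linarith, by linarith⟩
  obtain ⟨t1, ht1, hmax⟩ := (isCompact_Icc (a := t0 - ε) (b := t0 + ε)).exists_isMaxOn
    ⟨t0, ht0K⟩ hc.continuousOn
  have hmax' : ∀ t ∈ K, u t ≤ u t1 := fun t ht => hmax ht
  have hS := hnn t1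
  have hFb : ∀ t ∈ K, ‖(if u t ≤ 0 then -u t else q t * g (u t))‖ ≤ C * u t1 * |q t| := by
    intro t ht
    split_ifs with h
    · have : u t = 0 := le_antisymm h (hnn t)
      rw [this]; simp; positivity
    · have h1 := hb (y := t) (by
        rw [Real.dist_eq, abs_lt]; constructor <;> linarith [ht.1, ht.2])
      rw [hg0, sub_zero, sub_zero, Real.norm_eq_abs, Real.norm_eq_abs, abs_of_nonneg (hnn t)] at h1
      rw [Real.norm_eq_abs, abs_mul, mul_comm]
      have h2 : C * u t ≤ C * u t1 := mul_le_mul_of_nonneg_left (hmax' t ht) hCpos.le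
      exact mul_le_mul_of_nonneg_right (h1.trans h2) (abs_nonneg _)
  have hbd : ∀ t ∈ K, ‖u' t‖ ≤ C * u t1 * Q := by
    intro t ht
    have h1 : u' t = - ∫ s in t0..t, (if u s ≤ 0 then -u s else q s * g (u s)) := by
      have := intervalIntegral.integral_add_adjacent_intervals (hII 0 t0) (hII t0 t)
      have e1 := hint t
      have e2 := hint t0
      linarith
    have hsub : uIoc t0 t ⊆ K := uIoc_subset_uIcc.trans (uIcc_subset_Icc ht0K ht)
    have hsub' : uIoc t0 t ⊆ Icc (t0 - 1) (t0 + 1) :=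
      hsub.trans (Icc_subset_Icc (by linarith) (by linarith))
    rw [h1, norm_neg]
    refine intervalIntegral.norm_integral_le_integral_norm_uIoc.trans ?_
    calc _ ≤ ∫ s in uIoc t0 t, C * u t1 * |q s| := by
          apply setIntegral_mono_on (hII t0 t).def'.norm
            ((hqI.mono_set hsub').const_mul _) measurableSet_uIoc
          intro x hx
          exact hFb x (hsub hx)
      _ = C * u t1 * ∫ s in uIoc t0 t, |q s| := integral_const_mul _ _
      _ ≤ C * u t1 * Q := by
          apply mul_le_mul_of_nonneg_left _ (by positivity)
          exact setIntegral_mono_set hqI (Filter.Eventually.of_forall fun s => abs_nonneg _)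
            hsub'.eventuallyLE
  have hmv := (convex_Icc (t0 - ε) (t0 + ε)).norm_image_sub_le_of_norm_hasDerivWithin_le
    (fun x _ => (hd x).hasDerivWithinAt) hbd ht0K ht1
  rw [ht0, sub_zero, Real.norm_eq_abs, Real.norm_eq_abs, abs_of_nonneg hS] at hmv
  have h4 : |t1 - t0| ≤ ε := by
    rw [abs_le]; constructor <;> linarith [ht1.1, ht1.2]
  have h5 : u t1 ≤ C * u t1 * Q * ε :=
    hmv.trans (mul_le_mul_of_nonneg_left h4 (by positivity))
  have h6 : u t1 ≤ 0 := by
    by_contra hh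
    push Not at hh
    nlinarith
  filter_upwards [Icc_mem_nhds (show t0 - ε < t0 by linarith) (show t0 < t0 + ε by linarith)] with t ht
  exact le_antisymm ((hmax' t ht).trans h6) (hnn t)

/-- maximum principle: with `f(t,s) = -s` for `s ≤ 0` and
`f(t,s) = q(t)g(s)` for `s ≥ 0`, every `T`-periodic solution of `u'' + f(t,u) = 0` is
nonnegative, and if nontrivial it is everywhere positive, hence a positive `T`-periodic
solution of `u'' + q(t)g(u) = 0`. -/
theorem stmt11 (T : ℝ) (hT : 0 < T) (q : ℝ → ℝ)
    (hqper : Function.Periodic q T)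
    (hqloc : MeasureTheory.LocallyIntegrable q MeasureTheory.volume)
    (m : ℕ) (hm : 1 ≤ m) (hqsign : SignCond q T m)
    (g : ℝ → ℝ) (hgC1 : ContDiffOn ℝ 1 g (Set.Ici 0))
    (hg0 : g 0 = 0) (hgpos : ∀ s : ℝ, 0 < s → 0 < g s)
    (u : ℝ → ℝ)
    (hu : IsSol (fun t s => if s ≤ 0 then -s else q t * g s) u)
    (huper : Function.Periodic u T) :
    (∀ t, 0 ≤ u t) ∧
    (¬ (∀ t, u t = 0) → (∀ t, 0 < u t) ∧ IsSol (fun t s => q t * g s) u) := by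
  obtain ⟨u', hd, hF, hint⟩ := hu
  have hc : Continuous u := continuous_iff_continuousAt.2 fun t => (hd t).continuousAt
  have hnn := aux_nonneg T hT q g u u' hd hF hint huper
  refine ⟨hnn, fun hne => ?_⟩
  have hpos : ∀ t, 0 < u t := by
    intro t0
    by_contra h
    have ht0 : u t0 = 0 := le_antisymm (not_lt.1 h) (hnn t0)
    have hcl : IsClopen {t | u t = 0} :=
      ⟨isClosed_eq hc continuous_const, isOpen_iff_eventually.2 fun t ht =>
        aux_open q g u u' hqloc hgC1 hg0 hd hF hint hnn t ht⟩
    have := hcl.eq_univ ⟨t0, ht0⟩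
    exact hne fun t => (this ▸ mem_univ t : t ∈ {t | u t = 0})
  have he : (fun s => if u s ≤ 0 then -u s else q s * g (u s)) = fun s => q s * g (u s) := by
    funext s
    rw [if_neg (not_le.2 (hpos s))]
  refine ⟨hpos, u', hd, ?_, ?_⟩
  · rw [← he]; exact hF
  · intro t
    have h := hint t
    simp only [he] at h
    exact h
end

section
/- Let X and Z be real Banach spaces, let dom L be a linear subspace of X, and let L : dom L → Z be a linear map. Let P : X → X be a continuous linear projection (P ∘ P = P) whose range equals ker L, let Q : Z → Z be a continuous linear projection whose kernel equals the image of L, let K_P : Im L → X be a linear map taking values in dom L ∩ ker P such that L(K_P w) = w for every w ∈ Im L and K_P(L u) = u − P u for every u ∈ dom L, and let J : Im Q → ker L be an injective linear map. Then for any map N : X → Z and any u ∈ X, the following are equivalent: (i) u ∈ dom L and L u = N u; (ii) u = P u + J(Q(N u)) + K_P((Id − Q)(N u)). -/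
/-- the coincidence equation `Lu = Nu` is equivalent to the fixed point
equation `u = Pu + J Q N u + K_P (Id - Q) N u` of Mawhin's coincidence degree theory. -/
theorem stmt14 (X Z : Type*)
    [NormedAddCommGroup X] [NormedSpace ℝ X] [CompleteSpace X]
    [NormedAddCommGroup Z] [NormedSpace ℝ Z] [CompleteSpace Z]
    (domL : Submodule ℝ X) (L : domL →ₗ[ℝ] Z)
    (P : X →L[ℝ] X) (hPproj : ∀ x, P (P x) = P x)
    (hPrange : LinearMap.range (P : X →ₗ[ℝ] X) = (LinearMap.ker L).map domL.subtype)
    (Q : Z →L[ℝ] Z) (hQproj : ∀ z, Q (Q z) = Q z)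
    (hQker : LinearMap.ker (Q : Z →ₗ[ℝ] Z) = LinearMap.range L)
    (KP : LinearMap.range L →ₗ[ℝ] X)
    (hKPmem : ∀ w, KP w ∈ domL) (hKPkerP : ∀ w, P (KP w) = 0)
    (hKPright : ∀ w : LinearMap.range L, L ⟨KP w, hKPmem w⟩ = (w : Z))
    (hKPleft : ∀ u : domL, KP ⟨L u, LinearMap.mem_range_self L u⟩ = (u : X) - P (u : X))
    (J : LinearMap.range (Q : Z →ₗ[ℝ] Z) →ₗ[ℝ] LinearMap.ker L)
    (hJinj : Function.Injective J)
    (N : X → Z) (u : X) :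
    (∃ h : u ∈ domL, L ⟨u, h⟩ = N u) ↔
      ∃ h2 : N u - Q (N u) ∈ LinearMap.range L,
        u = P u
          + ((((J ⟨Q (N u), LinearMap.mem_range_self (Q : Z →ₗ[ℝ] Z) (N u)⟩ :
                LinearMap.ker L) : domL) : X))
          + KP ⟨N u - Q (N u), h2⟩ := by
  have h2 : N u - Q (N u) ∈ LinearMap.range L := by
    rw [← hQker]
    simp [LinearMap.mem_ker, hQproj]
  constructor
  · rintro ⟨h, hL⟩
    refine ⟨h2, ?_⟩
    have hQ : Q (N u) = 0 := by
      have : N u ∈ LinearMap.ker (Q : Z →ₗ[ℝ] Z) := by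
        rw [hQker]; exact ⟨_, hL⟩
      simpa using this
    have e1 : (⟨Q (N u), LinearMap.mem_range_self (Q : Z →ₗ[ℝ] Z) (N u)⟩ :
        LinearMap.range (Q : Z →ₗ[ℝ] Z)) = 0 := Subtype.ext hQ
    have e2 : (⟨N u - Q (N u), h2⟩ : LinearMap.range L)
        = ⟨L ⟨u, h⟩, LinearMap.mem_range_self L _⟩ := by
      apply Subtype.ext
      simp [hQ, hL]
    rw [e1, e2, hKPleft, map_zero]
    simp
  · rintro ⟨h2', hu⟩
    generalize hj : J ⟨Q (N u), LinearMap.mem_range_self (Q : Z →ₗ[ℝ] Z) (N u)⟩ = j at hu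
    have hPj : P ((j : domL) : X) = ((j : domL) : X) := by
      have : ((j : domL) : X) ∈ LinearMap.range (P : X →ₗ[ℝ] X) := by
        rw [hPrange]; exact ⟨j, j.2, rfl⟩
      obtain ⟨y, hy⟩ := this
      rw [← hy]; exact hPproj y
    have hj0 : ((j : domL) : X) = 0 := by
      have := congrArg P hu
      rw [map_add, map_add, hPproj, hPj, hKPkerP, add_zero] at this
      simpa using this
    have hj0' : j = 0 := Subtype.ext (Subtype.ext hj0)
    have hQ : Q (N u) = 0 := by
      rw [hj0', ← map_zero J] at hj
      exact congrArg Subtype.val (hJinj hj)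
    have hPu : P u ∈ (LinearMap.ker L).map domL.subtype := by
      rw [← hPrange]; exact ⟨u, rfl⟩
    obtain ⟨p, hp, hpu⟩ := hPu
    have hu' : u = ((p + ⟨KP ⟨N u - Q (N u), h2'⟩, hKPmem _⟩ : domL) : X) := by
      rw [hj0, add_zero, ← hpu] at hu
      exact hu
    have h : u ∈ domL := by rw [hu']; exact Subtype.property _
    refine ⟨h, ?_⟩
    have e : (⟨u, h⟩ : domL) = p + ⟨KP ⟨N u - Q (N u), h2'⟩, hKPmem _⟩ := Subtype.ext hu'
    rw [e, map_add, hKPright, LinearMap.mem_ker.1 hp]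
    simp [hQ]
end
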